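/- Let P = A ∪ B be an ℓ-divided set with no ℓ-divided 5-hole in P, with A not in convex position, |A| ≥ 5 and |B| ≥ 6, with ℓ vertical, A to the left of ℓ, and all points of P having distinct x-coordinates. For 1 ≤ i ≤ j ≤ t, let W_i, …, W_j be consecutive a*-wedges with w_k ≤ 2 for every k with i ≤ k ≤ j. Then the sum w_i + w_{i+1} + … + w_j is at most j − i + 2. -/

import Mathlib

noncomputable section

/-- Points of the plane. -/
abbrev Pt : Type := ℝ × ℝ

/-- The cross product (signed area) of two planar vectors. -/
def cross2 (u v : Pt) : ℝ := u.1 * v.2 - u.2 * v.1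

/-- The dot product of two planar vectors. -/
def dotp (v p : Pt) : ℝ := v.1 * p.1 + v.2 * p.2

/-- A set of points in the plane is in general position if no three of its points
are collinear. -/
def GenPos (P : Set Pt) : Prop :=
  ∀ p ∈ P, ∀ q ∈ P, ∀ r ∈ P, p ≠ q → p ≠ r → q ≠ r →
    ¬ Collinear ℝ ({p, q, r} : Set Pt)

/-- A set of points is in convex position if no point of the set lies in the convex
hull of the other points. -/
def ConvexPos (S : Set Pt) : Prop :=
  ∀ p ∈ S, p ∉ convexHull ℝ (S \ {p})

/-- `H` is a `k`-hole in `P`: a subset of `P` of size `k` in convex position whose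
convex hull contains no point of `P \ H`. -/
def IsKHole (k : ℕ) (P H : Finset Pt) : Prop :=
  H ⊆ P ∧ H.card = k ∧ ConvexPos (↑H : Set Pt) ∧
    ∀ p ∈ P, p ∉ H → p ∉ convexHull ℝ (↑H : Set Pt)

/-- The number of `k`-holes in `P`. -/
def numKHoles (k : ℕ) (P : Finset Pt) : ℕ :=
  Set.ncard {H : Finset Pt | IsKHole k P H}

/-- For an `ℓ`-divided set `P = A ∪ B`, an `ℓ`-divided 5-hole is a 5-hole in `A ∪ B`
containing points of both `A` and `B`. -/
def DividedFiveHole (A B H : Finset Pt) : Prop :=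
  IsKHole 5 (A ∪ B) H ∧ (↑H ∩ ↑A : Set Pt).Nonempty ∧ (↑H ∩ ↑B : Set Pt).Nonempty

/-- `x` is an extremal point of `P`: it lies on the boundary of the convex hull of `P`. -/
def OnHullBoundary (P : Finset Pt) (x : Pt) : Prop :=
  x ∈ frontier (convexHull ℝ (↑P : Set Pt))

/-- An `ℓ`-divided set `C = A ∪ B` is `ℓ`-critical if neither part is in convex position
and, for every extremal point `x` of `C`, one of the sets `(C \ {x}) ∩ A` and
`(C \ {x}) ∩ B` is in convex position. -/
def LCritical (A B : Finset Pt) : Prop :=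
  ¬ ConvexPos (↑A : Set Pt) ∧ ¬ ConvexPos (↑B : Set Pt) ∧
    ∀ x ∈ A ∪ B, OnHullBoundary (A ∪ B) x →
      (ConvexPos (↑(A.erase x) : Set Pt) ∨ ConvexPos (↑(B.erase x) : Set Pt))

/-- The closed wedge with apex `a` swept clockwise from the ray `a→p` to the ray `a→q`.
If the clockwise angle from `a→p` to `a→q` is at most `π` the wedge is convex, otherwise
it is the corresponding reflex region. -/
def Wedge (a p q : Pt) : Set Pt :=
  if cross2 (p - a) (q - a) ≤ 0 then
    {x | cross2 (p - a) (x - a) ≤ 0 ∧ 0 ≤ cross2 (q - a) (x - a)}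
  else
    {x | cross2 (p - a) (x - a) ≤ 0 ∨ 0 ≤ cross2 (q - a) (x - a)}

/-- `W` is an `a`-wedge of `A`: one of the closed regions into which the rays from `a`
through the other points of `A` partition the plane, i.e. a wedge spanned by two
points of `A \ {a}` that are angularly consecutive around `a` (no other point of `A`
lies in the wedge). -/
def IsAWedge (A : Finset Pt) (a : Pt) (W : Set Pt) : Prop :=
  ∃ p ∈ A.erase a, ∃ q ∈ A.erase a, p ≠ q ∧ W = Wedge a p q ∧
    (↑A : Set Pt) ∩ Wedge a p q ⊆ {a, p, q}

/-- The combinatorial data of the `a*`-wedges of an `ℓ`-divided set `P = A ∪ B`, where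
`ℓ` is the vertical line `x = x0` and `A` lies to its left: `aStar` is the rightmost
interior point `a*` of `A`; `lbl` is the clockwise cyclic labeling `a_0, a_1, …` of
`A \ {a*}` (period `|A| - 1`), so that the `k`-th wedge `W_k` is swept clockwise from
the ray through `lbl (k-1)` to the ray through `lbl k` and contains no other point
of `A`; the wedges `W_1, …, W_t` are exactly those meeting `ℓ`, in top-to-bottom
order along `ℓ`. -/
structure StarSetup (x0 : ℝ) (A : Finset Pt) where
  aStar : Pt
  lbl : ℕ → Pt
  t : ℕ
  aStar_mem : aStar ∈ A
  aStar_interior : aStar ∈ interior (convexHull ℝ (↑A : Set Pt))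
  aStar_rightmost : ∀ p ∈ A, p ∈ interior (convexHull ℝ (↑A : Set Pt)) → p.1 ≤ aStar.1
  lbl_mem : ∀ k, lbl k ∈ A.erase aStar
  lbl_periodic : ∀ k, lbl (k + (A.card - 1)) = lbl k
  lbl_bij : ∀ p ∈ A.erase aStar, ∃! k, k ∈ Finset.Icc 1 (A.card - 1) ∧ lbl k = p
  consec : ∀ k ∈ Finset.Icc 1 (A.card - 1),
    (↑A : Set Pt) ∩ Wedge aStar (lbl (k - 1)) (lbl k) ⊆ {aStar, lbl (k - 1), lbl k}
  t_pos : 1 ≤ t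
  t_le : t ≤ A.card - 1
  inter_iff : ∀ k ∈ Finset.Icc 1 (A.card - 1),
    ((Wedge aStar (lbl (k - 1)) (lbl k)) ∩ {p : Pt | p.1 = x0}).Nonempty ↔ k ≤ t
  ordered : ∀ k ∈ Finset.Icc 1 t, ∀ k' ∈ Finset.Icc 1 t, k < k' →
    ∀ p ∈ (Wedge aStar (lbl (k - 1)) (lbl k)) ∩ {q : Pt | q.1 = x0},
    ∀ p' ∈ (Wedge aStar (lbl (k' - 1)) (lbl k')) ∩ {q : Pt | q.1 = x0},
      p'.2 ≤ p.2

/-- The `k`-th `a*`-wedge `W_k`. -/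
def StarSetup.W {x0 : ℝ} {A : Finset Pt} (S : StarSetup x0 A) (k : ℕ) : Set Pt :=
  Wedge S.aStar (S.lbl (k - 1)) (S.lbl k)

/-- `w_k`, the number of points of `B` in the `k`-th `a*`-wedge. -/
def StarSetup.w {x0 : ℝ} {A : Finset Pt} (S : StarSetup x0 A) (B : Finset Pt) (k : ℕ) : ℕ :=
  Set.ncard ((↑B : Set Pt) ∩ S.W k)

/-!
If the interior of a convex quadrilateral with vertices on both sides of `ℓ` contains no point of
`P`, then the sector beyond any of its edges contains none either, since the point of the sector
closest to the edge would complete a divided `5`-hole. Suppose that two adjacent wedges contain two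
points of `B` each. Then suitable empty quadrilaterals spanned by these points and the labels of the
wedges have sectors which leave no room for the remaining points. The same happens for two wedges
with two points separated by wedges with a single point: propagating the sectors along the chain of
single points shows that the two outer pairs would have to separate each other from `a*`. Hence
between two wedges with two points there is always an empty one, which gives the bound.
-/

/-! ### Orientations and convex polygons -/

/-- The signed area of the triangle `p q r` (times two), multiplied by `s`. The sign `s = 1` gives
the usual orientation and `s = -1` the one of the configuration reflected in a horizontal line, so
that reflecting amounts to negating `s`. -/
def orient (s : ℝ) (p q r : Pt) : ℝ := s * cross2 (q - p) (r - p)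

/-- The triangle `p q r` is oriented counterclockwise (clockwise if `s = -1`). -/
def Ccw (s : ℝ) (p q r : Pt) : Prop := 0 < orient s p q r

theorem orient_eq (s : ℝ) (p q r : Pt) :
    orient s p q r = s * ((q.1 - p.1) * (r.2 - p.2) - (q.2 - p.2) * (r.1 - p.1)) := rfl

theorem orient_rotate (s : ℝ) (p q r : Pt) : orient s q r p = orient s p q r := by
  simp only [orient_eq]; ring

theorem orient_swap (s : ℝ) (p q r : Pt) : orient s p r q = -orient s p q r := by
  simp only [orient_eq]; ring

theorem orient_self (s : ℝ) (p q : Pt) : orient s p q q = 0 := by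
  simp only [orient_eq]; ring

theorem orient_neg (s : ℝ) (p q r : Pt) : orient (-s) p q r = orient s p r q := by
  simp only [orient_eq]; ring

theorem orient_eq_add_add (s : ℝ) (p q r z : Pt) :
    orient s p q r = orient s p q z + orient s q r z + orient s r p z := by
  simp only [orient_eq]; ring

theorem pos_of_mul_eq_add_mul {x y a b c d : ℝ} (h : x * y = a * b + c * d) (hx : 0 < x)
    (ha : 0 < a) (hb : 0 < b) (hc : 0 < c) (hd : 0 < d) : 0 < y :=
  pos_of_mul_pos_right (h ▸ by positivity) hx.le

section Ccw

variable {s : ℝ} {p q r t u : Pt}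

theorem ccw_neg : Ccw (-s) p q r ↔ Ccw s p r q := by rw [Ccw, orient_neg, Ccw]

theorem Ccw.rotate (h : Ccw s p q r) : Ccw s q r p := by rwa [Ccw, orient_rotate]

theorem Ccw.rotate' (h : Ccw s p q r) : Ccw s r p q := h.rotate.rotate

theorem Ccw.asymm (h : Ccw s p q r) : ¬ Ccw s p r q := by
  rw [Ccw, orient_swap, neg_pos]; exact h.le.not_gt

theorem Ccw.ne_right (h : Ccw s p q r) : q ≠ r := by
  rintro rfl; exact h.ne' (orient_self s p q)

theorem Ccw.ne_left (h : Ccw s p q r) : p ≠ q := h.rotate'.ne_right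

theorem Ccw.ne_outer (h : Ccw s p q r) : p ≠ r := h.rotate.ne_right.symm

theorem Ccw.of_interior (tqr : Ccw s t q r) (ptr : Ccw s p t r) (pqt : Ccw s p q t) :
    Ccw s p q r := by
  rw [Ccw, orient_eq_add_add s p q r t]
  exact add_pos (add_pos pqt tqr.rotate) ptr.rotate'

/-! The rules below are the three-term Plücker relation for the directions from `t` to `u`, `p`,
`q`, `r`; where first coordinates are compared, the vertical direction replaces one of them. -/

theorem Ccw.trans_left (up : Ccw s t u p) (uq : Ccw s t u q) (ur : Ccw s t u r)
    (pq : Ccw s t p q) (qr : Ccw s t q r) : Ccw s t p r :=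
  pos_of_mul_eq_add_mul (by simp only [orient_eq]; ring) uq up qr ur pq

theorem Ccw.trans_right (pu : Ccw s t p u) (qu : Ccw s t q u) (ru : Ccw s t r u)
    (pq : Ccw s t p q) (qr : Ccw s t q r) : Ccw s t p r :=
  pos_of_mul_eq_add_mul (by simp only [orient_eq]; ring) qu pu qr ru pq

theorem Ccw.cycle_left (uq : Ccw s t u q) (ur : Ccw s t u r) (pq : Ccw s t p q)
    (qr : Ccw s t q r) (rp : Ccw s t r p) : Ccw s t p u :=
  pos_of_mul_eq_add_mul (by simp only [orient_eq]; ring) qr uq rp ur pq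

theorem Ccw.cycle_right (qu : Ccw s t q u) (ru : Ccw s t r u) (pq : Ccw s t p q)
    (qr : Ccw s t q r) (rp : Ccw s t r p) : Ccw s t u p :=
  pos_of_mul_eq_add_mul (by simp only [orient_eq]; ring) qr qu rp ru pq

theorem Ccw.trans_of_fst_lt (hp : p.1 < t.1) (hq : q.1 < t.1) (hr : r.1 < t.1)
    (pq : Ccw s t p q) (qr : Ccw s t q r) : Ccw s t p r :=
  pos_of_mul_eq_add_mul (by simp only [orient_eq]; ring) (sub_pos.2 hq) (sub_pos.2 hp) qr
    (sub_pos.2 hr) pq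

theorem Ccw.trans_of_lt_fst (hp : t.1 < p.1) (hq : t.1 < q.1) (hr : t.1 < r.1)
    (pq : Ccw s t p q) (qr : Ccw s t q r) : Ccw s t p r :=
  pos_of_mul_eq_add_mul (by simp only [orient_eq]; ring) (sub_pos.2 hq) (sub_pos.2 hp) qr
    (sub_pos.2 hr) pq

theorem Ccw.lt_fst_of_cycle (hq : q.1 < t.1) (hr : r.1 < t.1) (pq : Ccw s t p q)
    (qr : Ccw s t q r) (rp : Ccw s t r p) : t.1 < p.1 :=
  sub_pos.1 <| pos_of_mul_eq_add_mul (by simp only [orient_eq]; ring) qr (sub_pos.2 hq) rp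
    (sub_pos.2 hr) pq

theorem Ccw.lt_fst_of_between (up : Ccw s t u p) (uq : Ccw s t u q) (hu : t.1 < u.1)
    (pq : Ccw s t p q) (hq : t.1 < q.1) : t.1 < p.1 :=
  sub_pos.1 <| pos_of_mul_eq_add_mul (by simp only [orient_eq]; ring) uq up (sub_pos.2 hq)
    (sub_pos.2 hu) pq

theorem Ccw.of_fst_lt_of_lt_fst (hu : t.1 < u.1) (ur : Ccw s t u r) (hp : t.1 < p.1)
    (hr : r.1 < t.1) (rp : Ccw s t r p) : Ccw s t p u :=
  pos_of_mul_eq_add_mul (by simp only [orient_eq]; ring) (sub_pos.2 hr) (sub_pos.2 hu) rp ur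
    (sub_pos.2 hp)

end Ccw

/-- `z` lies in the interior of the counterclockwise triangle `p q r`. -/
def InTriangle (s : ℝ) (p q r z : Pt) : Prop := Ccw s p q z ∧ Ccw s q r z ∧ Ccw s r p z

/-- `v₁ v₂ v₃ v₄` are the vertices of a convex quadrilateral in counterclockwise order. -/
structure ConvexQuad (s : ℝ) (v₁ v₂ v₃ v₄ : Pt) : Prop where
  ccw₁₂₃ : Ccw s v₁ v₂ v₃
  ccw₂₃₄ : Ccw s v₂ v₃ v₄
  ccw₃₄₁ : Ccw s v₃ v₄ v₁
  ccw₄₁₂ : Ccw s v₄ v₁ v₂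

/-- `z` lies in the interior of the convex quadrilateral `v₁ v₂ v₃ v₄`. -/
structure InQuad (s : ℝ) (v₁ v₂ v₃ v₄ z : Pt) : Prop where
  ccw₁₂ : Ccw s v₁ v₂ z
  ccw₂₃ : Ccw s v₂ v₃ z
  ccw₃₄ : Ccw s v₃ v₄ z
  ccw₄₁ : Ccw s v₄ v₁ z

/-- `w` lies in the `v₁ v₂ v₃ v₄`-sector: beyond the edge `v₄ v₁` of the convex quadrilateral
`v₁ v₂ v₃ v₄`, so that `v₁ v₂ v₃ v₄ w` is a convex pentagon. -/
structure InSector (s : ℝ) (v₁ v₂ v₃ v₄ w : Pt) : Prop where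
  ccw₃₄ : Ccw s v₃ v₄ w
  ccw₄₁ : Ccw s v₄ w v₁
  ccw₁₂ : Ccw s w v₁ v₂

/-- `z` lies in the interior of the convex pentagon `v₁ v₂ v₃ v₄ v₅`. -/
structure InPentagon (s : ℝ) (v₁ v₂ v₃ v₄ v₅ z : Pt) : Prop where
  ccw₁₂ : Ccw s v₁ v₂ z
  ccw₂₃ : Ccw s v₂ v₃ z
  ccw₃₄ : Ccw s v₃ v₄ z
  ccw₄₅ : Ccw s v₄ v₅ z
  ccw₅₁ : Ccw s v₅ v₁ z

section Polygons

variable {s x₀ : ℝ} {p q r v₁ v₂ v₃ v₄ v₅ w z : Pt}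

theorem InTriangle.lt_fst (h : InTriangle s p q r z) (hp : x₀ < p.1) (hq : x₀ < q.1)
    (hr : x₀ < r.1) : x₀ < z.1 := by
  obtain ⟨pqz, qrz, rpz⟩ := h
  have barycentric : orient s q r z * (p.1 - z.1) + orient s r p z * (q.1 - z.1)
      + orient s p q z * (r.1 - z.1) = 0 := by simp only [orient_eq]; ring
  by_contra! hz
  have hp' := mul_pos qrz (sub_pos.2 (hz.trans_lt hp))
  have hq' := mul_pos rpz (sub_pos.2 (hz.trans_lt hq))
  have hr' := mul_pos pqz (sub_pos.2 (hz.trans_lt hr))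
  linarith

theorem ConvexQuad.rotate (h : ConvexQuad s v₁ v₂ v₃ v₄) : ConvexQuad s v₂ v₃ v₄ v₁ :=
  ⟨h.ccw₂₃₄, h.ccw₃₄₁, h.ccw₄₁₂, h.ccw₁₂₃⟩

theorem InQuad.rotate (h : InQuad s v₁ v₂ v₃ v₄ z) : InQuad s v₂ v₃ v₄ v₁ z :=
  ⟨h.ccw₂₃, h.ccw₃₄, h.ccw₄₁, h.ccw₁₂⟩

theorem convexQuad_neg : ConvexQuad (-s) v₁ v₂ v₃ v₄ ↔ ConvexQuad s v₄ v₃ v₂ v₁ :=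
  ⟨fun ⟨h₁, h₂, h₃, h₄⟩ => ⟨(ccw_neg.1 h₂).rotate, (ccw_neg.1 h₁).rotate, (ccw_neg.1 h₄).rotate,
    (ccw_neg.1 h₃).rotate⟩,
  fun ⟨h₁, h₂, h₃, h₄⟩ => ⟨ccw_neg.2 h₂.rotate', ccw_neg.2 h₁.rotate', ccw_neg.2 h₄.rotate',
    ccw_neg.2 h₃.rotate'⟩⟩

theorem inQuad_neg : InQuad (-s) v₁ v₂ v₃ v₄ z ↔ InQuad s v₄ v₃ v₂ v₁ z :=
  ⟨fun ⟨h₁, h₂, h₃, h₄⟩ => ⟨(ccw_neg.1 h₃).rotate', (ccw_neg.1 h₂).rotate', (ccw_neg.1 h₁).rotate',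
    (ccw_neg.1 h₄).rotate'⟩,
  fun ⟨h₁, h₂, h₃, h₄⟩ => ⟨ccw_neg.2 h₃.rotate, ccw_neg.2 h₂.rotate, ccw_neg.2 h₁.rotate,
    ccw_neg.2 h₄.rotate⟩⟩

theorem inSector_neg : InSector (-s) v₁ v₂ v₃ v₄ w ↔ InSector s v₄ v₃ v₂ v₁ w :=
  ⟨fun ⟨h₃₄, h₄₁, h₁₂⟩ => ⟨(ccw_neg.1 h₁₂).rotate, (ccw_neg.1 h₄₁).rotate, (ccw_neg.1 h₃₄).rotate⟩,
  fun ⟨h₂₁, h₁₄, h₄₃⟩ => ⟨ccw_neg.2 h₄₃.rotate', ccw_neg.2 h₁₄.rotate', ccw_neg.2 h₂₁.rotate'⟩⟩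

theorem inPentagon_neg :
    InPentagon (-s) v₁ v₂ v₃ v₄ v₅ z ↔ InPentagon s v₄ v₃ v₂ v₁ v₅ z :=
  ⟨fun ⟨h₁₂, h₂₃, h₃₄, h₄₅, h₅₁⟩ => ⟨(ccw_neg.1 h₃₄).rotate', (ccw_neg.1 h₂₃).rotate',
    (ccw_neg.1 h₁₂).rotate', (ccw_neg.1 h₅₁).rotate', (ccw_neg.1 h₄₅).rotate'⟩,
  fun ⟨h₄₃, h₃₂, h₂₁, h₁₅, h₅₄⟩ => ⟨ccw_neg.2 h₂₁.rotate, ccw_neg.2 h₃₂.rotate,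
    ccw_neg.2 h₄₃.rotate, ccw_neg.2 h₅₄.rotate, ccw_neg.2 h₁₅.rotate⟩⟩

end Polygons

/-- The points of `H` belong to `A ∪ B`, and `H` meets both `A` and `B`. -/
def IsDivided (A B H : Finset Pt) : Prop := H ⊆ A ∪ B ∧ (∃ v ∈ H, v ∈ A) ∧ ∃ v ∈ H, v ∈ B

/-- A set `A ∪ B` in general position, divided by the vertical line at `x₀` and without divided
`5`-hole, expressed through orientations only so that it may be reflected: a convex pentagon is
given as a convex quadrilateral and a point of its sector, and instead of forbidding holes every
divided convex pentagon is required to contain a point. -/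
structure Config (s x₀ : ℝ) (A B : Finset Pt) : Prop where
  lt_of_mem_left : ∀ p ∈ A, p.1 < x₀
  lt_of_mem_right : ∀ p ∈ B, x₀ < p.1
  ccw_or_ccw : ∀ p ∈ A ∪ B, ∀ q ∈ A ∪ B, ∀ r ∈ A ∪ B, p ≠ q → p ≠ r → q ≠ r →
    Ccw s p q r ∨ Ccw s p r q
  injOn_fst : Set.InjOn Prod.fst (↑(A ∪ B) : Set Pt)
  exists_inPentagon : ∀ v₁ v₂ v₃ v₄ v₅, IsDivided A B {v₁, v₂, v₃, v₄, v₅} →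
    ConvexQuad s v₁ v₂ v₃ v₄ → InSector s v₁ v₂ v₃ v₄ v₅ →
    ∃ z ∈ A ∪ B, InPentagon s v₁ v₂ v₃ v₄ v₅ z

section Triangle

variable {s : ℝ} {u w y₁ y₂ y₃ z z' : Pt}

theorem ConvexQuad.of_inTriangle (hquad : ConvexQuad s u y₁ y₂ y₃)
    (hz : InTriangle s u y₁ y₃ z) : ConvexQuad s z y₁ y₂ y₃ := by
  obtain ⟨uy₁y₂, y₁y₂y₃, y₂y₃u, y₃uy₁⟩ := hquad
  obtain ⟨uy₁z, y₁y₃z, y₃uz⟩ := hz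
  have zy₁y₂ : Ccw s z y₁ y₂ :=
    (Ccw.trans_right uy₁y₂.rotate y₃uy₁.rotate' uy₁z.rotate y₁y₂y₃ y₁y₃z).rotate'
  have y₂y₃z : Ccw s y₂ y₃ z :=
    (Ccw.trans_left y₃uz y₃uy₁ y₂y₃u.rotate y₁y₃z.rotate y₁y₂y₃.rotate').rotate'
  exact ⟨zy₁y₂, y₁y₂y₃, y₂y₃z, y₁y₃z.rotate⟩

theorem InTriangle.trans (hz : InTriangle s u y₁ y₃ z) (hz' : InTriangle s z y₁ y₃ z') :
    InTriangle s u y₁ y₃ z' := by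
  obtain ⟨uy₁z, y₁y₃z, y₃uz⟩ := hz
  obtain ⟨zy₁z', y₁y₃z', y₃zz'⟩ := hz'
  have uy₁y₃ : Ccw s u y₁ y₃ := .of_interior y₁y₃z.rotate' y₃uz.rotate uy₁z
  have y₃uz' : Ccw s y₃ u z' := .trans_right uy₁y₃.rotate' y₁y₃z.rotate y₁y₃z'.rotate y₃uz y₃zz'
  have uy₁z' : Ccw s u y₁ z' :=
    (Ccw.trans_left y₁y₃z' y₁y₃z uy₁y₃.rotate zy₁z'.rotate uy₁z.rotate).rotate'
  exact ⟨uy₁z', y₁y₃z', y₃uz'⟩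

theorem InQuad.of_inTriangle (hz' : InQuad s z y₁ y₂ y₃ z') (hquad : ConvexQuad s u y₁ y₂ y₃)
    (hz : InTriangle s u y₁ y₃ z) : InQuad s u y₁ y₂ y₃ z' := by
  obtain ⟨uy₁y₂, y₁y₂y₃, y₂y₃u, y₃uy₁⟩ := hquad
  obtain ⟨uy₁z, y₁y₃z, y₃uz⟩ := hz
  obtain ⟨zy₁z', y₁y₂z', y₂y₃z', y₃zz'⟩ := hz'
  have y₃zy₂ : Ccw s y₃ z y₂ := .trans_left y₃uz y₃uy₁ y₂y₃u.rotate y₁y₃z.rotate y₁y₂y₃.rotate'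
  have y₃uz' : Ccw s y₃ u z' := .trans_right y₂y₃u.rotate y₃zy₂ y₂y₃z'.rotate y₃uz y₃zz'
  have y₁y₂z : Ccw s y₁ y₂ z := .trans_right uy₁y₂.rotate y₃uy₁.rotate' uy₁z.rotate y₁y₂y₃ y₁y₃z
  have uy₁z' : Ccw s u y₁ z' :=
    (Ccw.trans_left y₁y₂z' y₁y₂z uy₁y₂.rotate zy₁z'.rotate uy₁z.rotate).rotate'
  exact ⟨uy₁z', y₁y₂z', y₂y₃z', y₃uz'⟩

theorem InSector.of_inTriangle (hw : InSector s y₂ y₃ u y₁ w) (hquad : ConvexQuad s u y₁ y₂ y₃)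
    (hz : InTriangle s u y₁ y₃ z) : InSector s y₂ y₃ z y₁ w := by
  obtain ⟨uy₁w, y₁wy₂, wy₂y₃⟩ := hw
  refine ⟨?_, y₁wy₂, wy₂y₃⟩
  obtain ⟨uy₁y₂, y₁y₂y₃, -, -⟩ := hquad
  obtain ⟨uy₁z, y₁y₃z, y₃uz⟩ := hz
  have uy₁y₃ : Ccw s u y₁ y₃ := .of_interior y₁y₃z.rotate' y₃uz.rotate uy₁z
  have y₁y₂z : Ccw s y₁ y₂ z := .trans_right uy₁y₂.rotate uy₁y₃.rotate uy₁z.rotate y₁y₂y₃ y₁y₃z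
  exact (Ccw.trans_right uy₁w.rotate uy₁y₂.rotate uy₁z.rotate y₁wy₂ y₁y₂z).rotate'

theorem InSector.ccw_of_inTriangle (hw : InSector s u y₁ y₂ y₃ w)
    (hquad : ConvexQuad s u y₁ y₂ y₃) (hz : InTriangle s u y₁ y₃ z) : Ccw s y₃ w z := by
  obtain ⟨-, y₁y₂y₃, y₂y₃u, -⟩ := hquad
  obtain ⟨uy₁z, y₁y₃z, y₃uz⟩ := hz
  obtain ⟨y₂y₃w, y₃wu, -⟩ := hw
  have uy₁y₃ : Ccw s u y₁ y₃ := .of_interior y₁y₃z.rotate' y₃uz.rotate uy₁z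
  have y₃zy₂ : Ccw s y₃ z y₂ :=
    .trans_left y₃uz uy₁y₃.rotate' y₂y₃u.rotate y₁y₃z.rotate y₁y₂y₃.rotate'
  exact .trans_right y₂y₃w.rotate y₂y₃u.rotate y₃zy₂ y₃wu y₃uz

end Triangle

namespace Config

variable {s x₀ : ℝ} {A B : Finset Pt} {p q v₁ v₂ v₃ v₄ u w y₁ y₂ y₃ : Pt}

theorem lt_fst (C : Config s x₀ A B) (hp : p ∈ A) (hq : q ∈ B) : p.1 < q.1 :=
  (C.lt_of_mem_left p hp).trans (C.lt_of_mem_right q hq)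

theorem mirror (C : Config s x₀ A B) : Config (-s) x₀ A B where
  lt_of_mem_left := C.lt_of_mem_left
  lt_of_mem_right := C.lt_of_mem_right
  injOn_fst := C.injOn_fst
  ccw_or_ccw p hp q hq r hr hpq hpr hqr := by
    rw [ccw_neg, ccw_neg]; exact (C.ccw_or_ccw p hp q hq r hr hpq hpr hqr).symm
  exists_inPentagon v₁ v₂ v₃ v₄ v₅ hdiv hquad hsector := by
    have hrev : ({v₁, v₂, v₃, v₄, v₅} : Finset Pt) = {v₄, v₃, v₂, v₁, v₅} := by grind
    obtain ⟨z, hz, hz'⟩ := C.exists_inPentagon v₄ v₃ v₂ v₁ v₅ (hrev ▸ hdiv)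
      (convexQuad_neg.1 hquad) (inSector_neg.1 hsector)
    exact ⟨z, hz, inPentagon_neg.2 hz'⟩

/-- Together with the point of the sector closest to the edge `v₄ v₁`, the quadrilateral would form
a divided `5`-hole. -/
theorem not_inSector (C : Config s x₀ A B) (hdiv : IsDivided A B {v₁, v₂, v₃, v₄})
    (hquad : ConvexQuad s v₁ v₂ v₃ v₄) (hempty : ∀ z ∈ A ∪ B, ¬ InQuad s v₁ v₂ v₃ v₄ z) :
    ∀ w ∈ A ∪ B, ¬ InSector s v₁ v₂ v₃ v₄ w := by
  classical
  intro w₀ hw₀ hsector₀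
  obtain ⟨w, hw, hmin⟩ := Finset.exists_min_image
    {w ∈ A ∪ B | InSector s v₁ v₂ v₃ v₄ w} (fun w => orient s v₄ w v₁)
    ⟨w₀, Finset.mem_filter.2 ⟨hw₀, hsector₀⟩⟩
  simp only [Finset.mem_filter] at hw hmin
  obtain ⟨hw, hsector⟩ := hw
  have hdiv₅ : IsDivided A B {v₁, v₂, v₃, v₄, w} := by
    simp only [IsDivided, Finset.insert_subset_iff] at hdiv ⊢
    grind
  obtain ⟨z, hz, h₁₂, h₂₃, h₃₄, h₄₅, h₅₁⟩ := C.exists_inPentagon _ _ _ _ w hdiv₅ hquad hsector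
  have hv : v₁ ∈ A ∪ B ∧ v₄ ∈ A ∪ B := ⟨hdiv.1 (by simp), hdiv.1 (by simp)⟩
  obtain h | h := C.ccw_or_ccw v₄ hv.2 z hz v₁ hv.1 h₃₄.ne_right hquad.ccw₄₁₂.ne_left
    h₁₂.ne_outer.symm
  · have hle := hmin z ⟨hz, h₃₄, h, h₁₂.rotate'⟩
    have hsplit := orient_eq_add_add s v₄ w v₁ z
    have hrotate := orient_rotate s v₁ v₄ z
    have : 0 < orient s v₄ w z := h₄₅
    have : 0 < orient s w v₁ z := h₅₁
    linarith
  · exact hempty z hz ⟨h₁₂, h₂₃, h₃₄, h⟩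

/-- Moving the vertex `u` of a quadrilateral with a single vertex in `A` into its interior until
no point of `A` is left inside. -/
theorem exists_isEmpty_quad (C : Config s x₀ A B) (hu : u ∈ A) (h₁ : y₁ ∈ B) (h₂ : y₂ ∈ B)
    (h₃ : y₃ ∈ B) (hquad : ConvexQuad s u y₁ y₂ y₃)
    (hempty : ∀ z ∈ B, ¬ InQuad s u y₁ y₂ y₃ z) :
    ∃ z ∈ A, (z = u ∨ InTriangle s u y₁ y₃ z) ∧ ConvexQuad s z y₁ y₂ y₃ ∧
      ∀ q ∈ A ∪ B, ¬ InQuad s z y₁ y₂ y₃ q := by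
  classical
  obtain ⟨z, hz, hmin⟩ := Finset.exists_min_image
    {z ∈ A | z = u ∨ InTriangle s u y₁ y₃ z} (fun z => orient s y₃ z y₁)
    ⟨u, Finset.mem_filter.2 ⟨hu, .inl rfl⟩⟩
  simp only [Finset.mem_filter] at hz hmin
  obtain ⟨hzA, hz⟩ := hz
  have hquad' : ConvexQuad s z y₁ y₂ y₃ := by
    obtain rfl | hz := hz
    exacts [hquad, hquad.of_inTriangle hz]
  refine ⟨z, hzA, hz, hquad', fun q hq hqz => ?_⟩
  obtain hqA | hqB := Finset.mem_union.1 hq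
  · obtain h | h := C.ccw_or_ccw y₁ (by simp [h₁]) y₃ (by simp [h₃]) q hq
      hquad'.ccw₄₁₂.ne_outer.symm hqz.ccw₁₂.ne_right hqz.ccw₄₁.ne_outer
    · have hqt : InTriangle s z y₁ y₃ q := ⟨hqz.ccw₁₂, h, hqz.ccw₄₁⟩
      have hqu : InTriangle s u y₁ y₃ q := by
        obtain rfl | hz := hz
        exacts [hqt, hz.trans hqt]
      have hle := hmin q ⟨hqA, .inr hqu⟩
      have hsplit := orient_eq_add_add s y₃ z y₁ q
      have hrot := orient_rotate s y₁ y₃ q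
      have : 0 < orient s y₃ z q := hqz.ccw₄₁
      have : 0 < orient s z y₁ q := hqz.ccw₁₂
      linarith
    · have hqt : InTriangle s y₁ y₂ y₃ q := ⟨hqz.ccw₂₃, hqz.ccw₃₄, h.rotate'⟩
      exact (C.lt_of_mem_left q hqA).asymm (hqt.lt_fst (C.lt_of_mem_right y₁ h₁)
        (C.lt_of_mem_right y₂ h₂) (C.lt_of_mem_right y₃ h₃))
  · obtain rfl | hz := hz
    exacts [hempty q hqB hqz, hempty q hqB (hqz.of_inTriangle hquad hz)]

variable (C : Config s x₀ A B) (hu : u ∈ A) (h₁ : y₁ ∈ B) (h₂ : y₂ ∈ B) (h₃ : y₃ ∈ B) (hw : w ∈ B)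
  (hquad : ConvexQuad s u y₁ y₂ y₃) (hempty : ∀ z ∈ B, ¬ InQuad s u y₁ y₂ y₃ z)

include C hu h₁ h₂ h₃ hw hquad hempty

theorem not_inSector_beyond_y₁y₂ : ¬ InSector s y₂ y₃ u y₁ w := by
  intro hsector
  obtain ⟨z, hzA, hz, hquad', hempty'⟩ := C.exists_isEmpty_quad hu h₁ h₂ h₃ hquad hempty
  have hsector' : InSector s y₂ y₃ z y₁ w := by
    obtain rfl | hz := hz
    exacts [hsector, hsector.of_inTriangle hquad hz]
  exact C.not_inSector (by simp [IsDivided, Finset.insert_subset_iff, *]) hquad'.rotate.rotate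
    (fun q hq hqz => hempty' q hq hqz.rotate.rotate) w (by simp [hw]) hsector'

theorem not_inSector_beyond_y₃u : ¬ InSector s u y₁ y₂ y₃ w := by
  intro hsector
  obtain ⟨z, hzA, hz, hquad', hempty'⟩ := C.exists_isEmpty_quad hu h₁ h₂ h₃ hquad hempty
  have hsector' : InSector s z y₁ y₂ y₃ w := by
    obtain rfl | hz := hz
    · exact hsector
    have y₃wz := hsector.ccw_of_inTriangle hquad hz
    obtain h | h := C.ccw_or_ccw w (by simp [hw]) z (by simp [hzA]) y₁ (by simp [h₁])
      y₃wz.ne_right hsector.ccw₁₂.ne_outer hz.1.ne_right.symm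
    · exact ⟨hsector.ccw₃₄, y₃wz, h⟩
    · have hz' : InTriangle s y₁ y₃ w z := ⟨hz.2.1, y₃wz, h⟩
      exact ((C.lt_of_mem_left z hzA).asymm (hz'.lt_fst (C.lt_of_mem_right y₁ h₁)
        (C.lt_of_mem_right y₃ h₃) (C.lt_of_mem_right w hw))).elim
  exact C.not_inSector (by simp [IsDivided, Finset.insert_subset_iff, *]) hquad' hempty' w
    (by simp [hw]) hsector'

theorem not_inSector_beyond_y₂y₃ : ¬ InSector s y₃ u y₁ y₂ w := fun hsector =>
  C.mirror.not_inSector_beyond_y₁y₂ hu h₃ h₂ h₁ hw (convexQuad_neg.2 hquad.rotate)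
    (fun z hz hz' => hempty z hz (inQuad_neg.1 hz').rotate.rotate.rotate) (inSector_neg.2 hsector)

theorem not_inSector_beyond_uy₁ : ¬ InSector s y₁ y₂ y₃ u w := fun hsector =>
  C.mirror.not_inSector_beyond_y₃u hu h₃ h₂ h₁ hw (convexQuad_neg.2 hquad.rotate)
    (fun z hz hz' => hempty z hz (inQuad_neg.1 hz').rotate.rotate.rotate) (inSector_neg.2 hsector)

end Config

section Wedge

variable {s : ℝ} {b c p q v₁ v₂ v₃ v₄ w z : Pt}

theorem Ccw.not_ccw_of_fst_lt (cbp : Ccw s c b p) (cqb : Ccw s c q b) (hc : c.1 < b.1)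
    (hp : p.1 < b.1) (hq : q.1 < b.1) : ¬ Ccw s p b q := by
  intro pbq
  have bqc : Ccw s b q c := .trans_of_fst_lt hq hp hc pbq.rotate cbp.rotate
  exact cqb.asymm bqc.rotate'

theorem Ccw.not_lt_fst_of_beyond (cbp : Ccw s c b p) (cqb : Ccw s c q b) (pbw : Ccw s p b w)
    (qwb : Ccw s q w b) (hc : c.1 < b.1) (hp : p.1 < b.1) (hq : q.1 < b.1) : ¬ w.1 < b.1 := by
  intro hw
  have bcw : Ccw s b c w := .trans_of_fst_lt hc hq hw cqb.rotate' qwb.rotate'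
  have b_lt_c : b.1 < c.1 := Ccw.lt_fst_of_cycle hw hp bcw pbw.rotate cbp.rotate
  exact b_lt_c.asymm hc

theorem InQuad.not_all_above (hz : InQuad s v₁ v₂ v₃ v₄ z) (cv₁z : Ccw s c v₁ z)
    (cv₂z : Ccw s c v₂ z) (cv₃z : Ccw s c v₃ z) (cv₄z : Ccw s c v₄ z) : False := by
  obtain ⟨v₁v₂z, v₂v₃z, v₃v₄z, v₄v₁z⟩ := hz
  have zv₁v₃ : Ccw s z v₁ v₃ :=
    .trans_left cv₁z.rotate' cv₂z.rotate' cv₃z.rotate' v₁v₂z.rotate' v₂v₃z.rotate'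
  have zv₁v₄ : Ccw s z v₁ v₄ :=
    .trans_left cv₁z.rotate' cv₃z.rotate' cv₄z.rotate' zv₁v₃ v₃v₄z.rotate'
  exact zv₁v₄.asymm v₄v₁z.rotate'

theorem InQuad.not_all_below (hz : InQuad s v₁ v₂ v₃ v₄ z) (czv₁ : Ccw s c z v₁)
    (czv₂ : Ccw s c z v₂) (czv₃ : Ccw s c z v₃) (czv₄ : Ccw s c z v₄) : False := by
  obtain ⟨v₁v₂z, v₂v₃z, v₃v₄z, v₄v₁z⟩ := hz
  have zv₄v₂ : Ccw s z v₄ v₂ :=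
    .trans_right czv₄.rotate czv₁.rotate czv₂.rotate v₄v₁z.rotate' v₁v₂z.rotate'
  have zcv₃ : Ccw s z c v₃ := .cycle_right czv₄.rotate czv₂.rotate v₃v₄z.rotate' zv₄v₂ v₂v₃z.rotate'
  exact zcv₃.asymm czv₃.rotate

end Wedge

/-! ### Wedges around a point -/

/-- `q` lies in the wedge at `c` between the rays through `a k` and `a (k + 1)`. -/
structure InWedge (s : ℝ) (c : Pt) (a : ℕ → Pt) (k : ℕ) (q : Pt) : Prop where
  ccw_upper : Ccw s c q (a k)
  ccw_lower : Ccw s c (a (k + 1)) q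

/-- A configuration in which `c`, playing the role of `a*`, sees the points `a 0, …, a t` of `A`
in clockwise order, the wedges between consecutive ones being those which meet the dividing line.
Only what survives a reflection is recorded: `a 1, …, a (t - 1)` are the points of `A` to the right
of `c`, they are extremal in `A`, and the wedges contain `B` and no point of `A`. -/
structure StarConfig (s x₀ : ℝ) (A B : Finset Pt) (c : Pt) (a : ℕ → Pt) (t : ℕ) : Prop
    extends Config s x₀ A B where
  center_mem : c ∈ A
  label_mem : ∀ k ≤ t, a k ∈ A
  first_lt : (a 0).1 < c.1
  last_lt : (a t).1 < c.1
  lt_label : ∀ k, 1 ≤ k → k < t → c.1 < (a k).1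
  ccw_succ : ∀ k < t, Ccw s c (a (k + 1)) (a k)
  exists_inWedge : ∀ q ∈ B, ∃ k < t, InWedge s c a k q
  exists_eq_label : ∀ q ∈ A, c.1 < q.1 → ∃ k, 1 ≤ k ∧ k < t ∧ q = a k
  not_inWedge : ∀ k < t, ∀ q ∈ A, ¬ InWedge s c a k q
  not_inTriangle : ∀ k, 1 ≤ k → k < t → ∀ p ∈ A, ∀ q ∈ A, ∀ r ∈ A, ¬ InTriangle s p q r (a k)
  two_le : 2 ≤ t
  ccw_of_eq_three : t = 3 → Ccw s c (a 0) (a 3)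
  six_le_card : 6 ≤ B.card

/-- The angular position around `c` of a point to the right of `c`, increasing clockwise: `2 k` for
the point `a k` and `2 k + 1` for a point of `B` in the `k`-th wedge. -/
def AngularPos (s : ℝ) (B : Finset Pt) (c : Pt) (a : ℕ → Pt) (t : ℕ) (z : Pt) (n : ℕ) : Prop :=
  (∃ k, n = 2 * k ∧ 1 ≤ k ∧ k < t ∧ z = a k) ∨
    ∃ k, n = 2 * k + 1 ∧ k < t ∧ z ∈ B ∧ InWedge s c a k z

/-- `b` is the leftmost point of `B` in the `k`-th wedge. -/
structure IsLeftmost (s : ℝ) (B : Finset Pt) (c : Pt) (a : ℕ → Pt) (k : ℕ) (b : Pt) : Prop where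
  mem : b ∈ B
  inWedge : InWedge s c a k b
  lt_fst : ∀ z ∈ B, InWedge s c a k z → z ≠ b → b.1 < z.1

section Star

variable {s x₀ : ℝ} {A B : Finset Pt} {b c p v₁ v₂ v₃ v₄ w z : Pt} {a : ℕ → Pt} {i j k t m n : ℕ}

theorem inWedge_neg {k' : ℕ} (hk : k + k' + 1 = t) :
    InWedge (-s) c (fun k => a (t - k)) k' p ↔ InWedge s c a k p := by
  have h₁ : t - k' = k + 1 := by lia
  have h₂ : t - (k' + 1) = k := by lia
  constructor
  · rintro ⟨hu, hl⟩
    exact ⟨by simpa only [h₂] using ccw_neg.1 hl, by simpa only [h₁] using ccw_neg.1 hu⟩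
  · rintro ⟨hu, hl⟩
    exact ⟨ccw_neg.2 (by simpa only [h₁] using hl), ccw_neg.2 (by simpa only [h₂] using hu)⟩

theorem IsLeftmost.mirror {k' : ℕ} (hb : IsLeftmost s B c a k b) (hk : k + k' + 1 = t) :
    IsLeftmost (-s) B c (fun k => a (t - k)) k' b where
  mem := hb.mem
  inWedge := (inWedge_neg hk).2 hb.inWedge
  lt_fst z hz hzk := hb.lt_fst z hz ((inWedge_neg hk).1 hzk)

theorem AngularPos.label (hk : 1 ≤ k) (hkt : k < t) : AngularPos s B c a t (a k) (2 * k) :=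
  .inl ⟨k, rfl, hk, hkt, rfl⟩

theorem AngularPos.of_inWedge (hkt : k < t) (hz : z ∈ B) (h : InWedge s c a k z) :
    AngularPos s B c a t z (2 * k + 1) :=
  .inr ⟨k, rfl, hkt, hz, h⟩

theorem AngularPos.eq_label (h : AngularPos s B c a t z (2 * k)) : z = a k := by
  obtain ⟨l, hl, -, -, rfl⟩ | ⟨l, hl, -⟩ := h
  · rw [show k = l by lia]
  · lia

theorem AngularPos.mem_and_inWedge (h : AngularPos s B c a t z (2 * k + 1)) :
    z ∈ B ∧ InWedge s c a k z := by
  obtain ⟨l, hl, -⟩ | ⟨l, hl, -, h⟩ := h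
  · lia
  · rwa [show k = l by lia]

namespace StarConfig

theorem mirror (S : StarConfig s x₀ A B c a t) :
    StarConfig (-s) x₀ A B c (fun k => a (t - k)) t where
  toConfig := S.toConfig.mirror
  center_mem := S.center_mem
  label_mem _ _ := S.label_mem _ (by lia)
  first_lt := S.last_lt
  last_lt := by simpa using S.first_lt
  lt_label k h₁ h₂ := S.lt_label _ (by lia) (by lia)
  ccw_succ k hk := by
    have h := S.ccw_succ (t - (k + 1)) (by lia)
    rwa [show t - (k + 1) + 1 = t - k by lia, ← ccw_neg] at h
  exists_inWedge q hq := by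
    obtain ⟨k, hk, h⟩ := S.exists_inWedge q hq
    exact ⟨t - 1 - k, by lia, (inWedge_neg (by lia)).2 h⟩
  exists_eq_label q hq hcq := by
    obtain ⟨k, h₁, h₂, rfl⟩ := S.exists_eq_label q hq hcq
    exact ⟨t - k, by lia, by lia, by rw [show t - (t - k) = k by lia]⟩
  not_inWedge k hk q hq h := S.not_inWedge (t - 1 - k) (by lia) q hq ((inWedge_neg (by lia)).1 h)
  not_inTriangle k h₁ h₂ p hp q hq r hr := by
    rintro ⟨hpq, hqr, hrp⟩
    exact S.not_inTriangle (t - k) (by lia) (by lia) q hq p hp r hr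
      ⟨(ccw_neg.1 hpq).rotate', (ccw_neg.1 hrp).rotate', (ccw_neg.1 hqr).rotate'⟩
  two_le := S.two_le
  ccw_of_eq_three ht := by
    subst ht; exact ccw_neg.2 (S.ccw_of_eq_three rfl)
  six_le_card := S.six_le_card

variable (S : StarConfig s x₀ A B c a t)
include S

theorem center_mem_union : c ∈ A ∪ B := Finset.mem_union_left _ S.center_mem

theorem label_mem_union (hk : k ≤ t) : a k ∈ A ∪ B := Finset.mem_union_left _ (S.label_mem k hk)

theorem center_lt (hp : p ∈ B) : c.1 < p.1 := S.lt_fst S.center_mem hp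

theorem label_lt (hk : k ≤ t) (hp : p ∈ B) : (a k).1 < p.1 := S.lt_fst (S.label_mem k hk) hp

theorem ccw_label (hi : 1 ≤ i) (hij : i < j) (hj : j < t) : Ccw s c (a j) (a i) := by
  induction j, hij using Nat.le_induction with
  | base => exact S.ccw_succ i (by lia)
  | succ j hij ih =>
    exact .trans_of_lt_fst (S.lt_label _ (by lia) hj) (S.lt_label j (by lia) (by lia))
      (S.lt_label i hi (by lia)) (S.ccw_succ j (by lia)) (ih (by lia))

theorem exists_angularPos (hz : z ∈ A ∪ B) (hcz : c.1 < z.1) : ∃ n, AngularPos s B c a t z n := by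
  obtain hzA | hzB := Finset.mem_union.1 hz
  · obtain ⟨k, h₁, h₂, rfl⟩ := S.exists_eq_label z hzA hcz
    exact ⟨_, .label h₁ h₂⟩
  · obtain ⟨k, hk, h⟩ := S.exists_inWedge z hzB
    exact ⟨_, .of_inWedge hk hzB h⟩

theorem ccw_label_of_inWedge (hz : z ∈ B) (h : InWedge s c a i z) (hij : i < j) (hj : j < t) :
    Ccw s c (a j) z := by
  obtain rfl | hij := Nat.eq_or_lt_of_le (Nat.succ_le_of_lt hij)
  · exact h.ccw_lower
  · exact .trans_of_lt_fst (S.lt_label j (by lia) hj) (S.lt_label (i + 1) (by lia) (by lia))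
      (S.center_lt hz) (S.ccw_label (by lia) hij hj) h.ccw_lower

theorem ccw_of_inWedge_label (hz : z ∈ B) (h : InWedge s c a j z) (hi : 1 ≤ i) (hij : i ≤ j)
    (hj : j < t) : Ccw s c z (a i) := by
  obtain rfl | hij := Nat.eq_or_lt_of_le hij
  · exact h.ccw_upper
  · exact .trans_of_lt_fst (S.center_lt hz) (S.lt_label j (by lia) hj) (S.lt_label i hi (by lia))
      h.ccw_upper (S.ccw_label hi hij hj)

theorem ccw_of_angularPos_lt (hz : AngularPos s B c a t z m) (hw : AngularPos s B c a t w n)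
    (hmn : m < n) : Ccw s c w z := by
  obtain ⟨k, rfl, hk, -, rfl⟩ | ⟨k, rfl, -, hzB, hzk⟩ := hz <;>
    obtain ⟨l, rfl, -, hlt, rfl⟩ | ⟨l, rfl, hlt, hwB, hwl⟩ := hw
  · exact S.ccw_label hk (by lia) hlt
  · exact S.ccw_of_inWedge_label hwB hwl hk (by lia) hlt
  · exact S.ccw_label_of_inWedge hzB hzk (by lia) hlt
  · exact .trans_of_lt_fst (S.center_lt hwB) (S.lt_label l (by lia) hlt) (S.center_lt hzB)
      hwl.ccw_upper (S.ccw_label_of_inWedge hzB hzk (by lia) hlt)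

theorem exists_angularPos_of_inQuad {lo hi n₁ n₂ n₃ n₄ : ℕ} (h₁ : AngularPos s B c a t v₁ n₁)
    (h₂ : AngularPos s B c a t v₂ n₂) (h₃ : AngularPos s B c a t v₃ n₃)
    (h₄ : AngularPos s B c a t v₄ n₄) (hlo : lo ≤ n₁ ∧ lo ≤ n₂ ∧ lo ≤ n₃ ∧ lo ≤ n₄)
    (hhi : n₁ ≤ hi ∧ n₂ ≤ hi ∧ n₃ ≤ hi ∧ n₄ ≤ hi) (hz : z ∈ A ∪ B) (hcz : c.1 < z.1)
    (hquad : InQuad s v₁ v₂ v₃ v₄ z) : ∃ n, AngularPos s B c a t z n ∧ lo ≤ n ∧ n ≤ hi := by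
  obtain ⟨n, hn⟩ := S.exists_angularPos hz hcz
  refine ⟨n, hn, ?_, ?_⟩ <;> by_contra hc
  · exact hquad.not_all_above (S.ccw_of_angularPos_lt hn h₁ (by lia))
      (S.ccw_of_angularPos_lt hn h₂ (by lia)) (S.ccw_of_angularPos_lt hn h₃ (by lia))
      (S.ccw_of_angularPos_lt hn h₄ (by lia))
  · exact hquad.not_all_below (S.ccw_of_angularPos_lt h₁ hn (by lia))
      (S.ccw_of_angularPos_lt h₂ hn (by lia)) (S.ccw_of_angularPos_lt h₃ hn (by lia))
      (S.ccw_of_angularPos_lt h₄ hn (by lia))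

theorem ccw_of_inWedge (hk : k < t) (hb : b ∈ B) (h : InWedge s c a k b) :
    Ccw s (a k) (a (k + 1)) b := by
  refine (S.ccw_or_ccw _ (S.label_mem_union hk.le) _ (S.label_mem_union hk) b (by simp [hb])
    (S.ccw_succ k hk).ne_right.symm h.ccw_upper.ne_right.symm h.ccw_lower.ne_right).resolve_right ?_
  exact h.ccw_upper.not_ccw_of_fst_lt h.ccw_lower (S.center_lt hb) (S.label_lt hk.le hb)
    (S.label_lt hk hb)

theorem convexQuad_of_inWedge (hk : k < t) (hb : b ∈ B) (h : InWedge s c a k b) :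
    ConvexQuad s c (a (k + 1)) b (a k) :=
  ⟨h.ccw_lower, (S.ccw_of_inWedge hk hb h).rotate, h.ccw_upper.rotate, (S.ccw_succ k hk).rotate'⟩

theorem not_inQuad_of_isLeftmost (hk : k < t) (hb : IsLeftmost s B c a k b) :
    ∀ z ∈ A ∪ B, ¬ InQuad s c (a (k + 1)) b (a k) z := by
  intro z hz hquad
  have hzk : InWedge s c a k z := ⟨hquad.ccw₄₁.rotate, hquad.ccw₁₂⟩
  obtain hzA | hzB := Finset.mem_union.1 hz
  · exact S.not_inWedge k hk z hzA hzk
  · exact hzk.ccw_upper.not_lt_fst_of_beyond hzk.ccw_lower hquad.ccw₃₄.rotate hquad.ccw₂₃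
      (S.center_lt hzB) (S.label_lt hk.le hzB) (S.label_lt hk hzB)
      (hb.lt_fst z hzB hzk hquad.ccw₂₃.ne_right.symm)

theorem not_inSector_of_isLeftmost (hk : k < t) (hb : IsLeftmost s B c a k b) (hw : w ∈ A ∪ B) :
    ¬ InSector s c (a (k + 1)) b (a k) w ∧ ¬ InSector s (a (k + 1)) b (a k) c w ∧
      ¬ InSector s b (a k) c (a (k + 1)) w ∧ ¬ InSector s (a k) c (a (k + 1)) b w := by
  have hquad := S.convexQuad_of_inWedge hk hb.mem hb.inWedge
  have hempty := S.not_inQuad_of_isLeftmost hk hb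
  have hmem : ∀ v ∈ ({c, a (k + 1), b, a k} : Finset Pt), v ∈ A ∪ B := by
    simp [hb.mem, S.center_mem, S.label_mem k hk.le, S.label_mem (k + 1) hk]
  have hdiv : ∀ {v₁ v₂ v₃ v₄ : Pt}, ({v₁, v₂, v₃, v₄} : Finset Pt) = {c, a (k + 1), b, a k} →
      IsDivided A B {v₁, v₂, v₃, v₄} := fun h => h ▸
    ⟨hmem, ⟨c, by simp, S.center_mem⟩, ⟨b, by simp, hb.mem⟩⟩
  refine ⟨S.not_inSector (hdiv rfl) hquad hempty w hw,
    S.not_inSector (hdiv ?_) hquad.rotate (fun z hz h => hempty z hz h.rotate.rotate.rotate) w hw,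
    S.not_inSector (hdiv ?_) hquad.rotate.rotate (fun z hz h => hempty z hz h.rotate.rotate) w hw,
    S.not_inSector (hdiv ?_) hquad.rotate.rotate.rotate (fun z hz h => hempty z hz h.rotate) w hw⟩
  all_goals grind

theorem ccw_of_isLeftmost (hk : k < t) (hb : IsLeftmost s B c a k b) (hz : z ∈ B)
    (hzk : InWedge s c a k z) (hzb : z ≠ b) : Ccw s (a k) b z ∧ Ccw s (a (k + 1)) z b := by
  have hbB : b ∈ A ∪ B := by simp [hb.mem]
  have hzB : z ∈ A ∪ B := by simp [hz]
  obtain ⟨-, -, hsector₃, hsector₄⟩ := S.not_inSector_of_isLeftmost hk hb hzB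
  obtain hu | hu := S.ccw_or_ccw _ (S.label_mem_union hk.le) b hbB z hzB
      hb.inWedge.ccw_upper.ne_right.symm hzk.ccw_upper.ne_right.symm hzb.symm <;>
    obtain hl | hl := S.ccw_or_ccw _ (S.label_mem_union hk) z hzB b hbB
      hzk.ccw_lower.ne_right hb.inWedge.ccw_lower.ne_right hzb
  · exact ⟨hu, hl⟩
  · exact (hsector₄ ⟨hl, hu.rotate, hzk.ccw_upper.rotate⟩).elim
  · exact (hsector₃ ⟨hzk.ccw_lower, hl, hu.rotate⟩).elim
  · exact (hzk.ccw_upper.not_lt_fst_of_beyond hzk.ccw_lower hu hl (S.center_lt hz)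
      (S.label_lt hk.le hz) (S.label_lt hk hz) (hb.lt_fst z hz hzk hzb)).elim

theorem ccw_of_isLeftmost_of_below (hk : k < t) (hb : IsLeftmost s B c a k b) (hz : z ∈ A ∪ B)
    (hzu : Ccw s c z (a k)) (hzl : Ccw s c z (a (k + 1))) : Ccw s (a (k + 1)) z b := by
  have hzb : z ≠ b := by rintro rfl; exact hzl.asymm hb.inWedge.ccw_lower
  refine (S.ccw_or_ccw _ (S.label_mem_union hk) z hz b (by simp [hb.mem]) hzl.ne_right.symm
    hb.inWedge.ccw_lower.ne_right hzb).resolve_right fun h => ?_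
  exact (S.not_inSector_of_isLeftmost hk hb hz).2.1 ⟨hzu.rotate', hzl, h.rotate'⟩

theorem ccw_of_isLeftmost_of_above (hk : k < t) (hb : IsLeftmost s B c a k b) (hz : z ∈ A ∪ B)
    (hzu : Ccw s c (a k) z) (hzl : Ccw s c (a (k + 1)) z) : Ccw s (a k) b z := by
  have hzb : b ≠ z := by rintro rfl; exact hzu.asymm hb.inWedge.ccw_upper
  refine (S.ccw_or_ccw _ (S.label_mem_union hk.le) b (by simp [hb.mem]) z hz
    hb.inWedge.ccw_upper.ne_right.symm hzu.ne_right hzb).resolve_right fun h => ?_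
  exact (S.not_inSector_of_isLeftmost hk hb hz).1 ⟨h.rotate', hzu.rotate, hzl.rotate'⟩

theorem not_inQuad_of_isLeftmost_zero (ht : 4 ≤ t) (hb : IsLeftmost s B c a 0 b) :
    ∀ z ∈ A ∪ B, ¬ InQuad s (a 2) (a 1) b c z := by
  rintro z hz ⟨h₂₁, h₁b, hbc, hc₂⟩
  have pos_b := AngularPos.of_inWedge (t := t) (by lia) hb.mem hb.inWedge
  have pos₂ : AngularPos s B c a t (a 2) 4 := .label (by lia) (by lia)
  have hcz : c.1 < z.1 := Ccw.lt_fst_of_between hc₂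
    (S.ccw_label_of_inWedge hb.mem hb.inWedge (by lia) (by lia)) (S.lt_label 2 (by lia) (by lia))
    hbc.rotate (S.center_lt hb.mem)
  obtain ⟨n, hn⟩ := S.exists_angularPos hz hcz
  have hn₁ : 1 ≤ n := by
    by_contra! h; exact hbc.rotate.asymm (S.ccw_of_angularPos_lt hn pos_b h)
  have hn₄ : n ≤ 4 := by
    by_contra! h; exact hc₂.asymm (S.ccw_of_angularPos_lt pos₂ hn h)
  interval_cases n
  · obtain ⟨hzB, hz₀⟩ := AngularPos.mem_and_inWedge (k := 0) hn
    exact h₁b.asymm (S.ccw_of_isLeftmost (by lia) hb hzB hz₀ h₁b.ne_right.symm).2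
  · exact h₂₁.ne_right (AngularPos.eq_label (k := 1) hn).symm
  · obtain ⟨hzB, hz₁⟩ := AngularPos.mem_and_inWedge (k := 1) hn
    exact h₂₁.rotate.asymm (S.ccw_of_inWedge (by lia) hzB hz₁)
  · exact hc₂.ne_right (AngularPos.eq_label (k := 2) hn).symm

theorem ccw_of_isLeftmost_zero (ht : 4 ≤ t) (hb : IsLeftmost s B c a 0 b) :
    Ccw s (a 1) (a 2) b := by
  have ha₁b : Ccw s c (a 1) b := hb.inWedge.ccw_lower
  have ha₂b : Ccw s c (a 2) b := S.ccw_label_of_inWedge hb.mem hb.inWedge (by lia) (by lia)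
  have ha₃b : Ccw s c (a 3) b := S.ccw_label_of_inWedge hb.mem hb.inWedge (by lia) (by lia)
  have ha₂a₁ : Ccw s c (a 2) (a 1) := S.ccw_succ 1 (by lia)
  have ha₃a₂ : Ccw s c (a 3) (a 2) := S.ccw_succ 2 (by lia)
  have ha₃a₁ : Ccw s c (a 3) (a 1) := S.ccw_label le_rfl (by lia) (by lia)
  have h₁ := S.label_mem_union (k := 1) (by lia)
  have h₂ := S.label_mem_union (k := 2) (by lia)
  have h₃ := S.label_mem_union (k := 3) (by lia)
  have hextremal : Ccw s (a 3) (a 2) (a 1) := by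
    refine (S.ccw_or_ccw _ h₃ _ h₂ _ h₁ ha₃a₂.ne_right ha₃a₁.ne_right
      ha₂a₁.ne_right).resolve_right fun h => ?_
    exact S.not_inTriangle 2 (by lia) (by lia) c S.center_mem _ (S.label_mem 3 (by lia)) _
      (S.label_mem 1 (by lia)) ⟨ha₃a₂, h, ha₂a₁.rotate'⟩
  refine (S.ccw_or_ccw _ h₁ _ h₂ b (by simp [hb.mem]) ha₂a₁.ne_right.symm ha₁b.ne_right
    ha₂b.ne_right).resolve_right fun h => ?_
  have hdiv : IsDivided A B {a 2, a 1, b, c} := by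
    simp [IsDivided, Finset.insert_subset_iff, h₁, h₂, hb.mem, S.center_mem]
  exact S.not_inSector hdiv ⟨h.rotate', ha₁b.rotate, ha₂b.rotate', ha₂a₁⟩
    (S.not_inQuad_of_isLeftmost_zero ht hb) (a 3) h₃ ⟨ha₃b.rotate', ha₃a₂, hextremal⟩

theorem ccw_succ_of_isLeftmost (hi : i + 2 < t) (ht : 1 ≤ i ∨ 4 ≤ t)
    (hb : IsLeftmost s B c a i b) : Ccw s (a (i + 1)) (a (i + 2)) b := by
  obtain rfl | h₀ := Nat.eq_zero_or_pos i
  · exact S.ccw_of_isLeftmost_zero (by lia) hb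
  · exact S.ccw_of_isLeftmost_of_below (by lia) hb (S.label_mem_union (by lia))
      (S.ccw_label h₀ (by lia) hi) (S.ccw_succ (i + 1) (by lia))

theorem ccw_of_isLeftmost_add_two (hi : i + 2 < t) (ht : 4 ≤ t)
    (hb : IsLeftmost s B c a (i + 2) b) : Ccw s (a (i + 1)) (a (i + 2)) b := by
  have h := S.mirror.ccw_succ_of_isLeftmost (i := t - 1 - (i + 2)) (by lia) (.inr ht)
    (hb.mirror (by lia))
  rw [show t - (t - 1 - (i + 2) + 1) = i + 2 by lia,
    show t - (t - 1 - (i + 2) + 2) = i + 1 by lia, ccw_neg] at h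
  exact h.rotate'

end StarConfig

end Star

/-! ### Two adjacent wedges with two points each -/

/-- The orientations and abscissae in two adjacent wedges at `c`, bounded by the rays through `a₀`,
`a₁` and `a₂` in clockwise order, which contain exactly the points `p₀`, `q₀` and `p₁`, `q₁` of `B`,
respectively, with `p₀` and `p₁` leftmost. -/
structure AdjacentPairs (s : ℝ) (c a₀ a₁ a₂ p₀ q₀ p₁ q₁ : Pt) : Prop where
  cp₀a₀ : Ccw s c p₀ a₀
  cq₀a₀ : Ccw s c q₀ a₀
  ca₁p₀ : Ccw s c a₁ p₀
  ca₁q₀ : Ccw s c a₁ q₀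
  cp₁a₁ : Ccw s c p₁ a₁
  cq₁a₁ : Ccw s c q₁ a₁
  ca₂p₁ : Ccw s c a₂ p₁
  ca₂q₁ : Ccw s c a₂ q₁
  a₀p₀q₀ : Ccw s a₀ p₀ q₀
  a₁q₀p₀ : Ccw s a₁ q₀ p₀
  a₁p₁q₁ : Ccw s a₁ p₁ q₁
  a₂q₁p₁ : Ccw s a₂ q₁ p₁
  a₀a₁p₀ : Ccw s a₀ a₁ p₀
  a₀a₁q₀ : Ccw s a₀ a₁ q₀
  a₁a₂p₁ : Ccw s a₁ a₂ p₁
  a₁a₂q₁ : Ccw s a₁ a₂ q₁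
  cp₁p₀ : Ccw s c p₁ p₀
  cp₁q₀ : Ccw s c p₁ q₀
  cq₁p₀ : Ccw s c q₁ p₀
  cq₁q₀ : Ccw s c q₁ q₀
  a₁p₁p₀ : Ccw s a₁ p₁ p₀
  p₀_lt_q₀ : p₀.1 < q₀.1
  p₁_lt_q₁ : p₁.1 < q₁.1
  c_lt_q₀ : c.1 < q₀.1
  c_lt_a₁ : c.1 < a₁.1
  a₀_lt_p₀ : a₀.1 < p₀.1
  a₀_lt_q₀ : a₀.1 < q₀.1
  a₁_lt_p₀ : a₁.1 < p₀.1
  a₁_lt_p₁ : a₁.1 < p₁.1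
  a₁_lt_q₀ : a₁.1 < q₀.1
  a₁_lt_q₁ : a₁.1 < q₁.1
  a₂_lt_p₁ : a₂.1 < p₁.1
  a₂_lt_q₀ : a₂.1 < q₀.1
  ca₂a₁ : Ccw s c a₂ a₁

/-- Adjacent pairs such that the line `p₀q₀` separates `p₁` from `q₁`, and the line `p₁q₁` has `p₀`
and `q₀` on its left. -/
structure SeparatingPairs (s : ℝ) (c a₀ a₁ a₂ p₀ q₀ p₁ q₁ : Pt) : Prop
    extends AdjacentPairs s c a₀ a₁ a₂ p₀ q₀ p₁ q₁ where
  p₀p₁q₀ : Ccw s p₀ p₁ q₀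
  p₁q₁p₀ : Ccw s p₁ q₁ p₀
  p₀q₀q₁ : Ccw s p₀ q₀ q₁
  p₁q₁q₀ : Ccw s p₁ q₁ q₀

section Pairs

variable {s : ℝ} {a₀ a₁ a₂ a₃ c d l m p₀ p₁ q₀ q₁ z : Pt}

theorem InQuad.not_ccw_fourth {u y₁ y₂ y₃ : Pt} (hz : InQuad s u y₁ y₂ y₃ z)
    (y₂y₃u : Ccw s y₂ y₃ u) (cy₂u : Ccw s c y₂ u) (cy₃y₂ : Ccw s c y₃ y₂) : ¬ Ccw s c z y₃ := by
  intro czy₃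
  obtain ⟨-, -, y₂y₃z, y₃uz⟩ := hz
  have y₃cu : Ccw s y₃ c u := .cycle_left y₃uz y₂y₃u.rotate czy₃.rotate' y₂y₃z.rotate cy₃y₂.rotate
  have uy₃y₂ : Ccw s u y₃ y₂ := .of_interior cy₃y₂ cy₂u.rotate' y₃cu.rotate'
  exact y₂y₃u.asymm uy₃y₂.rotate'

namespace AdjacentPairs

variable (h : AdjacentPairs s c a₀ a₁ a₂ p₀ q₀ p₁ q₁)
include h

theorem not_ccw_left_right_right (a₁p₁q₀ : Ccw s a₁ p₁ q₀) (p₀q₀p₁ : Ccw s p₀ q₀ p₁) :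
    ¬ Ccw s p₀ q₁ q₀ := by
  intro p₀q₁q₀
  have q₀_lt_p₁ : q₀.1 < p₁.1 :=
    Ccw.lt_fst_of_cycle h.p₀_lt_q₀ h.a₁_lt_q₀ p₀q₀p₁.rotate h.a₁q₀p₀.rotate a₁p₁q₀.rotate'
  have q₀_lt_q₁ : q₀.1 < q₁.1 := q₀_lt_p₁.trans h.p₁_lt_q₁
  have a₁q₁q₀ : Ccw s a₁ q₁ q₀ :=
    .cycle_right h.cq₁a₁.rotate' h.a₁p₁q₁ h.ca₁q₀.rotate h.cp₁a₁.rotate' a₁p₁q₀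
  have q₀q₁p₁ : Ccw s q₀ q₁ p₁ :=
    .cycle_right p₀q₁q₀.rotate' a₁q₁q₀.rotate' p₀q₀p₁.rotate h.a₁q₀p₀.rotate a₁p₁q₀.rotate'
  have q₁_lt_a₁ : q₁.1 < a₁.1 :=
    Ccw.lt_fst_of_cycle h.p₁_lt_q₁ q₀_lt_q₁ h.a₁p₁q₁.rotate' q₀q₁p₁.rotate a₁q₁q₀.rotate
  exact h.a₁_lt_q₁.asymm q₁_lt_a₁

theorem convexQuad_upper (a₁p₁q₀ : Ccw s a₁ p₁ q₀) (p₀q₀p₁ : Ccw s p₀ q₀ p₁) :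
    ConvexQuad s a₀ p₀ q₀ p₁ := by
  have q₀p₁a₀ : Ccw s q₀ p₁ a₀ :=
    .cycle_left h.a₀p₀q₀.rotate' h.a₀a₁q₀.rotate' p₀q₀p₁.rotate h.a₁q₀p₀.rotate a₁p₁q₀.rotate'
  have p₁a₀p₀ : Ccw s p₁ a₀ p₀ :=
    (Ccw.cycle_right h.a₁p₁p₀.rotate' p₀q₀p₁ h.a₀a₁p₀.rotate' h.a₁q₀p₀.rotate'
      h.a₀p₀q₀.rotate).rotate
  exact ⟨h.a₀p₀q₀, p₀q₀p₁, q₀p₁a₀, p₁a₀p₀⟩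

theorem inSector_upper (a₁p₁q₀ : Ccw s a₁ p₁ q₀) (p₀q₀q₁ : Ccw s p₀ q₀ q₁) :
    InSector s a₀ p₀ q₀ p₁ q₁ := by
  have a₁q₁q₀ : Ccw s a₁ q₁ q₀ :=
    .cycle_right h.cq₁a₁.rotate' h.a₁p₁q₁ h.ca₁q₀.rotate h.cp₁a₁.rotate' a₁p₁q₀
  have q₀q₁a₀ : Ccw s q₀ q₁ a₀ :=
    .cycle_left h.a₀p₀q₀.rotate' h.a₀a₁q₀.rotate' p₀q₀q₁.rotate h.a₁q₀p₀.rotate a₁q₁q₀.rotate'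
  have q₀_lt_q₁ : q₀.1 < q₁.1 :=
    Ccw.lt_fst_of_cycle h.a₀_lt_q₀ h.a₁_lt_q₀ q₀q₁a₀ h.a₀a₁q₀.rotate' a₁q₁q₀.rotate'
  have q₀p₁q₁ : Ccw s q₀ p₁ q₁ :=
    (Ccw.trans_of_fst_lt q₀_lt_q₁ h.a₁_lt_q₁ h.p₁_lt_q₁ a₁q₁q₀.rotate h.a₁p₁q₁.rotate').rotate
  have a₀_lt_q₁ : a₀.1 < q₁.1 := h.a₀_lt_q₀.trans q₀_lt_q₁
  have p₁q₁a₀ : Ccw s p₁ q₁ a₀ :=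
    (Ccw.trans_of_fst_lt a₀_lt_q₁ q₀_lt_q₁ h.p₁_lt_q₁ q₀q₁a₀.rotate q₀p₁q₁.rotate').rotate'
  have q₁a₀p₀ : Ccw s q₁ a₀ p₀ :=
    (Ccw.trans_of_lt_fst h.a₀_lt_p₀ h.a₀_lt_q₀ a₀_lt_q₁ h.a₀p₀q₀ q₀q₁a₀.rotate').rotate'
  exact ⟨q₀p₁q₁, p₁q₁a₀, q₁a₀p₀⟩

theorem not_ccw_left_right_lower (a₁p₁q₀ : Ccw s a₁ p₁ q₀) (p₁p₀q₁ : Ccw s p₁ p₀ q₁) :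
    ¬ Ccw s p₁ q₁ q₀ := by
  intro p₁q₁q₀
  have p₁p₀q₀ : Ccw s p₁ p₀ q₀ :=
    .trans_right h.a₁p₁p₀.rotate h.a₁p₁q₁.rotate a₁p₁q₀.rotate p₁p₀q₁ p₁q₁q₀
  have q₀_lt_p₁ : q₀.1 < p₁.1 :=
    Ccw.lt_fst_of_cycle h.p₀_lt_q₀ h.a₁_lt_q₀ p₁p₀q₀.rotate' h.a₁q₀p₀.rotate a₁p₁q₀.rotate'
  have p₀_lt_p₁ : p₀.1 < p₁.1 := h.p₀_lt_q₀.trans q₀_lt_p₁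
  have p₁p₀a₂ : Ccw s p₁ p₀ a₂ :=
    .trans_of_fst_lt p₀_lt_p₁ h.a₁_lt_p₁ h.a₂_lt_p₁ h.a₁p₁p₀.rotate h.a₁a₂p₁.rotate'
  have p₁a₁q₁ : Ccw s p₁ a₁ q₁ :=
    .trans_left h.a₁p₁p₀.rotate p₁p₀a₂ p₁p₀q₁ h.a₁a₂p₁.rotate' h.a₂q₁p₁.rotate'
  exact h.a₁p₁q₁.asymm p₁a₁q₁.rotate

theorem convexQuad_lower (ca₂p₀ : Ccw s c a₂ p₀) (p₁p₀q₁ : Ccw s p₁ p₀ q₁) :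
    ConvexQuad s a₂ p₀ q₁ p₁ := by
  have p₁a₂p₀ : Ccw s p₁ a₂ p₀ :=
    .cycle_left p₁p₀q₁ h.a₁p₁p₀.rotate h.a₂q₁p₁.rotate' h.a₁p₁q₁.rotate h.a₁a₂p₁.rotate'
  have a₂p₀q₁ : Ccw s a₂ p₀ q₁ :=
    (Ccw.trans_left h.cq₁p₀.rotate' h.cp₁p₀.rotate' ca₂p₀.rotate' p₁p₀q₁.rotate
      p₁a₂p₀.rotate').rotate'
  exact ⟨a₂p₀q₁, p₁p₀q₁.rotate, h.a₂q₁p₁.rotate, p₁a₂p₀⟩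

theorem inSector_lower (a₁p₁q₀ : Ccw s a₁ p₁ q₀) (p₁q₀q₁ : Ccw s p₁ q₀ q₁) :
    InSector s p₀ q₁ p₁ a₂ q₀ := by
  have p₁a₂q₀ : Ccw s p₁ a₂ q₀ :=
    .cycle_left p₁q₀q₁ a₁p₁q₀.rotate h.a₂q₁p₁.rotate' h.a₁p₁q₁.rotate h.a₁a₂p₁.rotate'
  have a₁a₂q₀ : Ccw s a₁ a₂ q₀ := .of_interior p₁a₂q₀ a₁p₁q₀ h.a₁a₂p₁
  have a₂q₀p₀ : Ccw s a₂ q₀ p₀ :=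
    (Ccw.trans_of_fst_lt h.p₀_lt_q₀ h.a₁_lt_q₀ h.a₂_lt_q₀ h.a₁q₀p₀.rotate a₁a₂q₀.rotate').rotate'
  have q₀p₀p₁ : Ccw s q₀ p₀ p₁ :=
    .trans_right a₂q₀p₀.rotate a₁a₂q₀.rotate' p₁a₂q₀.rotate' h.a₁q₀p₀.rotate a₁p₁q₀.rotate'
  have a₁q₁q₀ : Ccw s a₁ q₁ q₀ :=
    .cycle_right h.cq₁a₁.rotate' h.a₁a₂q₁ h.ca₁q₀.rotate h.ca₂a₁.rotate' a₁a₂q₀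
  have q₀p₀q₁ : Ccw s q₀ p₀ q₁ :=
    .trans_right q₀p₀p₁ a₁p₁q₀.rotate' p₁q₀q₁.rotate h.a₁q₀p₀.rotate a₁q₁q₀.rotate'
  exact ⟨p₁a₂q₀, a₂q₀p₀, q₀p₀q₁⟩

theorem convexQuad_middle (a₁p₁q₀ : Ccw s a₁ p₁ q₀) (p₀p₁q₀ : Ccw s p₀ p₁ q₀) :
    ConvexQuad s a₁ p₁ q₀ p₀ :=
  ⟨a₁p₁q₀, p₀p₁q₀.rotate, h.a₁q₀p₀.rotate, h.a₁p₁p₀.rotate'⟩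

theorem center_lt_of_inQuad (hz : InQuad s a₁ p₁ q₀ p₀ z) : c.1 < z.1 := by
  obtain ⟨a₁p₁z, -, -, p₀a₁z⟩ := hz
  have a₁_lt_z : a₁.1 < z.1 :=
    Ccw.lt_fst_of_between a₁p₁z h.a₁p₁p₀ h.a₁_lt_p₁ p₀a₁z.rotate h.a₁_lt_p₀
  exact h.c_lt_a₁.trans a₁_lt_z

theorem q₁p₀a₁ : Ccw s q₁ p₀ a₁ :=
  (Ccw.cycle_right h.cq₁a₁.rotate' h.a₁p₁q₁ h.ca₁p₀.rotate h.cp₁a₁.rotate' h.a₁p₁p₀).rotate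

end AdjacentPairs

namespace SeparatingPairs

variable (h : SeparatingPairs s c a₀ a₁ a₂ p₀ q₀ p₁ q₁)
include h

theorem a₁p₁q₀ : Ccw s a₁ p₁ q₀ :=
  .cycle_left h.a₁q₀p₀ h.ca₁q₀.rotate h.a₁p₁p₀ h.ca₁p₀.rotate h.cp₁a₁.rotate'

theorem cq₀p₀ : Ccw s c q₀ p₀ :=
  (Ccw.cycle_left h.cp₁q₀.rotate' h.cq₁q₀.rotate' h.p₀p₁q₀.rotate' h.p₁q₁q₀.rotate'
    h.p₀q₀q₁.rotate).rotate'

theorem convexQuad_upper : ConvexQuad s a₀ p₀ q₀ q₁ := by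
  have q₀q₁a₀ : Ccw s q₀ q₁ a₀ :=
    .cycle_left h.a₀p₀q₀.rotate' h.cq₀a₀.rotate h.p₀q₀q₁.rotate h.cq₀p₀.rotate h.cq₁q₀.rotate'
  have q₁a₀p₀ : Ccw s q₁ a₀ p₀ :=
    (Ccw.cycle_right h.cq₁p₀.rotate' h.p₀q₀q₁ h.cp₀a₀.rotate h.cq₀p₀.rotate' h.a₀p₀q₀.rotate).rotate
  exact ⟨h.a₀p₀q₀, h.p₀q₀q₁, q₀q₁a₀, q₁a₀p₀⟩

theorem inSector_of_above (c_lt_a₀ : c.1 < a₀.1) (a₀_lt_d : a₀.1 < d.1) (ca₀d : Ccw s c a₀ d)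
    (cq₁d : Ccw s c q₁ d) : InSector s a₀ p₀ q₀ q₁ d := by
  obtain ⟨-, -, q₀q₁a₀, q₁a₀p₀⟩ := h.convexQuad_upper
  have a₀cq₁ : Ccw s a₀ c q₁ := .of_interior h.cq₁p₀.rotate' q₁a₀p₀.rotate h.cp₀a₀.rotate'
  have da₀p₀ : Ccw s d a₀ p₀ :=
    (Ccw.of_fst_lt_of_lt_fst a₀_lt_d ca₀d.rotate h.a₀_lt_p₀ c_lt_a₀ h.cp₀a₀.rotate').rotate'
  have q₁da₀ : Ccw s q₁ d a₀ :=
    (Ccw.cycle_right a₀cq₁ q₁a₀p₀.rotate ca₀d.rotate h.cp₀a₀.rotate' da₀p₀.rotate).rotate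
  have q₀q₁d : Ccw s q₀ q₁ d :=
    (Ccw.trans_right cq₁d.rotate a₀cq₁.rotate' h.cq₁q₀.rotate q₁da₀ q₀q₁a₀.rotate).rotate'
  exact ⟨q₀q₁d, q₁da₀, da₀p₀⟩

theorem inSector_of_below (cdq₁ : Ccw s c d q₁) (q₀q₁d : Ccw s q₀ q₁ d) :
    InSector s a₀ p₀ q₀ q₁ d := by
  obtain ⟨-, -, q₀q₁a₀, q₁a₀p₀⟩ := h.convexQuad_upper
  have a₀cq₁ : Ccw s a₀ c q₁ := .of_interior h.cq₁q₀.rotate' q₀q₁a₀.rotate' h.cq₀a₀.rotate'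
  have q₁da₀ : Ccw s q₁ d a₀ :=
    .cycle_left q₀q₁a₀.rotate a₀cq₁.rotate' q₀q₁d.rotate h.cq₁q₀.rotate cdq₁.rotate'
  have a₀cd : Ccw s a₀ c d := .of_interior cdq₁.rotate' q₁da₀.rotate' a₀cq₁
  have da₀p₀ : Ccw s d a₀ p₀ :=
    (Ccw.trans_left h.cp₀a₀.rotate' a₀cq₁ a₀cd q₁a₀p₀.rotate q₁da₀.rotate').rotate'
  exact ⟨q₀q₁d, q₁da₀, da₀p₀⟩

theorem convexQuad_lower (ca₂q₀ : Ccw s c a₂ q₀) (q₀p₁a₂ : Ccw s q₀ p₁ a₂) :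
    ConvexQuad s a₂ q₁ q₀ p₁ := by
  have p₀cq₀ : Ccw s p₀ c q₀ :=
    .trans_right h.cq₁p₀.rotate' h.p₁q₁p₀.rotate' h.p₀q₀q₁ h.cp₁p₀.rotate' h.p₀p₁q₀
  have q₀p₀a₂ : Ccw s q₀ p₀ a₂ :=
    .trans_of_fst_lt h.p₀_lt_q₀ h.c_lt_q₀ h.a₂_lt_q₀ p₀cq₀.rotate' ca₂q₀.rotate'
  have a₂q₁q₀ : Ccw s a₂ q₁ q₀ :=
    (Ccw.cycle_right q₀p₀a₂ q₀p₁a₂ h.p₀q₀q₁.rotate h.p₀p₁q₀.rotate' h.p₁q₁q₀.rotate').rotate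
  exact ⟨a₂q₁q₀, h.p₁q₁q₀.rotate, q₀p₁a₂, h.a₂q₁p₁.rotate'⟩

theorem inSector_lower (cda₂ : Ccw s c d a₂) (q₀dq₁ : Ccw s q₀ d q₁) (a₂dp₁ : Ccw s a₂ d p₁) :
    InSector s q₁ q₀ p₁ a₂ d := by
  have a₂dq₁ : Ccw s a₂ d q₁ :=
    .cycle_left h.a₂q₁p₁ h.ca₂q₁.rotate a₂dp₁ h.ca₂p₁.rotate cda₂.rotate'
  exact ⟨a₂dp₁.rotate', a₂dq₁, q₀dq₁.rotate⟩

theorem convexQuad_middle : ConvexQuad s p₁ q₀ p₀ a₁ :=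
  ⟨h.p₀p₁q₀.rotate, h.a₁q₀p₀.rotate, h.a₁p₁p₀.rotate', h.a₁p₁q₀⟩

theorem convexQuad_of_below (q₀a₂p₁ : Ccw s q₀ a₂ p₁) (cda₂ : Ccw s c d a₂)
    (q₀dq₁ : Ccw s q₀ d q₁) (a₂dp₁ : Ccw s a₂ d p₁) :
    ConvexQuad s a₂ d q₁ p₁ := by
  have a₂dq₁ : Ccw s a₂ d q₁ :=
    .cycle_left h.a₂q₁p₁ h.ca₂q₁.rotate a₂dp₁ h.ca₂p₁.rotate cda₂.rotate'
  have a₂q₁q₀ : Ccw s a₂ q₁ q₀ := .of_interior h.p₁q₁q₀ q₀a₂p₁.rotate h.a₂q₁p₁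
  have dq₁p₁ : Ccw s d q₁ p₁ :=
    (Ccw.trans_left h.p₁q₁q₀.rotate a₂q₁q₀.rotate q₀dq₁.rotate' h.a₂q₁p₁.rotate
      a₂dq₁.rotate').rotate'
  exact ⟨a₂dq₁, dq₁p₁, h.a₂q₁p₁.rotate, a₂dp₁.rotate'⟩

theorem not_ccw_of_below (ca₀a₃ : Ccw s c a₀ a₃) (a₃a₀l : Ccw s a₃ a₀ l) (ca₃l : Ccw s c a₃ l)
    (cla₂ : Ccw s c l a₂) (clq₀ : Ccw s c l q₀) (clq₁ : Ccw s c l q₁) (a₂lq₁ : Ccw s a₂ l q₁)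
    (q₀lq₁ : Ccw s q₀ l q₁) (a₂lm : Ccw s a₂ l m) (a₃ml : Ccw s a₃ m l) : ¬ Ccw s l q₁ m := by
  intro lq₁m
  have q₀q₁a₀ := h.convexQuad_upper.ccw₃₄₁
  have a₀lc : Ccw s a₀ l c := .of_interior ca₃l.rotate ca₀a₃.rotate a₃a₀l.rotate
  have lmc : Ccw s l m c := .trans_left lq₁m a₂lq₁.rotate clq₁.rotate a₂lm.rotate cla₂.rotate
  have la₃q₁ : Ccw s l a₃ q₁ := .cycle_left lq₁m clq₁.rotate a₃ml.rotate' lmc ca₃l.rotate'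
  have la₀q₁ : Ccw s l a₀ q₁ :=
    .cycle_right a₀lc.rotate a₃a₀l.rotate' clq₁.rotate ca₃l.rotate' la₃q₁
  have a₀q₀l : Ccw s a₀ q₀ l := .of_interior q₀lq₁.rotate' la₀q₁.rotate q₀q₁a₀.rotate'
  have a₀cl : Ccw s a₀ c l := .of_interior clq₀.rotate' a₀q₀l h.cq₀a₀.rotate'
  exact a₀cl.asymm a₀lc

end SeparatingPairs

end Pairs

/-- The points of `B` in the `k`-th wedge are `p` and `q`, from left to right. -/
structure TwoPoints (s : ℝ) (B : Finset Pt) (c : Pt) (a : ℕ → Pt) (k : ℕ) (p q : Pt) : Prop where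
  left_mem : p ∈ B
  right_mem : q ∈ B
  left_inWedge : InWedge s c a k p
  right_inWedge : InWedge s c a k q
  lt_fst : p.1 < q.1
  eq_or_eq : ∀ z ∈ B, InWedge s c a k z → z = p ∨ z = q

section TwoPoints

variable {s x₀ : ℝ} {A B : Finset Pt} {c d l m p p₀ p₁ q q₀ q₁ v v₂ v₃ v₄ z : Pt} {a : ℕ → Pt}
  {i k n n₂ n₃ n₄ t : ℕ}

theorem AngularPos.pos (h : AngularPos s B c a t z n) : 1 ≤ n := by
  obtain ⟨k, _, _, _, -⟩ | ⟨k, _, _, -⟩ := h <;> lia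

theorem AngularPos.lt (h : AngularPos s B c a t z n) : n < 2 * t := by
  obtain ⟨k, _, _, _, -⟩ | ⟨k, _, _, -⟩ := h <;> lia

namespace TwoPoints

theorem isLeftmost (T : TwoPoints s B c a k p q) : IsLeftmost s B c a k p where
  mem := T.left_mem
  inWedge := T.left_inWedge
  lt_fst z hz hzk hzp := (T.eq_or_eq z hz hzk).resolve_left hzp ▸ T.lt_fst

theorem mirror {k' : ℕ} (T : TwoPoints s B c a k p q) (hk : k + k' + 1 = t) :
    TwoPoints (-s) B c (fun k => a (t - k)) k' p q where
  left_mem := T.left_mem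
  right_mem := T.right_mem
  left_inWedge := (inWedge_neg hk).2 T.left_inWedge
  right_inWedge := (inWedge_neg hk).2 T.right_inWedge
  lt_fst := T.lt_fst
  eq_or_eq z hz hzk := T.eq_or_eq z hz ((inWedge_neg hk).1 hzk)

theorem angularPos_left (T : TwoPoints s B c a k p q) (hk : k < t) :
    AngularPos s B c a t p (2 * k + 1) := .of_inWedge hk T.left_mem T.left_inWedge

theorem angularPos_right (T : TwoPoints s B c a k p q) (hk : k < t) :
    AngularPos s B c a t q (2 * k + 1) := .of_inWedge hk T.right_mem T.right_inWedge

theorem eq_of_angularPos (T₀ : TwoPoints s B c a i p₀ q₀) (T₁ : TwoPoints s B c a (i + 1) p₁ q₁)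
    (hz : AngularPos s B c a t z n) (hlo : 2 * i + 1 ≤ n) (hhi : n ≤ 2 * i + 3) :
    z = p₀ ∨ z = q₀ ∨ z = a (i + 1) ∨ z = p₁ ∨ z = q₁ := by
  obtain rfl | rfl | rfl : n = 2 * i + 1 ∨ n = 2 * (i + 1) ∨ n = 2 * (i + 1) + 1 := by lia
  · have := T₀.eq_or_eq z hz.mem_and_inWedge.1 hz.mem_and_inWedge.2
    tauto
  · exact .inr (.inr (.inl hz.eq_label))
  · have := T₁.eq_or_eq z hz.mem_and_inWedge.1 hz.mem_and_inWedge.2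
    tauto

end TwoPoints

namespace StarConfig

variable (S : StarConfig s x₀ A B c a t)
include S

theorem angularPos_ne_label (hz : z ∈ B) (hn : AngularPos s B c a t z n) : n ≠ 2 * k := by
  rintro rfl
  obtain ⟨l, -, -, hl, rfl⟩ | ⟨l, hl, -⟩ := hn
  exacts [(S.label_lt hl.le hz).false, by lia]

theorem exists_angularPos_of_inQuad_label (hi : i < t) (h₂ : AngularPos s B c a t v₂ n₂)
    (h₃ : AngularPos s B c a t v₃ n₃) (h₄ : AngularPos s B c a t v₄ n₄)
    (hlo : 2 * i ≤ n₂ ∧ 2 * i ≤ n₃ ∧ 2 * i ≤ n₄) (hz : z ∈ B)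
    (hquad : InQuad s (a i) v₂ v₃ v₄ z) : ∃ n, AngularPos s B c a t z n ∧ 2 * i + 1 ≤ n := by
  have hzAB : z ∈ A ∪ B := Finset.mem_union_right A hz
  obtain rfl | h₀ := Nat.eq_zero_or_pos i
  · obtain ⟨n, hn⟩ := S.exists_angularPos hzAB (S.center_lt hz)
    exact ⟨n, hn, hn.pos⟩
  · obtain ⟨n, hn, hlo, -⟩ := S.exists_angularPos_of_inQuad (lo := 2 * i)
      (hi := 2 * i + n₂ + n₃ + n₄) (.label h₀ hi) h₂ h₃ h₄ (by lia) (by lia) hzAB (S.center_lt hz)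
      hquad
    have := S.angularPos_ne_label (k := i) hz hn
    exact ⟨n, hn, by lia⟩

theorem eq_of_angularPos (T₀ : TwoPoints s B c a i p₀ q₀) (T₁ : TwoPoints s B c a (i + 1) p₁ q₁)
    (hz : z ∈ B) (hn : AngularPos s B c a t z n) (hlo : 2 * i + 1 ≤ n) (hhi : n ≤ 2 * i + 4) :
    z = p₀ ∨ z = q₀ ∨ z = p₁ ∨ z = q₁ := by
  have h₁ := S.angularPos_ne_label (k := i + 1) hz hn
  have h₂ := S.angularPos_ne_label (k := i + 2) hz hn
  obtain rfl | rfl : n = 2 * i + 1 ∨ n = 2 * (i + 1) + 1 := by lia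
  · have := T₀.eq_or_eq z hz hn.mem_and_inWedge.2
    tauto
  · have := T₁.eq_or_eq z hz hn.mem_and_inWedge.2
    tauto

theorem exists_isLeftmost (hz : z ∈ B) (hzk : InWedge s c a k z) : ∃ b, IsLeftmost s B c a k b := by
  classical
  obtain ⟨b, hb, hmin⟩ := Finset.exists_min_image {z ∈ B | InWedge s c a k z} Prod.fst
    ⟨z, Finset.mem_filter.2 ⟨hz, hzk⟩⟩
  simp only [Finset.mem_filter] at hb hmin
  refine ⟨b, hb.1, hb.2, fun z hz hzk hzb => (hmin z ⟨hz, hzk⟩).lt_of_ne fun heq => hzb ?_⟩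
  exact S.injOn_fst (by simp [hz]) (by simp [hb.1]) heq.symm

theorem exists_angularPos_of_inQuad_upper (hi : i + 1 < t) (T₀ : TwoPoints s B c a i p₀ q₀)
    (hv : AngularPos s B c a t v (2 * (i + 1) + 1)) (hquad : ConvexQuad s (a i) p₀ q₀ v)
    (hz : z ∈ B) (hzq : InQuad s (a i) p₀ q₀ v z) :
    ∃ n, AngularPos s B c a t z n ∧ 2 * i + 1 ≤ n ∧ n ≤ 2 * i + 3 := by
  have pos_p₀ := T₀.angularPos_left (t := t) (by lia)
  have pos_q₀ := T₀.angularPos_right (t := t) (by lia)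
  obtain ⟨n, hn, hlo⟩ :=
    S.exists_angularPos_of_inQuad_label (by lia) pos_p₀ pos_q₀ hv (by lia) hz hzq
  refine ⟨n, hn, hlo, ?_⟩
  by_contra! hhi
  exact hzq.not_ccw_fourth hquad.ccw₃₄₁ T₀.right_inWedge.ccw_upper
    (S.ccw_of_angularPos_lt pos_q₀ hv (by lia)) (S.ccw_of_angularPos_lt hv hn (by lia))

variable (hi : i + 1 < t) (T₀ : TwoPoints s B c a i p₀ q₀) (T₁ : TwoPoints s B c a (i + 1) p₁ q₁)
include hi T₀ T₁

theorem ccw_label_left_left (ht : 1 ≤ i ∨ i + 2 < t) : Ccw s (a (i + 1)) p₁ p₀ := by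
  have pos_p₀ := T₀.angularPos_left (t := t) (by lia)
  have pos_p₁ := T₁.angularPos_left hi
  obtain ht | ht := ht
  · exact S.ccw_of_isLeftmost_of_below (by lia) T₀.isLeftmost (by simp [T₁.left_mem])
      (S.ccw_of_angularPos_lt (.label ht (by lia)) pos_p₁ (by lia)) T₁.left_inWedge.ccw_upper
  · exact S.ccw_of_isLeftmost_of_above hi T₁.isLeftmost (by simp [T₀.left_mem])
      T₀.left_inWedge.ccw_lower (S.ccw_of_angularPos_lt pos_p₀ (.label (by lia) ht) (by lia))

theorem adjacentPairs (ht : 1 ≤ i ∨ i + 2 < t) :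
    AdjacentPairs s c (a i) (a (i + 1)) (a (i + 2)) p₀ q₀ p₁ q₁ := by
  have pos_p₀ := T₀.angularPos_left (t := t) (by lia)
  have pos_q₀ := T₀.angularPos_right (t := t) (by lia)
  have pos_p₁ := T₁.angularPos_left hi
  have pos_q₁ := T₁.angularPos_right hi
  have beyond₀ := S.ccw_of_isLeftmost (by lia) T₀.isLeftmost T₀.right_mem T₀.right_inWedge
    (by rintro rfl; exact T₀.lt_fst.false)
  have beyond₁ := S.ccw_of_isLeftmost hi T₁.isLeftmost T₁.right_mem T₁.right_inWedge
    (by rintro rfl; exact T₁.lt_fst.false)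
  exact
    { cp₀a₀ := T₀.left_inWedge.ccw_upper
      cq₀a₀ := T₀.right_inWedge.ccw_upper
      ca₁p₀ := T₀.left_inWedge.ccw_lower
      ca₁q₀ := T₀.right_inWedge.ccw_lower
      cp₁a₁ := T₁.left_inWedge.ccw_upper
      cq₁a₁ := T₁.right_inWedge.ccw_upper
      ca₂p₁ := T₁.left_inWedge.ccw_lower
      ca₂q₁ := T₁.right_inWedge.ccw_lower
      a₀p₀q₀ := beyond₀.1
      a₁q₀p₀ := beyond₀.2
      a₁p₁q₁ := beyond₁.1
      a₂q₁p₁ := beyond₁.2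
      a₀a₁p₀ := S.ccw_of_inWedge (by lia) T₀.left_mem T₀.left_inWedge
      a₀a₁q₀ := S.ccw_of_inWedge (by lia) T₀.right_mem T₀.right_inWedge
      a₁a₂p₁ := S.ccw_of_inWedge hi T₁.left_mem T₁.left_inWedge
      a₁a₂q₁ := S.ccw_of_inWedge hi T₁.right_mem T₁.right_inWedge
      cp₁p₀ := S.ccw_of_angularPos_lt pos_p₀ pos_p₁ (by lia)
      cp₁q₀ := S.ccw_of_angularPos_lt pos_q₀ pos_p₁ (by lia)
      cq₁p₀ := S.ccw_of_angularPos_lt pos_p₀ pos_q₁ (by lia)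
      cq₁q₀ := S.ccw_of_angularPos_lt pos_q₀ pos_q₁ (by lia)
      ca₂a₁ := S.ccw_succ (i + 1) hi
      a₁p₁p₀ := S.ccw_label_left_left hi T₀ T₁ ht
      p₀_lt_q₀ := T₀.lt_fst
      p₁_lt_q₁ := T₁.lt_fst
      c_lt_q₀ := S.center_lt T₀.right_mem
      c_lt_a₁ := S.lt_label (i + 1) (by lia) hi
      a₀_lt_p₀ := S.label_lt (by lia) T₀.left_mem
      a₀_lt_q₀ := S.label_lt (by lia) T₀.right_mem
      a₁_lt_p₀ := S.label_lt (by lia) T₀.left_mem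
      a₁_lt_q₀ := S.label_lt (by lia) T₀.right_mem
      a₁_lt_p₁ := S.label_lt (by lia) T₁.left_mem
      a₁_lt_q₁ := S.label_lt (by lia) T₁.right_mem
      a₂_lt_p₁ := S.label_lt (by lia) T₁.left_mem
      a₂_lt_q₀ := S.label_lt (by lia) T₀.right_mem }

theorem eq_of_inQuad_upper (hv : AngularPos s B c a t v (2 * (i + 1) + 1))
    (hquad : ConvexQuad s (a i) p₀ q₀ v) (hz : z ∈ B) (hzq : InQuad s (a i) p₀ q₀ v z) :
    z = p₁ ∨ z = q₁ := by
  obtain ⟨n, hn, hlo, hhi⟩ := S.exists_angularPos_of_inQuad_upper hi T₀ hv hquad hz hzq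
  obtain rfl | rfl | h := S.eq_of_angularPos T₀ T₁ hz hn hlo (by lia)
  exacts [(hzq.ccw₁₂.ne_right rfl).elim, (hzq.ccw₂₃.ne_right rfl).elim, h]

section Separating

variable (h : SeparatingPairs s c (a i) (a (i + 1)) (a (i + 2)) p₀ q₀ p₁ q₁)
include h

theorem not_inQuad_of_separatingPairs : ∀ z ∈ B, ¬ InQuad s (a i) p₀ q₀ q₁ z := by
  intro z hz hzq
  obtain rfl | rfl :=
    S.eq_of_inQuad_upper hi T₀ T₁ (T₁.angularPos_right hi) h.convexQuad_upper hz hzq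
  exacts [hzq.ccw₃₄.rotate'.asymm h.p₁q₁q₀, hzq.ccw₃₄.ne_right rfl]

theorem not_inSector_of_separatingPairs (hd : d ∈ B) : ¬ InSector s (a i) p₀ q₀ q₁ d :=
  S.not_inSector_beyond_y₃u (S.label_mem i (by lia)) T₀.left_mem T₀.right_mem T₁.right_mem hd
    h.convexQuad_upper (S.not_inQuad_of_separatingPairs hi T₀ T₁ h)

theorem le_angularPos_of_separatingPairs (hd : d ∈ B) (hn : AngularPos s B c a t d n) :
    2 * i + 1 ≤ n := by
  have hne := S.angularPos_ne_label (k := i) hd hn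
  by_contra! hlt
  have hi₁ : 1 ≤ i := by have := hn.pos; lia
  refine S.not_inSector_of_separatingPairs hi T₀ T₁ h hd ?_
  exact h.inSector_of_above (S.lt_label i hi₁ (by lia)) (S.label_lt (by lia) hd)
    (S.ccw_of_angularPos_lt hn (.label hi₁ (by lia)) (by lia))
    (S.ccw_of_angularPos_lt hn (T₁.angularPos_right hi) (by lia))

theorem ccw_of_separatingPairs (hd : d ∈ B) (hn : AngularPos s B c a t d n) (hlo : 2 * i + 5 ≤ n) :
    Ccw s q₀ d q₁ := by
  have cdq₁ := S.ccw_of_angularPos_lt (T₁.angularPos_right hi) hn (by lia)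
  have cdq₀ := S.ccw_of_angularPos_lt (T₀.angularPos_right (by lia)) hn (by lia)
  refine (S.ccw_or_ccw q₀ (by simp [T₀.right_mem]) d (by simp [hd]) q₁ (by simp [T₁.right_mem])
    cdq₀.ne_right.symm h.cq₁q₀.ne_right.symm cdq₁.ne_right).resolve_right fun q₀q₁d => ?_
  exact S.not_inSector_of_separatingPairs hi T₀ T₁ h hd (h.inSector_of_below cdq₁ q₀q₁d)

theorem exists_ne_angularPos_of_separatingPairs (e : Pt) :
    ∃ d ∈ B, d ≠ e ∧ ∃ n, AngularPos s B c a t d n ∧ 2 * i + 5 ≤ n := by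
  obtain ⟨d, hd, hne⟩ := Finset.exists_mem_notMem_of_card_lt_card
    (Finset.card_le_five.trans_lt S.six_le_card : ({e, p₀, q₀, p₁, q₁} : Finset Pt).card < B.card)
  obtain ⟨n, hn⟩ := S.exists_angularPos (by simp [hd]) (S.center_lt hd)
  simp only [Finset.mem_insert, Finset.mem_singleton, not_or] at hne
  refine ⟨d, hd, hne.1, n, hn, ?_⟩
  by_contra! hlt
  have heq := S.eq_of_angularPos T₀ T₁ hd hn
    (S.le_angularPos_of_separatingPairs hi T₀ T₁ h hd hn) (by lia)
  tauto

theorem not_inQuad_lower_of_separatingPairs (hi₂ : i + 2 < t) :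
    ∀ z ∈ B, ¬ InQuad s (a (i + 2)) q₁ q₀ p₁ z := by
  intro z hz hzq
  obtain ⟨n, hn, hlo, hhi⟩ := S.exists_angularPos_of_inQuad (lo := 2 * i + 1) (hi := 2 * (i + 2))
    (.label (by lia) hi₂) (T₁.angularPos_right hi) (T₀.angularPos_right (by lia))
    (T₁.angularPos_left hi) (by lia) (by lia) (by simp [hz]) (S.center_lt hz) hzq
  obtain rfl | rfl | rfl | rfl := S.eq_of_angularPos T₀ T₁ hz hn hlo (by lia)
  exacts [hzq.ccw₂₃.asymm h.p₀q₀q₁.rotate', hzq.ccw₂₃.ne_right rfl, hzq.ccw₃₄.ne_right rfl,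
    hzq.ccw₁₂.ne_right rfl]

theorem ccw_label_of_separatingPairs (hi₂ : i + 2 < t) : Ccw s q₀ (a (i + 2)) p₁ := by
  obtain ⟨d, hd, -, n, hn, hlo⟩ := S.exists_ne_angularPos_of_separatingPairs hi T₀ T₁ h p₀
  have pos_a₂ : AngularPos s B c a t (a (i + 2)) (2 * (i + 2)) := .label (by lia) hi₂
  have ca₂q₀ := S.ccw_of_angularPos_lt (T₀.angularPos_right (by lia)) pos_a₂ (by lia)
  refine (S.ccw_or_ccw q₀ (by simp [T₀.right_mem]) _ (S.label_mem_union hi₂.le) p₁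
    (by simp [T₁.left_mem]) ca₂q₀.ne_right.symm h.cp₁q₀.ne_right.symm
    h.ca₂p₁.ne_right).resolve_right fun q₀p₁a₂ => ?_
  have cda₂ := S.ccw_of_angularPos_lt pos_a₂ hn (by lia)
  have a₂dp₁ := S.ccw_of_isLeftmost_of_below hi T₁.isLeftmost (by simp [hd])
    (S.ccw_of_angularPos_lt (.label (by lia) hi) hn (by lia)) cda₂
  exact S.not_inSector_beyond_uy₁ (S.label_mem _ hi₂.le) T₁.right_mem T₀.right_mem T₁.left_mem hd
    (h.convexQuad_lower ca₂q₀ q₀p₁a₂) (S.not_inQuad_lower_of_separatingPairs hi T₀ T₁ h hi₂)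
    (h.inSector_lower cda₂ (S.ccw_of_separatingPairs hi T₀ T₁ h hd hn hlo) a₂dp₁)

theorem not_inQuad_middle_of_separatingPairs :
    ∀ z ∈ A ∪ B, ¬ InQuad s (a (i + 1)) p₁ q₀ p₀ z := by
  intro z hz hzq
  obtain ⟨n, hn, hlo, hhi⟩ := S.exists_angularPos_of_inQuad (lo := 2 * i + 1) (hi := 2 * i + 3)
    (.label (by lia) hi) (T₁.angularPos_left hi) (T₀.angularPos_right (by lia))
    (T₀.angularPos_left (by lia)) (by lia) (by lia) hz (h.center_lt_of_inQuad hzq) hzq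
  obtain rfl | rfl | rfl | rfl | rfl := T₀.eq_of_angularPos T₁ hn hlo hhi
  exacts [hzq.ccw₃₄.ne_right rfl, hzq.ccw₂₃.ne_right rfl, hzq.ccw₁₂.ne_outer rfl,
    hzq.ccw₁₂.ne_right rfl, hzq.ccw₂₃.asymm h.p₁q₁q₀]

theorem not_ccw_label_of_separatingPairs (hi₂ : i + 2 < t) :
    ¬ Ccw s (a (i + 1)) (a (i + 2)) p₀ := by
  intro a₁a₂p₀
  have hdiv : IsDivided A B {p₁, q₀, p₀, a (i + 1)} := by
    simp [IsDivided, Finset.insert_subset_iff, T₀.left_mem, T₀.right_mem, T₁.left_mem,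
      S.label_mem (i + 1) hi.le]
  exact S.not_inSector hdiv h.convexQuad_middle
    (fun z hz hzq => S.not_inQuad_middle_of_separatingPairs hi T₀ T₁ h z hz
      hzq.rotate.rotate.rotate) _ (S.label_mem_union (k := i + 2) hi₂.le)
    ⟨a₁a₂p₀.rotate', h.a₁a₂p₁, (S.ccw_label_of_separatingPairs hi T₀ T₁ h hi₂).rotate⟩

theorem eq_three_of_separatingPairs : i = 0 ∧ t = 3 := by
  obtain ⟨d, -, -, n, hn, hlo⟩ := S.exists_ne_angularPos_of_separatingPairs hi T₀ T₁ h p₀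
  have hi₂ : i + 2 < t := by have := hn.lt; lia
  by_contra hne
  exact S.not_ccw_label_of_separatingPairs hi T₀ T₁ h hi₂
    (S.ccw_succ_of_isLeftmost hi₂ (by lia) T₀.isLeftmost)

end Separating

end StarConfig

theorem exists_forall_not_ccw {P : Pt → Prop} {u v : Pt} (hP : ∃ z ∈ B, P z) :
    ∃ m ∈ B, P m ∧ ∀ z ∈ B, P z → Ccw s u m z → ¬ Ccw s m v z := by
  classical
  obtain ⟨z, hz, hPz⟩ := hP
  obtain ⟨m, hm, hmin⟩ := Finset.exists_min_image {z ∈ B | P z} (fun z => orient s u z v)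
    ⟨z, Finset.mem_filter.2 ⟨hz, hPz⟩⟩
  simp only [Finset.mem_filter] at hm hmin
  refine ⟨m, hm.1, hm.2, fun z hz hPz umz mvz => ?_⟩
  have hle := hmin z ⟨hz, hPz⟩
  have hsplit := orient_eq_add_add s u m v z
  have hrot := orient_rotate s v u z
  have : 0 < orient s u m z := umz
  have : 0 < orient s m v z := mvz
  linarith

namespace StarConfig

variable (S : StarConfig s x₀ A B c a 3) (T₀ : TwoPoints s B c a 0 p₀ q₀)
  (T₁ : TwoPoints s B c a 1 p₁ q₁)
  (h : SeparatingPairs s c (a 0) (a 1) (a 2) p₀ q₀ p₁ q₁)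
include S T₀ T₁ h

theorem ccw_and_convexQuad_of_separatingPairs (hd : d ∈ B) (hd₂ : InWedge s c a 2 d) :
    Ccw s q₀ d q₁ ∧ ConvexQuad s (a 2) d q₁ p₁ := by
  have pos_d := AngularPos.of_inWedge (t := 3) (by lia) hd hd₂
  have q₀dq₁ := S.ccw_of_separatingPairs (by lia) T₀ T₁ h hd pos_d (by lia)
  have a₂dp₁ := S.ccw_of_isLeftmost_of_below (k := 1) (by lia) T₁.isLeftmost (by simp [hd])
    (S.ccw_of_angularPos_lt (.label (by lia) (by lia)) pos_d (by lia)) hd₂.ccw_upper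
  exact ⟨q₀dq₁, h.convexQuad_of_below
    (S.ccw_label_of_separatingPairs (by lia) T₀ T₁ h (by lia)) hd₂.ccw_upper q₀dq₁ a₂dp₁⟩

theorem exists_ne_inWedge_of_separatingPairs (e : Pt) : ∃ d ∈ B, d ≠ e ∧ InWedge s c a 2 d := by
  obtain ⟨d, hd, hde, n, hn, hlo⟩ :=
    S.exists_ne_angularPos_of_separatingPairs (by lia) T₀ T₁ h e
  obtain rfl : n = 2 * 2 + 1 := by have := hn.lt; lia
  exact ⟨d, hd, hde, hn.mem_and_inWedge.2⟩

theorem ccw_first_of_separatingPairs : Ccw s c (a 0) (a 2) := by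
  have ca₂a₁ := S.ccw_succ 1 (by lia)
  have hne : a 0 ≠ a 2 := fun heq =>
    (S.first_lt.trans (S.lt_label 2 (by lia) (by lia))).ne (congrArg Prod.fst heq)
  refine (S.ccw_or_ccw c S.center_mem_union _ (S.label_mem_union (by lia)) _
    (S.label_mem_union (by lia)) (S.ccw_succ 0 (by lia)).ne_outer ca₂a₁.ne_left
    hne).resolve_right fun ca₂a₀ => ?_
  exact S.not_ccw_label_of_separatingPairs (by lia) T₀ T₁ h (by lia)
    (S.ccw_of_isLeftmost_of_below (by lia) T₀.isLeftmost (S.label_mem_union (by lia)) ca₂a₀ ca₂a₁)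

theorem not_inQuad_below_of_separatingPairs
    (hmin : ∀ z ∈ B, InWedge s c a 2 z → Ccw s (a 2) m z → ¬ Ccw s m q₁ z) :
    ∀ z ∈ B, ¬ InQuad s (a 2) m q₁ p₁ z := by
  intro z hz hzq
  obtain ⟨k, hk, hzk⟩ := S.exists_inWedge z hz
  interval_cases k
  · obtain rfl | rfl := T₀.eq_or_eq z hz hzk
    · exact hzq.ccw₃₄.rotate'.asymm h.p₁q₁p₀.rotate.rotate
    · exact hzq.ccw₄₁.rotate'.asymm (S.ccw_label_of_separatingPairs (by lia) T₀ T₁ h (by lia))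
  · obtain rfl | rfl := T₁.eq_or_eq z hz hzk
    exacts [hzq.ccw₃₄.ne_right rfl, hzq.ccw₂₃.ne_right rfl]
  · exact hmin z hz hzk hzq.ccw₁₂ hzq.ccw₂₃

theorem not_isLeftmost_of_separatingPairs (hm : IsLeftmost s B c a 2 m) :
    ¬ ∀ z ∈ B, InWedge s c a 2 z → Ccw s (a 2) m z → ¬ Ccw s m q₁ z := by
  intro hmin
  obtain ⟨e, he, hem, he₂⟩ := S.exists_ne_inWedge_of_separatingPairs T₀ T₁ h m
  have a₂me := (S.ccw_of_isLeftmost (by lia) hm he he₂ hem).1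
  have quad_m := (S.ccw_and_convexQuad_of_separatingPairs T₀ T₁ h hm.mem hm.inWedge).2
  have quad_e := (S.ccw_and_convexQuad_of_separatingPairs T₀ T₁ h he he₂).2
  have meq₁ : Ccw s m e q₁ :=
    (S.ccw_or_ccw m (by simp [hm.mem]) e (by simp [he]) q₁ (by simp [T₁.right_mem]) hem.symm
      quad_m.ccw₂₃₄.ne_left quad_e.ccw₂₃₄.ne_left).resolve_right (hmin e he he₂ a₂me)
  exact S.not_inSector_beyond_y₁y₂ (S.label_mem 2 (by lia)) hm.mem T₁.right_mem T₁.left_mem he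
    quad_m (S.not_inQuad_below_of_separatingPairs T₀ T₁ h hmin)
    ⟨a₂me, meq₁, quad_e.ccw₂₃₄⟩

theorem isLeftmost_of_separatingPairs (hm : m ∈ B) (hm₂ : InWedge s c a 2 m)
    (hmin : ∀ z ∈ B, InWedge s c a 2 z → Ccw s (a 2) m z → ¬ Ccw s m q₁ z) :
    IsLeftmost s B c a 2 m := by
  obtain ⟨l, hl⟩ := S.exists_isLeftmost hm hm₂
  obtain rfl | hml := eq_or_ne m l
  · exact hl
  obtain ⟨a₂lm, a₃ml⟩ := S.ccw_of_isLeftmost (by lia) hl hm hm₂ hml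
  obtain ⟨q₀lq₁, quad_l⟩ := S.ccw_and_convexQuad_of_separatingPairs T₀ T₁ h hl.mem hl.inWedge
  have quad_m := (S.ccw_and_convexQuad_of_separatingPairs T₀ T₁ h hm hm₂).2
  have pos_l := AngularPos.of_inWedge (t := 3) (by lia) hl.mem hl.inWedge
  obtain lmq₁ | lq₁m := S.ccw_or_ccw l (by simp [hl.mem]) m (by simp [hm]) q₁
    (by simp [T₁.right_mem]) hml.symm quad_l.ccw₂₃₄.ne_left quad_m.ccw₂₃₄.ne_left
  · exact (S.not_inSector_beyond_uy₁ (S.label_mem 2 (by lia)) hm T₁.right_mem T₁.left_mem hl.mem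
      quad_m (S.not_inQuad_below_of_separatingPairs T₀ T₁ h hmin)
      ⟨quad_l.ccw₄₁₂, a₂lm, lmq₁⟩).elim
  · have ca₀a₃ := S.ccw_of_eq_three rfl
    have a₃a₀l := S.ccw_of_isLeftmost_of_below (by lia) hl (S.label_mem_union (by lia))
      (S.ccw_first_of_separatingPairs T₀ T₁ h) ca₀a₃
    exact (h.not_ccw_of_below ca₀a₃ a₃a₀l hl.inWedge.ccw_lower hl.inWedge.ccw_upper
      (S.ccw_of_angularPos_lt (T₀.angularPos_right (by lia)) pos_l (by lia))
      (S.ccw_of_angularPos_lt (T₁.angularPos_right (by lia)) pos_l (by lia))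
      quad_l.ccw₁₂₃ q₀lq₁ a₂lm a₃ml lq₁m).elim

end StarConfig

namespace StarConfig

variable (S : StarConfig s x₀ A B c a t) (hi : i + 1 < t) (T₀ : TwoPoints s B c a i p₀ q₀)
  (T₁ : TwoPoints s B c a (i + 1) p₁ q₁)
include S hi T₀ T₁

theorem not_separatingPairs :
    ¬ SeparatingPairs s c (a i) (a (i + 1)) (a (i + 2)) p₀ q₀ p₁ q₁ := by
  intro h
  obtain ⟨rfl, rfl⟩ := S.eq_three_of_separatingPairs hi T₀ T₁ h
  obtain ⟨d, hd, -, hd₂⟩ := S.exists_ne_inWedge_of_separatingPairs T₀ T₁ h p₀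
  obtain ⟨m, hm, hm₂, hmin⟩ := exists_forall_not_ccw (s := s) (u := a 2) (v := q₁) ⟨d, hd, hd₂⟩
  exact S.not_isLeftmost_of_separatingPairs T₀ T₁ h
    (S.isLeftmost_of_separatingPairs T₀ T₁ h hm hm₂ hmin) hmin

theorem ccw_label_left_right (hi₂ : i + 2 < t) : Ccw s (a (i + 1)) p₁ q₀ :=
  S.ccw_of_isLeftmost_of_above hi T₁.isLeftmost (by simp [T₀.right_mem]) T₀.right_inWedge.ccw_lower
    (S.ccw_of_angularPos_lt (T₀.angularPos_right (by lia)) (.label (by lia) hi₂) (by lia))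

theorem not_ccw_left_right_left (hi₂ : i + 2 < t) : ¬ Ccw s p₀ q₀ p₁ := by
  intro p₀q₀p₁
  have h := S.adjacentPairs hi T₀ T₁ (.inr hi₂)
  have a₁p₁q₀ := S.ccw_label_left_right hi T₀ T₁ hi₂
  have quad := h.convexQuad_upper a₁p₁q₀ p₀q₀p₁
  obtain p₀q₀q₁ | p₀q₁q₀ := S.ccw_or_ccw p₀ (by simp [T₀.left_mem]) q₀ (by simp [T₀.right_mem]) q₁
    (by simp [T₁.right_mem]) p₀q₀p₁.ne_left h.cq₁p₀.ne_right.symm h.cq₁q₀.ne_right.symm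
  · refine S.not_inSector_beyond_y₃u (S.label_mem i (by lia)) T₀.left_mem T₀.right_mem T₁.left_mem
      T₁.right_mem quad (fun z hz hzq => ?_) (h.inSector_upper a₁p₁q₀ p₀q₀q₁)
    obtain rfl | rfl := S.eq_of_inQuad_upper hi T₀ T₁ (T₁.angularPos_left hi) quad hz hzq
    exacts [hzq.ccw₃₄.ne_right rfl,
      hzq.ccw₄₁.asymm (h.inSector_upper a₁p₁q₀ p₀q₀q₁).ccw₄₁]
  · exact h.not_ccw_left_right_right a₁p₁q₀ p₀q₀p₁ p₀q₁q₀

theorem not_ccw_left_left_right (hi₂ : i + 2 < t) : ¬ Ccw s p₁ p₀ q₁ := by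
  intro p₁p₀q₁
  have h := S.adjacentPairs hi T₀ T₁ (.inr hi₂)
  have a₁p₁q₀ := S.ccw_label_left_right hi T₀ T₁ hi₂
  have pos_p₀ := T₀.angularPos_left (t := t) (by lia)
  have pos_a₂ : AngularPos s B c a t (a (i + 2)) (2 * (i + 2)) := .label (by lia) hi₂
  have quad := h.convexQuad_lower (S.ccw_of_angularPos_lt pos_p₀ pos_a₂ (by lia)) p₁p₀q₁
  obtain p₁q₁q₀ | p₁q₀q₁ := S.ccw_or_ccw p₁ (by simp [T₁.left_mem]) q₁ (by simp [T₁.right_mem]) q₀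
    (by simp [T₀.right_mem]) h.a₁p₁q₁.ne_right h.cp₁q₀.ne_right h.cq₁q₀.ne_right
  · exact h.not_ccw_left_right_lower a₁p₁q₀ p₁p₀q₁ p₁q₁q₀
  · refine S.not_inSector_beyond_uy₁ (S.label_mem _ hi₂.le) T₀.left_mem T₁.right_mem T₁.left_mem
      T₀.right_mem quad (fun z hz hzq => ?_) (h.inSector_lower a₁p₁q₀ p₁q₀q₁)
    obtain ⟨n, hn, hlo, hhi⟩ := S.exists_angularPos_of_inQuad (lo := 2 * i + 1) (hi := 2 * (i + 2))
      pos_a₂ pos_p₀ (T₁.angularPos_right hi) (T₁.angularPos_left hi) (by lia) (by lia)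
      (by simp [hz]) (S.center_lt hz) hzq
    obtain rfl | rfl | rfl | rfl := S.eq_of_angularPos T₀ T₁ hz hn hlo (by lia)
    exacts [hzq.ccw₁₂.ne_right rfl,
      hzq.ccw₁₂.rotate.asymm (h.inSector_lower a₁p₁q₀ p₁q₀q₁).ccw₄₁.rotate',
      hzq.ccw₃₄.ne_right rfl, hzq.ccw₂₃.ne_right rfl]

theorem eq_of_inQuad_middle (h : AdjacentPairs s c (a i) (a (i + 1)) (a (i + 2)) p₀ q₀ p₁ q₁)
    (hz : z ∈ A ∪ B) (hzq : InQuad s (a (i + 1)) p₁ q₀ p₀ z) : z = q₁ := by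
  obtain ⟨n, hn, hlo, hhi⟩ := S.exists_angularPos_of_inQuad (lo := 2 * i + 1) (hi := 2 * i + 3)
    (.label (by lia) hi) (T₁.angularPos_left hi) (T₀.angularPos_right (by lia))
    (T₀.angularPos_left (by lia)) (by lia) (by lia) hz (h.center_lt_of_inQuad hzq) hzq
  obtain rfl | rfl | rfl | rfl | rfl := T₀.eq_of_angularPos T₁ hn hlo hhi
  exacts [(hzq.ccw₃₄.ne_right rfl).elim, (hzq.ccw₂₃.ne_right rfl).elim,
    (hzq.ccw₁₂.ne_outer rfl).elim, (hzq.ccw₁₂.ne_right rfl).elim, rfl]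

theorem not_twoPoints_of_lt (hi₂ : i + 2 < t) : False := by
  have h := S.adjacentPairs hi T₀ T₁ (.inr hi₂)
  have a₁p₁q₀ := S.ccw_label_left_right hi T₀ T₁ hi₂
  have p₀p₁q₀ := (S.ccw_or_ccw p₀ (by simp [T₀.left_mem]) q₀ (by simp [T₀.right_mem]) p₁
    (by simp [T₁.left_mem]) h.a₁q₀p₀.ne_right.symm h.cp₁p₀.ne_right.symm
    h.cp₁q₀.ne_right.symm).resolve_left (S.not_ccw_left_right_left hi T₀ T₁ hi₂)
  have p₁q₁p₀ := (S.ccw_or_ccw p₁ (by simp [T₁.left_mem]) q₁ (by simp [T₁.right_mem]) p₀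
    (by simp [T₀.left_mem]) h.a₁p₁q₁.ne_right h.cp₁p₀.ne_right
    h.cq₁p₀.ne_right).resolve_right (S.not_ccw_left_left_right hi T₀ T₁ hi₂)
  have quad := h.convexQuad_middle a₁p₁q₀ p₀p₁q₀
  have not_inSector_y₁y₂ := S.not_inSector_beyond_y₁y₂ (S.label_mem _ hi.le) T₁.left_mem
    T₀.right_mem T₀.left_mem T₁.right_mem quad
  have not_inSector_y₂y₃ := S.not_inSector_beyond_y₂y₃ (S.label_mem _ hi.le) T₁.left_mem
    T₀.right_mem T₀.left_mem T₁.right_mem quad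
  have eq_q₁ {z : Pt} (hz : z ∈ B) := S.eq_of_inQuad_middle hi T₀ T₁ h (Finset.mem_union_right A hz)
  obtain p₀q₀q₁ | p₀q₁q₀ := S.ccw_or_ccw p₀ (by simp [T₀.left_mem]) q₀ (by simp [T₀.right_mem]) q₁
      (by simp [T₁.right_mem]) p₀p₁q₀.ne_outer h.cq₁p₀.ne_right.symm h.cq₁q₀.ne_right.symm <;>
    obtain p₁q₁q₀ | p₁q₀q₁ := S.ccw_or_ccw p₁ (by simp [T₁.left_mem]) q₁ (by simp [T₁.right_mem]) q₀
      (by simp [T₀.right_mem]) h.a₁p₁q₁.ne_right h.cp₁q₀.ne_right h.cq₁q₀.ne_right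
  · exact S.not_separatingPairs hi T₀ T₁ { h with p₀p₁q₀, p₁q₁p₀, p₀q₀q₁, p₁q₁q₀ }
  · refine not_inSector_y₂y₃ (fun z hz hzq => ?_) ⟨p₁q₀q₁, p₀q₀q₁.rotate, h.q₁p₀a₁⟩
    obtain rfl := eq_q₁ hz hzq
    exact hzq.ccw₃₄.asymm p₀q₀q₁.rotate
  · refine not_inSector_y₁y₂ (fun z hz hzq => ?_) ⟨h.a₁p₁q₁, p₁q₁q₀, p₀q₁q₀.rotate⟩
    obtain rfl := eq_q₁ hz hzq
    exact hzq.ccw₂₃.asymm p₁q₁q₀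
  · have T₀' := T₀.mirror (t := t) (k' := t - (i + 2) + 1) (by lia)
    have T₁' := T₁.mirror (t := t) (k' := t - (i + 2)) (by lia)
    exact S.mirror.not_separatingPairs (by lia) T₁' T₀'
      { S.mirror.adjacentPairs (by lia) T₁' T₀' (.inl (by lia)) with
        p₀p₁q₀ := ccw_neg.2 p₁q₁p₀
        p₁q₁p₀ := ccw_neg.2 p₀p₁q₀
        p₀q₀q₁ := ccw_neg.2 p₁q₀q₁
        p₁q₁q₀ := ccw_neg.2 p₀q₁q₀ }

theorem not_twoPoints : False := by
  by_cases hi₂ : i + 2 < t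
  · exact S.not_twoPoints_of_lt hi T₀ T₁ hi₂
  have h₀ : 0 < i := by
    by_contra! h₀
    obtain rfl : i = 0 := by lia
    have hsub : B ⊆ {p₀, q₀, p₁, q₁} := by
      intro z hz
      obtain ⟨n, hn⟩ := S.exists_angularPos (by simp [hz]) (S.center_lt hz)
      have := hn.lt
      simpa using S.eq_of_angularPos T₀ T₁ hz hn hn.pos (by lia)
    have := (S.six_le_card.trans (Finset.card_le_card hsub)).trans Finset.card_le_four
    lia
  exact S.mirror.not_twoPoints_of_lt (i := 0) (by lia) (T₁.mirror (by lia)) (T₀.mirror (by lia))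
    (by lia)

end StarConfig

end TwoPoints

/-! ### The pattern `2, 1, …, 1, 2` -/

/-- The `k`-th wedge contains the single point `v` of `B`. -/
structure SinglePoint (s : ℝ) (B : Finset Pt) (c : Pt) (a : ℕ → Pt) (k : ℕ) (v : Pt) : Prop where
  mem : v ∈ B
  inWedge : InWedge s c a k v
  eq_of_inWedge : ∀ z ∈ B, InWedge s c a k z → z = v

section PairSingle

/-- The orientations and abscissae in two adjacent wedges at `c`, bounded by the rays through `a₀`,
`a₁` and `a₂` in clockwise order, which contain exactly the points `p`, `q` and `v` of `B`,
respectively, with `p` to the left of `q`. -/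
structure PairSingle (s : ℝ) (c a₀ a₁ a₂ p q v : Pt) : Prop where
  cpa₀ : Ccw s c p a₀
  ca₁p : Ccw s c a₁ p
  ca₁q : Ccw s c a₁ q
  ca₂q : Ccw s c a₂ q
  ca₂v : Ccw s c a₂ v
  cvp : Ccw s c v p
  cvq : Ccw s c v q
  ca₂a₁ : Ccw s c a₂ a₁
  a₀a₁p : Ccw s a₀ a₁ p
  a₀a₁q : Ccw s a₀ a₁ q
  a₀pq : Ccw s a₀ p q
  a₁qp : Ccw s a₁ q p
  a₁vp : Ccw s a₁ v p
  a₁vq : Ccw s a₁ v q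
  a₁a₂p : Ccw s a₁ a₂ p
  a₁a₂v : Ccw s a₁ a₂ v
  c_lt_a₁ : c.1 < a₁.1
  c_lt_a₂ : c.1 < a₂.1
  c_lt_q : c.1 < q.1
  a₀_lt_p : a₀.1 < p.1
  a₀_lt_v : a₀.1 < v.1
  a₁_lt_p : a₁.1 < p.1
  a₁_lt_v : a₁.1 < v.1

variable {s : ℝ} {a₀ a₁ a₂ b c p q v z : Pt}

namespace PairSingle

variable (h : PairSingle s c a₀ a₁ a₂ p q v)
include h

theorem convexQuad_upper (pqv : Ccw s p q v) : ConvexQuad s a₀ p q v := by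
  have qva₀ : Ccw s q v a₀ :=
    .cycle_left h.a₀pq.rotate' h.a₀a₁q.rotate' pqv.rotate h.a₁qp.rotate h.a₁vq.rotate'
  have va₀p : Ccw s v a₀ p :=
    (Ccw.cycle_right h.a₁vp.rotate' pqv h.a₀a₁p.rotate' h.a₁qp.rotate' h.a₀pq.rotate).rotate
  exact ⟨h.a₀pq, pqv, qva₀, va₀p⟩

theorem inSector_upper (pqv : Ccw s p q v) (qvb : Ccw s q v b) (cbv : Ccw s c b v)
    (a₀_lt_b : a₀.1 < b.1) : InSector s a₀ p q v b := by
  have qva₀ := (h.convexQuad_upper pqv).ccw₃₄₁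
  have va₀p := (h.convexQuad_upper pqv).ccw₄₁₂
  have a₀cv : Ccw s a₀ c v := .of_interior h.cvp.rotate' va₀p.rotate h.cpa₀.rotate'
  have vba₀ : Ccw s v b a₀ :=
    .cycle_left qva₀.rotate a₀cv.rotate' qvb.rotate h.cvq.rotate cbv.rotate'
  have ba₀p : Ccw s b a₀ p :=
    (Ccw.trans_of_lt_fst h.a₀_lt_p h.a₀_lt_v a₀_lt_b va₀p.rotate vba₀.rotate').rotate'
  exact ⟨qvb, vba₀, ba₀p⟩

theorem convexQuad_lower (qbv : Ccw s q b v) (a₂bv : Ccw s a₂ b v) (cbv : Ccw s c b v) :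
    ConvexQuad s v q a₁ a₂ := by
  have qa₁a₂ : Ccw s q a₁ a₂ :=
    (Ccw.cycle_left h.a₁qp h.ca₁q.rotate h.a₁a₂p h.ca₁p.rotate h.ca₂a₁.rotate').rotate'
  have a₂vq : Ccw s a₂ v q :=
    (Ccw.trans_right qbv.rotate' cbv.rotate' a₂bv.rotate' h.cvq.rotate h.ca₂v.rotate').rotate'
  exact ⟨h.a₁vq.rotate, qa₁a₂, h.a₁a₂v, a₂vq⟩

theorem center_lt_of_inQuad_lower (hz : InQuad s v q a₁ a₂ z) : c.1 < z.1 := by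
  obtain ⟨vqz, qa₁z, a₁a₂z, a₂vz⟩ := hz
  have a₂zc : Ccw s a₂ z c :=
    .trans_left a₂vz h.a₁a₂v.rotate h.ca₂v.rotate a₁a₂z.rotate h.ca₂a₁.rotate
  have qcz : Ccw s q c z := .trans_right h.cvq.rotate' h.a₁vq.rotate' vqz.rotate h.ca₁q.rotate' qa₁z
  exact Ccw.lt_fst_of_between a₂zc.rotate' h.ca₂q h.c_lt_a₂ qcz.rotate h.c_lt_q

theorem convexQuad_middle (pvq : Ccw s p v q) : ConvexQuad s v q p a₁ :=
  ⟨pvq.rotate, h.a₁qp.rotate, h.a₁vp.rotate', h.a₁vq⟩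

theorem center_lt_of_inQuad_middle (hz : InQuad s v q p a₁ z) : c.1 < z.1 := by
  obtain ⟨-, -, pa₁z, a₁vz⟩ := hz
  have a₁_lt_z : a₁.1 < z.1 := Ccw.lt_fst_of_between a₁vz h.a₁vp h.a₁_lt_v pa₁z.rotate h.a₁_lt_p
  exact h.c_lt_a₁.trans a₁_lt_z

end PairSingle

end PairSingle

section SinglePoint

variable {s x₀ : ℝ} {A B : Finset Pt} {b c p q v z : Pt} {a : ℕ → Pt} {i k n t : ℕ}

namespace SinglePoint

theorem isLeftmost (V : SinglePoint s B c a k v) : IsLeftmost s B c a k v where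
  mem := V.mem
  inWedge := V.inWedge
  lt_fst z hz hzk hzv := (hzv (V.eq_of_inWedge z hz hzk)).elim

theorem mirror {k' : ℕ} (V : SinglePoint s B c a k v) (hk : k + k' + 1 = t) :
    SinglePoint (-s) B c (fun k => a (t - k)) k' v where
  mem := V.mem
  inWedge := (inWedge_neg hk).2 V.inWedge
  eq_of_inWedge z hz hzk := V.eq_of_inWedge z hz ((inWedge_neg hk).1 hzk)

theorem angularPos (V : SinglePoint s B c a k v) (hk : k < t) :
    AngularPos s B c a t v (2 * k + 1) := .of_inWedge hk V.mem V.inWedge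

theorem eq_of_angularPos (V : SinglePoint s B c a (i + 1) v) (T : TwoPoints s B c a i p q)
    (hz : AngularPos s B c a t z n) (hlo : 2 * i + 1 ≤ n) (hhi : n ≤ 2 * i + 3) :
    z = p ∨ z = q ∨ z = a (i + 1) ∨ z = v := by
  obtain rfl | rfl | rfl : n = 2 * i + 1 ∨ n = 2 * (i + 1) ∨ n = 2 * (i + 1) + 1 := by lia
  · have := T.eq_or_eq z hz.mem_and_inWedge.1 hz.mem_and_inWedge.2
    tauto
  · exact .inr (.inr (.inl hz.eq_label))
  · exact .inr (.inr (.inr (V.eq_of_inWedge z hz.mem_and_inWedge.1 hz.mem_and_inWedge.2)))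

end SinglePoint

namespace StarConfig

variable (S : StarConfig s x₀ A B c a t) (hi : i + 2 < t) (ht : 4 ≤ t)
  (T : TwoPoints s B c a i p q) (V : SinglePoint s B c a (i + 1) v)
  (hb : IsLeftmost s B c a (i + 2) b)
include S hi ht T V

theorem pairSingle : PairSingle s c (a i) (a (i + 1)) (a (i + 2)) p q v := by
  have pos_p := T.angularPos_left (t := t) (by lia)
  have pos_q := T.angularPos_right (t := t) (by lia)
  have pos_v := V.angularPos (t := t) (by lia)
  have pos_a₂ : AngularPos s B c a t (a (i + 2)) (2 * (i + 2)) := .label (by lia) hi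
  have ca₂q := S.ccw_of_angularPos_lt pos_q pos_a₂ (by lia)
  have beyond := S.ccw_of_isLeftmost (by lia) T.isLeftmost T.right_mem T.right_inWedge
    (by rintro rfl; exact T.lt_fst.false)
  exact
    { cpa₀ := T.left_inWedge.ccw_upper
      ca₁p := T.left_inWedge.ccw_lower
      ca₁q := T.right_inWedge.ccw_lower
      ca₂q
      ca₂v := V.inWedge.ccw_lower
      cvp := S.ccw_of_angularPos_lt pos_p pos_v (by lia)
      cvq := S.ccw_of_angularPos_lt pos_q pos_v (by lia)
      ca₂a₁ := S.ccw_succ (i + 1) (by lia)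
      a₀a₁p := S.ccw_of_inWedge (by lia) T.left_mem T.left_inWedge
      a₀a₁q := S.ccw_of_inWedge (by lia) T.right_mem T.right_inWedge
      a₀pq := beyond.1
      a₁qp := beyond.2
      a₁vp := S.ccw_of_isLeftmost_of_above (by lia) V.isLeftmost (by simp [T.left_mem])
        T.left_inWedge.ccw_lower (S.ccw_of_angularPos_lt pos_p pos_a₂ (by lia))
      a₁vq := S.ccw_of_isLeftmost_of_above (by lia) V.isLeftmost (by simp [T.right_mem])
        T.right_inWedge.ccw_lower ca₂q
      a₁a₂p := S.ccw_succ_of_isLeftmost hi (.inr ht) T.isLeftmost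
      a₁a₂v := S.ccw_of_inWedge (by lia) V.mem V.inWedge
      c_lt_a₁ := S.lt_label (i + 1) (by lia) (by lia)
      c_lt_a₂ := S.lt_label (i + 2) (by lia) hi
      c_lt_q := S.center_lt T.right_mem
      a₀_lt_p := S.label_lt (by lia) T.left_mem
      a₀_lt_v := S.label_lt (by lia) V.mem
      a₁_lt_p := S.label_lt (by lia) T.left_mem
      a₁_lt_v := S.label_lt (by lia) V.mem }

theorem not_inQuad_upper_of_pairSingle (pqv : Ccw s p q v) :
    ∀ z ∈ B, ¬ InQuad s (a i) p q v z := by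
  intro z hz hzq
  have h := S.pairSingle hi ht T V
  obtain ⟨n, hn, hlo, hhi⟩ := S.exists_angularPos_of_inQuad_upper (by lia) T
    (V.angularPos (by lia)) (h.convexQuad_upper pqv) hz hzq
  obtain rfl | rfl | rfl | rfl := V.eq_of_angularPos T hn hlo hhi
  exacts [hzq.ccw₁₂.ne_right rfl, hzq.ccw₂₃.ne_right rfl, (S.label_lt (by lia) hz).false,
    hzq.ccw₃₄.ne_right rfl]

theorem not_inQuad_lower_of_pairSingle (pqv : Ccw s p q v) :
    ∀ z ∈ A ∪ B, ¬ InQuad s v q (a (i + 1)) (a (i + 2)) z := by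
  intro z hz hzq
  have h := S.pairSingle hi ht T V
  have pos_a₂ : AngularPos s B c a t (a (i + 2)) (2 * (i + 2)) := .label (by lia) hi
  obtain ⟨n, hn, hlo, hhi⟩ := S.exists_angularPos_of_inQuad (lo := 2 * i + 1) (hi := 2 * (i + 2))
    (V.angularPos (by lia)) (T.angularPos_right (by lia)) (.label (by lia) (by lia)) pos_a₂
    (by lia) (by lia) hz (h.center_lt_of_inQuad_lower hzq) hzq
  obtain rfl | hne := eq_or_ne n (2 * (i + 2))
  · exact hzq.ccw₃₄.ne_right hn.eq_label.symm
  obtain rfl | rfl | rfl | rfl := V.eq_of_angularPos T hn hlo (by lia)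
  exacts [hzq.ccw₁₂.asymm pqv.rotate.rotate, hzq.ccw₁₂.ne_right rfl, hzq.ccw₂₃.ne_right rfl,
    hzq.ccw₁₂.ne_outer rfl]

include hb in
theorem ccw_left_single_right : Ccw s p v q := by
  have h := S.pairSingle hi ht T V
  have hpB : p ∈ A ∪ B := by simp [T.left_mem]
  have hqB : q ∈ A ∪ B := by simp [T.right_mem]
  have hvB : v ∈ A ∪ B := by simp [V.mem]
  have hbB : b ∈ A ∪ B := by simp [hb.mem]
  have pos_q := T.angularPos_right (t := t) (by lia)
  have pos_v := V.angularPos (t := t) (by lia)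
  have pos_b := AngularPos.of_inWedge (t := t) (by lia) hb.mem hb.inWedge
  have cbv := S.ccw_of_angularPos_lt pos_v pos_b (by lia)
  have cbq := S.ccw_of_angularPos_lt pos_q pos_b (by lia)
  refine (S.ccw_or_ccw p hpB v hvB q hqB h.cvp.ne_right.symm h.a₀pq.ne_right
    h.cvq.ne_right).resolve_right fun pqv => ?_
  obtain qvb | qbv := S.ccw_or_ccw q hqB v hvB b hbB h.cvq.ne_right.symm cbq.ne_right.symm
    cbv.ne_right.symm
  · exact S.not_inSector_beyond_y₃u (S.label_mem i (by lia)) T.left_mem T.right_mem V.mem hb.mem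
      (h.convexQuad_upper pqv) (S.not_inQuad_upper_of_pairSingle hi ht T V pqv)
      (h.inSector_upper pqv qvb cbv (S.label_lt (by lia) hb.mem))
  · have a₂bv := S.ccw_of_isLeftmost_of_below (by lia) V.isLeftmost hbB
      (S.ccw_of_angularPos_lt (.label (by lia) (by lia)) pos_b (by lia)) hb.inWedge.ccw_upper
    have hdiv : IsDivided A B {v, q, a (i + 1), a (i + 2)} := by
      simp [IsDivided, Finset.insert_subset_iff, T.right_mem, V.mem, S.label_mem (i + 1) (by lia),
        S.label_mem (i + 2) (by lia)]
    exact S.not_inSector hdiv (h.convexQuad_lower qbv a₂bv cbv)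
      (S.not_inQuad_lower_of_pairSingle hi ht T V pqv) b hbB
      ⟨S.ccw_of_isLeftmost_add_two hi ht hb, a₂bv, qbv.rotate⟩

theorem not_inQuad_middle_of_pairSingle : ∀ z ∈ A ∪ B, ¬ InQuad s v q p (a (i + 1)) z := by
  intro z hz hzq
  have h := S.pairSingle hi ht T V
  obtain ⟨n, hn, hlo, hhi⟩ := S.exists_angularPos_of_inQuad (lo := 2 * i + 1) (hi := 2 * i + 3)
    (V.angularPos (by lia)) (T.angularPos_right (by lia)) (T.angularPos_left (by lia))
    (.label (by lia) (by lia)) (by lia) (by lia) hz (h.center_lt_of_inQuad_middle hzq) hzq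
  obtain rfl | rfl | rfl | rfl := V.eq_of_angularPos T hn hlo hhi
  exacts [hzq.ccw₂₃.ne_right rfl, hzq.ccw₁₂.ne_right rfl, hzq.ccw₃₄.ne_right rfl,
    hzq.ccw₁₂.ne_outer rfl]

include hb in
theorem ccw_right_single_label : Ccw s q v (a (i + 2)) := by
  have h := S.pairSingle hi ht T V
  have pvq := S.ccw_left_single_right hi ht T V hb
  refine (S.ccw_or_ccw q (by simp [T.right_mem]) v (by simp [V.mem]) _
    (S.label_mem_union hi.le) h.cvq.ne_right.symm h.ca₂q.ne_right.symm
    h.ca₂v.ne_right.symm).resolve_right fun qa₂v => ?_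
  have hdiv : IsDivided A B {v, q, p, a (i + 1)} := by
    simp [IsDivided, Finset.insert_subset_iff, T.left_mem, T.right_mem, V.mem,
      S.label_mem (i + 1) (by lia)]
  exact S.not_inSector hdiv (h.convexQuad_middle pvq)
    (S.not_inQuad_middle_of_pairSingle hi ht T V) _ (S.label_mem_union hi.le)
    ⟨h.a₁a₂p.rotate', h.a₁a₂v, qa₂v.rotate⟩

end StarConfig

end SinglePoint

section PairChain

/-- The wedges strictly between the `i`-th and the `j`-th one contain the single points `b k` of
`B`, whereas these two contain the points `p₀`, `q₀` and `p₁`, `q₁`, respectively: the wedges have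
the forbidden pattern `2, 1, …, 1, 2` of sizes. -/
structure PairChain (s x₀ : ℝ) (A B : Finset Pt) (c : Pt) (a : ℕ → Pt) (t : ℕ) (b : ℕ → Pt)
    (p₀ q₀ p₁ q₁ : Pt) (i j : ℕ) : Prop extends StarConfig s x₀ A B c a t where
  add_two_le : i + 2 ≤ j
  lt : j < t
  twoPoints_left : TwoPoints s B c a i p₀ q₀
  twoPoints_right : TwoPoints s B c a j p₁ q₁
  singlePoint : ∀ k, i < k → k < j → SinglePoint s B c a k (b k)

section Orientation

variable {s : ℝ} {a₀ a₁ aₙ c l p p₀ p₁ q q₀ q₁ u v w z : Pt}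

theorem Ccw.extend_below (qul : Ccw s q u l) (cuq : Ccw s c u q) (clq : Ccw s c l q)
    (cwl : Ccw s c w l) (cwq : Ccw s c w q) (c_lt_l : c.1 < l.1)
    (l_lt_q : l.1 < q.1) (l_lt_w : l.1 < w.1) : Ccw s q u w := by
  have lwq : Ccw s l w q := .of_fst_lt_of_lt_fst l_lt_q clq.rotate l_lt_w c_lt_l cwl.rotate'
  exact .trans_left cuq.rotate' clq.rotate' cwq.rotate' qul lwq.rotate'

theorem Ccw.not_ccw_of_lt_fst (clu : Ccw s c l u) (ulz : Ccw s u l z) (cuz : Ccw s c u z)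
    (c_lt_u : c.1 < u.1) (l_lt_u : l.1 < u.1) : ¬ z.1 < u.1 := by
  intro z_lt_u
  have u_lt_c : u.1 < c.1 := Ccw.lt_fst_of_cycle l_lt_u z_lt_u clu.rotate' ulz cuz.rotate
  exact c_lt_u.asymm u_lt_c

theorem not_ccw_of_ccw_of_between (quv : Ccw s q u v) (cvq : Ccw s c v q) (cuq : Ccw s c u q)
    (ca₁q : Ccw s c a₁ q) (a₁qp : Ccw s a₁ q p) (cua₁ : Ccw s c u a₁) (a₁_lt_q : a₁.1 < q.1)
    (a₁_lt_u : a₁.1 < u.1) (c_lt_a₁ : c.1 < a₁.1) (qup : Ccw s q u p) : ¬ Ccw s v q p := by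
  intro vqp
  have qcp : Ccw s q c p := .trans_right cvq.rotate' quv vqp.rotate cuq.rotate' qup
  have qua₁ : Ccw s q u a₁ := .trans_left cuq.rotate' qcp ca₁q.rotate' qup a₁qp.rotate
  have a₁_lt_c : a₁.1 < c.1 :=
    Ccw.lt_fst_of_between ca₁q.rotate qua₁.rotate' a₁_lt_q cua₁.rotate' a₁_lt_u
  exact a₁_lt_c.asymm c_lt_a₁

theorem not_ccw_of_separates (ca₁q₀ : Ccw s c a₁ q₀) (a₁q₀p₀ : Ccw s a₁ q₀ p₀)
    (a₀p₀q₀ : Ccw s a₀ p₀ q₀) (cq₀a₀ : Ccw s c q₀ a₀) (caₙa₁ : Ccw s c aₙ a₁)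
    (cq₁aₙ : Ccw s c q₁ aₙ) (aₙp₁q₁ : Ccw s aₙ p₁ q₁) (p₁_lt_q₁ : p₁.1 < q₁.1)
    (c_lt_a₁ : c.1 < a₁.1) (c_lt_aₙ : c.1 < aₙ.1) (a₀_lt_q₁ : a₀.1 < q₁.1)
    (a₁_lt_q₁ : a₁.1 < q₁.1) (aₙ_lt_q₀ : aₙ.1 < q₀.1) (aₙ_lt_q₁ : aₙ.1 < q₁.1)
    (p₀q₀q₁ : Ccw s p₀ q₀ q₁) : ¬ Ccw s p₁ q₀ q₁ := by
  intro p₁q₀q₁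
  have c_lt_q₀ : c.1 < q₀.1 := c_lt_aₙ.trans aₙ_lt_q₀
  have caₙq₀ : Ccw s c aₙ q₀ := .trans_of_lt_fst c_lt_aₙ c_lt_a₁ c_lt_q₀ caₙa₁ ca₁q₀
  have aₙq₁q₀ : Ccw s aₙ q₁ q₀ :=
    .of_fst_lt_of_lt_fst aₙ_lt_q₀ caₙq₀.rotate aₙ_lt_q₁ c_lt_aₙ cq₁aₙ.rotate'
  have cq₁q₀ : Ccw s c q₁ q₀ := .of_interior aₙq₁q₀ caₙq₀ cq₁aₙ
  have q₁_lt_q₀ : q₁.1 < q₀.1 :=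
    Ccw.lt_fst_of_cycle aₙ_lt_q₁ p₁_lt_q₁ aₙq₁q₀.rotate aₙp₁q₁.rotate' p₁q₀q₁.rotate'
  have a₀_lt_q₀ : a₀.1 < q₀.1 := a₀_lt_q₁.trans q₁_lt_q₀
  have a₁_lt_q₀ : a₁.1 < q₀.1 := a₁_lt_q₁.trans q₁_lt_q₀
  have cq₁a₁ : Ccw s c q₁ a₁ := .trans_right cq₁q₀ caₙq₀ ca₁q₀ cq₁aₙ caₙa₁
  have q₀a₀q₁ : Ccw s q₀ a₀ q₁ :=
    .trans_of_fst_lt a₀_lt_q₀ c_lt_q₀ q₁_lt_q₀ cq₀a₀.rotate cq₁q₀.rotate'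
  have q₀cp₀ : Ccw s q₀ c p₀ :=
    .trans_left cq₀a₀.rotate q₀a₀q₁ a₀p₀q₀.rotate' cq₁q₀.rotate' p₀q₀q₁.rotate
  have q₀q₁a₁ : Ccw s q₀ q₁ a₁ :=
    .trans_left cq₁q₀.rotate' q₀cp₀ ca₁q₀.rotate' p₀q₀q₁.rotate a₁q₀p₀.rotate
  have a₁_lt_c : a₁.1 < c.1 :=
    Ccw.lt_fst_of_between ca₁q₀.rotate q₀q₁a₁.rotate' a₁_lt_q₀ cq₁a₁.rotate' a₁_lt_q₁
  exact a₁_lt_c.asymm c_lt_a₁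

end Orientation

namespace PairChain

variable {s x₀ : ℝ} {A B : Finset Pt} {c p₀ p₁ q₀ q₁ w z : Pt} {a b : ℕ → Pt} {i j k m n t : ℕ}
  (C : PairChain s x₀ A B c a t b p₀ q₀ p₁ q₁ i j)
include C

theorem mirror : PairChain (-s) x₀ A B c (fun k => a (t - k)) t (fun k => b (t - 1 - k))
    p₁ q₁ p₀ q₀ (t - 1 - j) (t - 1 - i) where
  toStarConfig := C.toStarConfig.mirror
  add_two_le := by have := C.add_two_le; have := C.lt; lia
  lt := by have := C.add_two_le; have := C.lt; lia
  twoPoints_left := C.twoPoints_right.mirror (by have := C.lt; lia)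
  twoPoints_right := C.twoPoints_left.mirror (by have := C.add_two_le; have := C.lt; lia)
  singlePoint k hik hkj := (C.singlePoint (t - 1 - k) (by lia) (by lia)).mirror (by lia)

theorem add_two_lt : i + 2 < t := C.add_two_le.trans_lt C.lt

theorem four_le : 4 ≤ t := by
  have hij := C.add_two_le
  have hj := C.lt
  by_contra! ht
  obtain rfl : i = 0 := by lia
  obtain rfl : j = 2 := by lia
  obtain ⟨z, hz, hne⟩ := Finset.exists_mem_notMem_of_card_lt_card
    (Finset.card_le_five.trans_lt C.six_le_card :
      ({p₀, q₀, b 1, p₁, q₁} : Finset Pt).card < B.card)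
  simp only [Finset.mem_insert, Finset.mem_singleton, not_or] at hne
  obtain ⟨k, hk, hzk⟩ := C.exists_inWedge z hz
  obtain rfl | rfl | rfl : k = 0 ∨ k = 1 ∨ k = 2 := by lia
  · have := C.twoPoints_left.eq_or_eq z hz hzk
    tauto
  · exact hne.2.2.1 ((C.singlePoint 1 (by lia) (by lia)).eq_of_inWedge z hz hzk)
  · have := C.twoPoints_right.eq_or_eq z hz hzk
    tauto

theorem exists_isLeftmost : ∃ v, IsLeftmost s B c a (i + 2) v := by
  obtain h | h := C.add_two_le.eq_or_lt
  · exact ⟨p₁, h ▸ C.twoPoints_right.isLeftmost⟩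
  · exact ⟨_, (C.singlePoint (i + 2) (by lia) h).isLeftmost⟩

theorem single_succ : SinglePoint s B c a (i + 1) (b (i + 1)) :=
  C.singlePoint _ (by lia) C.add_two_le

theorem pairSingle : PairSingle s c (a i) (a (i + 1)) (a (i + 2)) p₀ q₀ (b (i + 1)) :=
  C.toStarConfig.pairSingle C.add_two_lt C.four_le C.twoPoints_left C.single_succ

theorem angularPos_left : AngularPos s B c a t p₀ (2 * i + 1) :=
  C.twoPoints_left.angularPos_left (by have := C.add_two_lt; lia)

theorem angularPos_right : AngularPos s B c a t q₀ (2 * i + 1) :=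
  C.twoPoints_left.angularPos_right (by have := C.add_two_lt; lia)

theorem angularPos_single (hik : i < k) (hkj : k < j) : AngularPos s B c a t (b k) (2 * k + 1) :=
  (C.singlePoint k hik hkj).angularPos (hkj.trans C.lt)

theorem angularPos_label (hik : i < k) (hkj : k ≤ j) : AngularPos s B c a t (a k) (2 * k) :=
  .label (by lia) (hkj.trans_lt C.lt)

theorem ccw_right_of_lt (hik : i < k) (hkj : k < j) (hk : Ccw s q₀ (b k) (a (k + 1))) (hw : w ∈ B)
    (hn : AngularPos s B c a t w n) (hkn : 2 * (k + 1) < n) : Ccw s q₀ (b k) w := by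
  have pos_q₀ := C.angularPos_right
  have pos_l := C.angularPos_label (k := k + 1) (by lia) hkj
  have hjt := C.lt
  exact hk.extend_below (C.ccw_of_angularPos_lt pos_q₀ (C.angularPos_single hik hkj) (by lia))
    (C.ccw_of_angularPos_lt pos_q₀ pos_l (by lia)) (C.ccw_of_angularPos_lt pos_l hn hkn)
    (C.ccw_of_angularPos_lt pos_q₀ hn (by lia)) (C.lt_label _ (by lia) (by lia))
    (C.label_lt (by lia) C.twoPoints_left.right_mem) (C.label_lt (by lia) hw)

section Step

variable (hik : i < k) (hkj : k + 1 < j)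
  (ih : ∀ m, i < m → m ≤ k → Ccw s q₀ (b m) (a (m + 1)))
include hik hkj ih

theorem convexQuad_single : ConvexQuad s (b (k + 1)) q₀ (b k) (a (k + 1)) := by
  have V := C.singlePoint (k + 1) (by lia) hkj
  have hjt := C.lt
  have pos_u := C.angularPos_single hik (by lia)
  have pos_v := C.angularPos_single (k := k + 1) (by lia) hkj
  have pos_l := C.angularPos_label (k := k + 1) (by lia) (by lia)
  have pos_r := C.angularPos_label (k := k + 2) (by lia) (by lia)
  have beyond {z n} (hz : z ∈ B) (hn : AngularPos s B c a t z n) (hnk : n < 2 * (k + 1)) :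
      Ccw s (a (k + 1)) (b (k + 1)) z :=
    C.ccw_of_isLeftmost_of_above (by lia) V.isLeftmost (by simp [hz])
      (C.ccw_of_angularPos_lt hn pos_l hnk) (C.ccw_of_angularPos_lt hn pos_r (by lia))
  exact ⟨(C.ccw_right_of_lt hik (by lia) (ih k hik le_rfl) V.mem pos_v (by lia)).rotate',
    ih k hik le_rfl, (beyond (C.singlePoint k hik (by lia)).mem pos_u (by lia)).rotate',
    beyond C.twoPoints_left.right_mem C.angularPos_right (by lia)⟩

omit ih in
theorem not_inQuad_label_of_single (him : i < m) (hmk : m ≤ k + 1) :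
    ¬ InQuad s (b (k + 1)) q₀ (b k) (a (k + 1)) (a m) := by
  rintro ⟨-, -, ula, -⟩
  obtain rfl | hmk := hmk.eq_or_lt
  · exact ula.ne_right rfl
  have hjt := C.lt
  have U := C.singlePoint k hik (by lia)
  have pos_u := C.angularPos_single hik (by lia)
  have pos_l := C.angularPos_label (k := k + 1) (by lia) (by lia)
  have pos_a := C.angularPos_label (k := m) him (by lia)
  exact (C.ccw_of_angularPos_lt pos_u pos_l (by lia)).not_ccw_of_lt_fst ula
    (C.ccw_of_angularPos_lt pos_a pos_u (by lia)) (C.center_lt U.mem) (C.label_lt (by lia) U.mem)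
    (C.label_lt (by lia) U.mem)

theorem not_inQuad_left_of_single : ¬ InQuad s (b (k + 1)) q₀ (b k) (a (k + 1)) p₀ := by
  rintro ⟨vqp, qup, -, -⟩
  have h := C.pairSingle
  have hjt := C.lt
  have pos_q₀ := C.angularPos_right
  have pos_u := C.angularPos_single hik (by lia)
  have pos_v := C.angularPos_single (k := k + 1) (by lia) hkj
  have pos_a₁ := C.angularPos_label (k := i + 1) (by lia) (by lia)
  have quad := C.convexQuad_single hik hkj ih
  exact not_ccw_of_ccw_of_between quad.ccw₁₂₃.rotate (C.ccw_of_angularPos_lt pos_q₀ pos_v (by lia))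
    (C.ccw_of_angularPos_lt pos_q₀ pos_u (by lia)) h.ca₁q h.a₁qp
    (C.ccw_of_angularPos_lt pos_a₁ pos_u (by lia))
    (C.label_lt (by lia) C.twoPoints_left.right_mem)
    (C.label_lt (by lia) (C.singlePoint k hik (by lia)).mem) h.c_lt_a₁ qup vqp

theorem not_inQuad_single_of_single (him : i < m) (hmk : m ≤ k + 1) :
    ¬ InQuad s (b (k + 1)) q₀ (b k) (a (k + 1)) (b m) := by
  intro hzq
  obtain rfl | hmk := hmk.eq_or_lt
  · exact hzq.ccw₁₂.ne_outer rfl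
  obtain rfl | hmk := (Nat.le_of_lt_succ hmk).eq_or_lt
  · exact hzq.ccw₂₃.ne_right rfl
  exact hzq.ccw₂₃.asymm (C.ccw_right_of_lt him (by lia) (ih m him (by lia))
    (C.singlePoint k hik (by lia)).mem (C.angularPos_single hik (by lia)) (by lia))

theorem center_lt_of_inQuad_single (hzq : InQuad s (b (k + 1)) q₀ (b k) (a (k + 1)) z) :
    c.1 < z.1 := by
  obtain ⟨-, -, ulz, lvz⟩ := hzq
  have hjt := C.lt
  have U := C.singlePoint k hik (by lia)
  have V := C.singlePoint (k + 1) (by lia) hkj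
  exact (C.lt_label (k + 1) (by lia) (by lia)).trans (Ccw.lt_fst_of_between lvz
    (C.convexQuad_single hik hkj ih).ccw₃₄₁.rotate
    (C.label_lt (by lia) V.mem) ulz.rotate (C.label_lt (by lia) U.mem))

theorem not_inQuad_of_single :
    ∀ z ∈ A ∪ B, ¬ InQuad s (b (k + 1)) q₀ (b k) (a (k + 1)) z := by
  intro z hz hzq
  obtain ⟨n, hn, hlo, hhi⟩ := C.exists_angularPos_of_inQuad (lo := 2 * i + 1)
    (hi := 2 * (k + 1) + 1) (C.angularPos_single (by lia) hkj) C.angularPos_right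
    (C.angularPos_single hik (by lia)) (C.angularPos_label (by lia) hkj.le) (by lia) (by lia) hz
    (C.center_lt_of_inQuad_single hik hkj ih hzq) hzq
  obtain ⟨m, rfl | rfl⟩ := n.even_or_odd'
  · exact C.not_inQuad_label_of_single hik hkj (m := m) (by lia) (by lia) (hn.eq_label ▸ hzq)
  obtain ⟨hzB, hzm⟩ := hn.mem_and_inWedge
  obtain rfl | him : m = i ∨ i < m := by lia
  · obtain rfl | rfl := C.twoPoints_left.eq_or_eq z hzB hzm
    exacts [C.not_inQuad_left_of_single hik hkj ih hzq, hzq.ccw₁₂.ne_right rfl]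
  · obtain rfl := (C.singlePoint m him (by lia)).eq_of_inWedge z hzB hzm
    exact C.not_inQuad_single_of_single hik hkj ih him (by lia) hzq

theorem ccw_right_single_succ : Ccw s q₀ (b (k + 1)) (a (k + 2)) := by
  have U := C.singlePoint k hik (by lia)
  have V := C.singlePoint (k + 1) (by lia) hkj
  have hjt := C.lt
  have pos_r := C.angularPos_label (k := k + 2) (by lia) (by lia)
  have pos_v := C.angularPos_single (k := k + 1) (by lia) hkj
  have crq := C.ccw_of_angularPos_lt C.angularPos_right pos_r (by lia)
  have crv := C.ccw_of_angularPos_lt pos_v pos_r (by lia)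
  have quad := C.convexQuad_single hik hkj ih
  refine (C.ccw_or_ccw q₀ (by simp [C.twoPoints_left.right_mem]) _ (by simp [V.mem]) _
    (C.label_mem_union (by lia)) quad.ccw₁₂₃.ne_left.symm
    crq.ne_right.symm crv.ne_right.symm).resolve_right fun qrv => ?_
  have ulr := C.ccw_of_isLeftmost_of_below (by lia) U.isLeftmost (C.label_mem_union (by lia))
    (z := a (k + 2)) (C.ccw_label (by lia) (by lia) (by lia)) (C.ccw_succ (k + 1) (by lia))
  have hdiv : IsDivided A B {b (k + 1), q₀, b k, a (k + 1)} := by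
    simp [IsDivided, Finset.insert_subset_iff, C.twoPoints_left.right_mem, U.mem, V.mem,
      C.label_mem (k + 1) (by lia)]
  exact C.not_inSector hdiv quad (C.not_inQuad_of_single hik hkj ih) _
    (C.label_mem_union (k := k + 2) (by lia))
    ⟨ulr.rotate', C.ccw_of_inWedge (by lia) V.mem V.inWedge, qrv.rotate⟩

end Step

theorem ccw_right_single_label (hik : i < k) (hkj : k < j) : Ccw s q₀ (b k) (a (k + 1)) := by
  induction k using Nat.strong_induction_on with
  | _ k ih =>
    obtain rfl | hik' := (Nat.succ_le_of_lt hik).eq_or_lt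
    · obtain ⟨v, hv⟩ := C.exists_isLeftmost
      exact C.toStarConfig.ccw_right_single_label C.add_two_lt C.four_le C.twoPoints_left
        C.single_succ hv
    · obtain ⟨k, rfl⟩ := Nat.exists_eq_add_of_lt (Nat.zero_lt_of_lt hik)
      rw [zero_add] at *
      exact C.ccw_right_single_succ (by lia) hkj fun m him hmk => ih m (by lia) him (by lia)

theorem ccw_label_single_right (hik : i < k) (hkj : k < j) : Ccw s (a k) (b k) q₁ := by
  have hjt := C.lt
  have h := C.mirror.ccw_right_single_label (k := t - 1 - k) (by lia) (by lia)
  rw [show t - 1 - (t - 1 - k) = k by lia, show t - (t - 1 - k + 1) = k by lia, ccw_neg] at h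
  exact h.rotate

theorem not_ccw_left_right_right : ¬ Ccw s p₀ q₁ q₀ := by
  intro p₀q₁q₀
  have hjt := C.lt
  have hij := C.add_two_le
  have T := C.twoPoints_left
  obtain ⟨v, hv⟩ := C.exists_isLeftmost
  have pvq := C.ccw_left_single_right C.add_two_lt C.four_le T C.single_succ hv
  have hdiv : IsDivided A B {q₀, p₀, a (i + 1), b (i + 1)} := by
    simp [IsDivided, Finset.insert_subset_iff, T.left_mem, T.right_mem, C.single_succ.mem,
      C.label_mem (i + 1) (by lia)]
  refine C.not_inSector hdiv (C.pairSingle.convexQuad_middle pvq).rotate (fun z hz hzq => ?_) q₁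
    (by simp [C.twoPoints_right.right_mem])
    ⟨C.ccw_label_single_right (by lia) hij, ?_, p₀q₁q₀.rotate⟩
  · exact C.not_inQuad_middle_of_pairSingle C.add_two_lt C.four_le T C.single_succ z hz
      hzq.rotate.rotate.rotate
  · exact (C.ccw_right_of_lt (k := i + 1) (by lia) hij
      (C.ccw_right_single_label (by lia) hij) C.twoPoints_right.right_mem
      (C.twoPoints_right.angularPos_right hjt) (by lia)).rotate

/-- By `not_ccw_left_right_right` and its mirror image, each of the lines `p₀ q₀` and `p₁ q₁`
separates the other pair from `c`. -/
theorem false : False := by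
  have hjt := C.lt
  have hij := C.add_two_le
  have T₀ := C.twoPoints_left
  have T₁ := C.twoPoints_right
  have h := C.pairSingle
  have cq₁q₀ := C.ccw_of_angularPos_lt C.angularPos_right (T₁.angularPos_right hjt) (by lia)
  have cq₁p₀ := C.ccw_of_angularPos_lt C.angularPos_left (T₁.angularPos_right hjt) (by lia)
  have cp₁q₀ := C.ccw_of_angularPos_lt C.angularPos_right (T₁.angularPos_left hjt) (by lia)
  have beyond₁ := C.ccw_of_isLeftmost hjt T₁.isLeftmost T₁.right_mem T₁.right_inWedge
    (by rintro rfl; exact T₁.lt_fst.false)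
  have hq₀ : q₀ ∈ A ∪ B := by simp [T₀.right_mem]
  have hq₁ : q₁ ∈ A ∪ B := by simp [T₁.right_mem]
  have p₀q₀q₁ := (C.ccw_or_ccw p₀ (by simp [T₀.left_mem]) q₀ hq₀ q₁ hq₁ h.a₀pq.ne_right
    cq₁p₀.ne_right.symm cq₁q₀.ne_right.symm).resolve_right C.not_ccw_left_right_right
  obtain p₁q₀q₁ | p₁q₁q₀ := C.ccw_or_ccw p₁ (by simp [T₁.left_mem]) q₀ hq₀ q₁ hq₁ cp₁q₀.ne_right
    beyond₁.1.ne_right cq₁q₀.ne_right.symm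
  · exact not_ccw_of_separates h.ca₁q h.a₁qp h.a₀pq
      (T₀.right_inWedge.ccw_upper) (C.ccw_label (by lia) (by lia) hjt) T₁.right_inWedge.ccw_upper
      beyond₁.1 T₁.lt_fst h.c_lt_a₁ (C.lt_label j (by lia) hjt)
      (C.label_lt (by lia) T₁.right_mem) (C.label_lt (by lia) T₁.right_mem)
      (C.label_lt hjt.le T₀.right_mem) (C.label_lt hjt.le T₁.right_mem) p₀q₀q₁ p₁q₀q₁
  · exact C.mirror.not_ccw_left_right_right (ccw_neg.2 p₁q₁q₀)

end PairChain

end PairChain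

/-! ### Counting points in wedges -/

/-- The points of `B` in the `k`-th wedge at `c`. -/
def wedgePoints (s : ℝ) (B : Finset Pt) (c : Pt) (a : ℕ → Pt) (k : ℕ) : Set Pt :=
  {z | z ∈ B ∧ InWedge s c a k z}

section Count

variable {s x₀ : ℝ} {A B : Finset Pt} {c : Pt} {a : ℕ → Pt} {i j k t : ℕ}

theorem Config.exists_twoPoints (C : Config s x₀ A B) (h : (wedgePoints s B c a k).ncard = 2) :
    ∃ p q, TwoPoints s B c a k p q := by
  obtain ⟨p, q, hpq, hset⟩ := Set.ncard_eq_two.1 h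
  have hiff (z : Pt) : z ∈ B ∧ InWedge s c a k z ↔ z = p ∨ z = q := Set.ext_iff.1 hset z
  obtain ⟨hp, hpk⟩ := (hiff p).2 (.inl rfl)
  obtain ⟨hq, hqk⟩ := (hiff q).2 (.inr rfl)
  have hfst : p.1 ≠ q.1 := fun h =>
    hpq (C.injOn_fst (Finset.mem_union_right A hp) (Finset.mem_union_right A hq) h)
  rcases hfst.lt_or_gt with hlt | hlt
  · exact ⟨p, q, hp, hq, hpk, hqk, hlt, fun z hz hzk => (hiff z).1 ⟨hz, hzk⟩⟩
  · exact ⟨q, p, hq, hp, hqk, hpk, hlt, fun z hz hzk => ((hiff z).1 ⟨hz, hzk⟩).symm⟩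

theorem exists_singlePoint (h : (wedgePoints s B c a k).ncard = 1) :
    ∃ v, SinglePoint s B c a k v := by
  obtain ⟨v, hset⟩ := Set.ncard_eq_one.1 h
  have hiff (z : Pt) : z ∈ B ∧ InWedge s c a k z ↔ z = v := Set.ext_iff.1 hset z
  obtain ⟨hv, hvk⟩ := (hiff v).2 rfl
  exact ⟨v, hv, hvk, fun z hz hzk => (hiff z).1 ⟨hz, hzk⟩⟩

theorem StarConfig.exists_ncard_ne_one (S : StarConfig s x₀ A B c a t) (hij : i < j) (hj : j < t)
    (h₀ : (wedgePoints s B c a i).ncard = 2) (h₁ : (wedgePoints s B c a j).ncard = 2) :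
    ∃ k, i < k ∧ k < j ∧ (wedgePoints s B c a k).ncard ≠ 1 := by
  by_contra! hones
  obtain ⟨p₀, q₀, T₀⟩ := S.exists_twoPoints h₀
  obtain ⟨p₁, q₁, T₁⟩ := S.exists_twoPoints h₁
  obtain rfl | hlt := Nat.eq_or_lt_of_le hij
  · exact S.not_twoPoints hj T₀ T₁
  · have hsingle (k : ℕ) : ∃ v, i < k → k < j → SinglePoint s B c a k v := by
      by_cases hk : i < k ∧ k < j
      · obtain ⟨v, hv⟩ := exists_singlePoint (hones k hk.1 hk.2)
        exact ⟨v, fun _ _ => hv⟩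
      · exact ⟨c, fun hik hkj => absurd ⟨hik, hkj⟩ hk⟩
    choose b hb using hsingle
    exact PairChain.false ⟨S, hlt, hj, T₀, T₁, hb⟩

end Count

section Sum

variable {f : ℕ → ℕ} {i j : ℕ}

/-- The equality case is what makes the induction on `j` work. -/
theorem sum_Icc_le_and_exists_two_of_eq (hij : i ≤ j) (hf : ∀ k ∈ Finset.Icc i j, f k ≤ 2)
    (hne : ∀ l m, i ≤ l → l < m → m ≤ j → f l = 2 → f m = 2 → ∃ k, l < k ∧ k < m ∧ f k ≠ 1) :
    ∑ k ∈ Finset.Icc i j, f k ≤ j - i + 2 ∧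
      (∑ k ∈ Finset.Icc i j, f k = j - i + 2 →
        ∃ l, i ≤ l ∧ l ≤ j ∧ f l = 2 ∧ ∀ k, l < k → k ≤ j → f k = 1) := by
  simp only [Finset.mem_Icc] at hf
  induction j, hij using Nat.le_induction with
  | base =>
    have := hf i ⟨le_rfl, le_rfl⟩
    simp only [Finset.Icc_self, Finset.sum_singleton]
    exact ⟨by lia, fun h => ⟨i, le_rfl, le_rfl, by lia, by lia⟩⟩
  | succ j hij ih =>
    obtain ⟨hle, hexists⟩ := ih (fun l m hl hlm hm => hne l m hl hlm (by lia))
      fun k hk => hf k (by lia)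
    have hlast := hf (j + 1) ⟨by lia, le_rfl⟩
    rw [Finset.sum_Icc_succ_top (by lia)]
    by_cases heq : ∑ k ∈ Finset.Icc i j, f k = j - i + 2
    · obtain ⟨l, hil, hlj, hl, hones⟩ := hexists heq
      have hlast_ne : f (j + 1) ≠ 2 := fun h => by
        obtain ⟨k, hlk, hkj, hk⟩ := hne l (j + 1) hil (by lia) le_rfl hl h
        exact hk (hones k hlk (by lia))
      refine ⟨by lia, fun h => ⟨l, hil, by lia, hl, fun k hlk hkj => ?_⟩⟩
      obtain rfl | hkj := Nat.le_succ_iff_eq_or_le.1 hkj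
      · lia
      · exact hones k hlk hkj
    · exact ⟨by lia, fun h => ⟨j + 1, by lia, le_rfl, by lia, by lia⟩⟩

end Sum

/-! ### Holes and the wedges at `a*` -/

section Convexity

theorem exists_lt_of_mem_interior_convexHull {E : Type*} [NormedAddCommGroup E]
    [NormedSpace ℝ E] {S : Set E} {x : E} (hx : x ∈ interior (convexHull ℝ S)) {f : E →L[ℝ] ℝ}
    (hf : f ≠ 0) : ∃ y ∈ S, f x < f y := by
  by_contra! hle
  have hhull : convexHull ℝ S ⊆ {y | f y ≤ f x} :=
    convexHull_min hle (convex_halfSpace_le f.isLinear (f x))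
  have hmax : IsLocalMax f x := by
    filter_upwards [mem_interior_iff_mem_nhds.1 hx] with y hy using hhull hy
  exact hf (hmax.hasFDerivAt_eq_zero f.hasFDerivAt)

variable {A : Set Pt} {c p q r z : Pt}

theorem exists_ccw_of_mem_interior_convexHull (hc : c ∈ interior (convexHull ℝ A))
    (hpc : p.1 ≠ c.1) : ∃ q ∈ A, Ccw 1 c q p := by
  let f : Pt →L[ℝ] ℝ :=
    (p.2 - c.2) • ContinuousLinearMap.fst ℝ ℝ ℝ - (p.1 - c.1) • ContinuousLinearMap.snd ℝ ℝ ℝ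
  have hf (y : Pt) : f y = (p.2 - c.2) * y.1 - (p.1 - c.1) * y.2 := by simp [f]
  have hf₀ : f ≠ 0 := fun h => sub_ne_zero.2 hpc.symm (by simpa [h] using (hf (0, 1)).symm)
  obtain ⟨q, hq, hlt⟩ := exists_lt_of_mem_interior_convexHull hc hf₀
  refine ⟨q, hq, ?_⟩
  rw [Ccw, orient_eq]
  linear_combination hlt + hf q - hf c

theorem exists_fst_lt_of_mem_interior_convexHull (hc : c ∈ interior (convexHull ℝ A)) :
    ∃ q ∈ A, q.1 < c.1 := by
  have hf : -ContinuousLinearMap.fst ℝ ℝ ℝ ≠ 0 := fun h => by simpa using congr($h (1, 0))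
  obtain ⟨q, hq, hlt⟩ := exists_lt_of_mem_interior_convexHull hc hf
  exact ⟨q, hq, neg_lt_neg_iff.1 hlt⟩

theorem exists_lt_fst_of_mem_interior_convexHull (hc : c ∈ interior (convexHull ℝ A)) :
    ∃ q ∈ A, c.1 < q.1 := by
  have hf : ContinuousLinearMap.fst ℝ ℝ ℝ ≠ 0 := fun h => by simpa using congr($h (1, 0))
  exact exists_lt_of_mem_interior_convexHull hc hf

theorem convex_setOf_orient_nonneg (s : ℝ) (p q : Pt) : Convex ℝ {z | 0 ≤ orient s p q z} := by
  intro x hx y hy a b ha hb hab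
  have hxy : orient s p q (a • x + b • y) = a * orient s p q x + b * orient s p q y := by
    simp only [orient_eq, Prod.fst_add, Prod.snd_add, Prod.smul_fst, Prod.smul_snd, smul_eq_mul]
    linear_combination s * ((q.1 - p.1) * p.2 - (q.2 - p.2) * p.1) * hab
  exact hxy.ge.trans' <| add_nonneg (mul_nonneg ha hx) (mul_nonneg hb hy)

theorem continuous_orient (s : ℝ) (p q : Pt) : Continuous (orient s p q) := by
  unfold orient cross2
  fun_prop

theorem InTriangle.mem_convexHull (h : InTriangle 1 p q r z) (hp : p ∈ A) (hq : q ∈ A)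
    (hr : r ∈ A) : z ∈ convexHull ℝ A := by
  obtain ⟨pqz, qrz, rpz⟩ := h
  have pqr : Ccw 1 p q r := by
    rw [Ccw, orient_eq_add_add 1 p q r z]; exact add_pos (add_pos pqz qrz) rpz
  have hsum : orient 1 q r z + orient 1 r p z + orient 1 p q z = orient 1 p q r := by
    rw [orient_eq_add_add 1 p q r z]; ring
  have hz : (orient 1 p q r)⁻¹ • (orient 1 q r z • p + orient 1 r p z • q + orient 1 p q z • r)
      = z := by
    rw [inv_smul_eq_iff₀ pqr.ne']
    ext <;> simp only [orient_eq, Prod.fst_add, Prod.snd_add, Prod.smul_fst, Prod.smul_snd,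
      smul_eq_mul] <;> ring
  have hmem := Finset.univ.centerMass_mem_convexHull (R := ℝ) (s := A)
    (w := ![orient 1 q r z, orient 1 r p z, orient 1 p q z]) (z := ![p, q, r])
    (by simpa [Fin.forall_fin_succ] using ⟨qrz.le, rpz.le, pqz.le⟩)
    (by simpa [Fin.sum_univ_three, hsum] using show 0 < orient 1 p q r from pqr)
    (by simpa [Fin.forall_fin_succ] using ⟨hp, hq, hr⟩)
  simpa [Finset.centerMass, Fin.sum_univ_three, hsum, hz] using hmem

theorem InTriangle.mem_interior_convexHull (h : InTriangle 1 p q r z) (hp : p ∈ A) (hq : q ∈ A)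
    (hr : r ∈ A) : z ∈ interior (convexHull ℝ A) := by
  have hopen (u v : Pt) : IsOpen {y | Ccw 1 u v y} :=
    isOpen_lt continuous_const (continuous_orient 1 u v)
  exact interior_maximal (fun y hy => InTriangle.mem_convexHull hy hp hq hr)
    ((hopen p q).inter ((hopen q r).inter (hopen r p))) h

theorem collinear_of_orient_eq_zero (h : orient 1 p q r = 0) (hpq : p.1 ≠ q.1) :
    Collinear ℝ {p, q, r} := by
  have hne : q.1 - p.1 ≠ 0 := sub_ne_zero.2 hpq.symm
  rw [orient_eq, one_mul, sub_eq_zero] at h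
  refine (collinear_iff_of_mem (p₀ := p) (by simp)).2 ⟨q - p, ?_⟩
  rintro z (rfl | rfl | rfl)
  · exact ⟨0, by simp⟩
  · exact ⟨1, by simp⟩
  · refine ⟨(z.1 - p.1) / (q.1 - p.1), ?_⟩
    ext
    · simp [hne]
    · simp only [vadd_eq_add, Prod.snd_add, Prod.smul_snd, Prod.snd_sub, smul_eq_mul]
      field_simp
      linear_combination h

theorem ccw_or_ccw_of_not_collinear (h : ¬ Collinear ℝ {p, q, r}) (hpq : p.1 ≠ q.1) :
    Ccw 1 p q r ∨ Ccw 1 p r q := by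
  rw [Ccw, Ccw, orient_swap 1 p q r, neg_pos]
  exact (show orient 1 p q r ≠ 0 from fun h₀ => h (collinear_of_orient_eq_zero h₀ hpq)).gt_or_lt

end Convexity

/-- The points `v 0, …, v 4` are the vertices of a convex pentagon in cyclic order. -/
def ConvexPentagon (s : ℝ) (v : Fin 5 → Pt) : Prop :=
  ∀ i, Ccw s (v i) (v (i + 1)) (v (i + 2)) ∧ Ccw s (v i) (v (i + 1)) (v (i + 3))

namespace ConvexPentagon

variable {s : ℝ} {v : Fin 5 → Pt} {z : Pt}

theorem ccw_add_four (h : ConvexPentagon s v) (i : Fin 5) :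
    Ccw s (v i) (v (i + 1)) (v (i + 4)) := by
  have hi := (h (i + 4)).1
  rw [show i + 4 + 1 = i by lia, show i + 4 + 2 = i + 1 by lia] at hi
  exact hi.rotate

theorem ccw_left (h : ConvexPentagon s v) (i : Fin 5) :
    Ccw s (v (i + 1)) (v (i + 2)) (v (i + 4)) := by
  have hi := (h (i + 1)).2
  rwa [show i + 1 + 1 = i + 2 by lia, show i + 1 + 3 = i + 4 by lia] at hi

theorem ccw_right (h : ConvexPentagon s v) (i : Fin 5) :
    Ccw s (v (i + 1)) (v (i + 3)) (v (i + 4)) := by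
  have hi := (h (i + 3)).2
  rw [show i + 3 + 1 = i + 4 by lia, show i + 3 + 3 = i + 1 by lia] at hi
  exact hi.rotate'

theorem injective (h : ConvexPentagon s v) : Function.Injective v := by
  intro i j hij
  obtain ⟨d, rfl⟩ : ∃ d, j = i + d := ⟨j - i, by lia⟩
  have hne := And.intro (h i).1.ne_left <| And.intro (h i).1.ne_outer <|
    And.intro (h i).2.ne_outer (h.ccw_add_four i).ne_outer
  fin_cases d <;> simp_all

theorem orient_nonneg (h : ConvexPentagon s v) (i : Fin 5) (hz : z ∈ convexHull ℝ (Set.range v)) :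
    0 ≤ orient s (v i) (v (i + 1)) z := by
  refine convexHull_min ?_ (convex_setOf_orient_nonneg s (v i) (v (i + 1))) hz
  rintro _ ⟨j, rfl⟩
  obtain ⟨d, rfl⟩ : ∃ d, j = i + d := ⟨j - i, by lia⟩
  fin_cases d
  · simp [orient_eq]
  · exact (orient_self s _ _).ge
  · exact (h i).1.le
  · exact (h i).2.le
  · exact (h.ccw_add_four i).le

theorem convexPos (h : ConvexPentagon s v) : ConvexPos (Set.range v) := by
  rintro _ ⟨i, rfl⟩ hmem
  have hle : 0 ≤ orient s (v (i + 4)) (v (i + 1)) (v i) := by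
    refine convexHull_min ?_ (convex_setOf_orient_nonneg s (v (i + 4)) (v (i + 1))) hmem
    rintro _ ⟨⟨j, rfl⟩, hj⟩
    obtain ⟨d, rfl⟩ : ∃ d, j = i + d := ⟨j - i, by lia⟩
    fin_cases d
    · simp at hj
    · exact (orient_self s _ _).ge
    · exact (h.ccw_left i).rotate'.le
    · exact (h.ccw_right i).rotate'.le
    · simp [orient_eq]
  rw [orient_swap, Left.nonneg_neg_iff] at hle
  exact hle.not_gt (h.ccw_add_four i).rotate'

end ConvexPentagon

theorem InSector.convexPentagon {s : ℝ} {v₁ v₂ v₃ v₄ w : Pt} (hw : InSector s v₁ v₂ v₃ v₄ w)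
    (hquad : ConvexQuad s v₁ v₂ v₃ v₄) : ConvexPentagon s ![v₁, v₂, v₃, v₄, w] := by
  obtain ⟨v₁v₂v₃, v₂v₃v₄, v₃v₄v₁, v₄v₁v₂⟩ := hquad
  obtain ⟨v₃v₄w, v₄wv₁, wv₁v₂⟩ := hw
  have v₄wv₂ : Ccw s v₄ w v₂ := .trans_right v₃v₄w.rotate v₃v₄v₁.rotate v₂v₃v₄.rotate' v₄wv₁ v₄v₁v₂
  have v₂v₃w : Ccw s v₂ v₃ w :=
    .trans_right v₁v₂v₃.rotate v₄v₁v₂.rotate' wv₁v₂.rotate' v₂v₃v₄ v₄wv₂.rotate'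
  have wv₁v₃ : Ccw s w v₁ v₃ :=
    (Ccw.trans_left v₁v₂v₃ v₄v₁v₂.rotate wv₁v₂.rotate v₃v₄v₁.rotate' v₄wv₁.rotate').rotate'
  intro i
  fin_cases i
  exacts [⟨v₁v₂v₃, v₄v₁v₂.rotate⟩, ⟨v₂v₃v₄, v₂v₃w⟩, ⟨v₃v₄w, v₃v₄v₁⟩, ⟨v₄wv₁, v₄wv₂⟩, ⟨wv₁v₂, wv₁v₃⟩]

section NotDividedFiveHole

variable {x₀ : ℝ} {A B : Finset Pt}

theorem exists_inside_of_not_dividedFiveHole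
    (hccw : ∀ p ∈ A ∪ B, ∀ q ∈ A ∪ B, ∀ r ∈ A ∪ B, p ≠ q → p ≠ r → q ≠ r →
      Ccw 1 p q r ∨ Ccw 1 p r q)
    (hhole : ¬ ∃ H, DividedFiveHole A B H) {v : Fin 5 → Pt} (hv : ConvexPentagon 1 v)
    (hdiv : IsDivided A B (Finset.univ.image v)) :
    ∃ z ∈ A ∪ B, ∀ i, Ccw 1 (v i) (v (i + 1)) z := by
  by_contra! hout
  obtain ⟨hsub, hA, hB⟩ := hdiv
  have hcoe : (↑(Finset.univ.image v) : Set Pt) = Set.range v := by simp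
  refine hhole ⟨Finset.univ.image v, ⟨hsub, ?_, hcoe ▸ hv.convexPos, fun z hz hzv hmem => ?_⟩,
    hA, hB⟩
  · rw [Finset.card_image_of_injective _ hv.injective, Finset.card_fin]
  · obtain ⟨i, hi⟩ := hout z hz
    have hvmem (j : Fin 5) : v j ∈ Finset.univ.image v := Finset.mem_image_of_mem v (by simp)
    have hne (j : Fin 5) : v j ≠ z := fun h => hzv (h ▸ hvmem j)
    have hzi : Ccw 1 (v i) z (v (i + 1)) :=
      (hccw _ (hsub (hvmem i)) _ (hsub (hvmem (i + 1))) z hz (hv i).1.ne_left (hne i)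
        (hne (i + 1))).resolve_left hi
    rw [Ccw, orient_swap, neg_pos] at hzi
    exact (hv.orient_nonneg i (hcoe ▸ hmem)).not_gt hzi

theorem Config.of_not_dividedFiveHole (hA : ∀ p ∈ A, p.1 < x₀) (hB : ∀ p ∈ B, x₀ < p.1)
    (hgen : GenPos ↑(A ∪ B)) (hx : Set.InjOn Prod.fst (↑(A ∪ B) : Set Pt))
    (hhole : ¬ ∃ H, DividedFiveHole A B H) : Config 1 x₀ A B := by
  have hccw : ∀ p ∈ A ∪ B, ∀ q ∈ A ∪ B, ∀ r ∈ A ∪ B, p ≠ q → p ≠ r → q ≠ r →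
      Ccw 1 p q r ∨ Ccw 1 p r q := fun p hp q hq r hr hpq hpr hqr =>
    ccw_or_ccw_of_not_collinear (hgen p hp q hq r hr hpq hpr hqr) (hx.ne hp hq hpq)
  refine ⟨hA, hB, hccw, hx, fun v₁ v₂ v₃ v₄ v₅ hdiv hquad hsector => ?_⟩
  have himage : Finset.univ.image ![v₁, v₂, v₃, v₄, v₅] = {v₁, v₂, v₃, v₄, v₅} := by
    ext z; simp [Fin.exists_fin_succ, eq_comm]
  obtain ⟨z, hz, hin⟩ := exists_inside_of_not_dividedFiveHole hccw hhole
    (hsector.convexPentagon hquad) (himage ▸ hdiv)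
  exact ⟨z, hz, hin 0, hin 1, hin 2, hin 3, hin 4⟩

end NotDividedFiveHole

section Ray

variable {s x₀ : ℝ} {c p q v z : Pt}

theorem Ccw.raise_source (hp : p.1 < c.1) (hv : c.1 < v.1) (hz : c.1 < z.1)
    (cvp : Ccw s c v p) (cvz : Ccw s c v z) : Ccw s c z p :=
  pos_of_mul_eq_add_mul (by simp only [orient_eq]; ring) (sub_pos.2 hv) (sub_pos.2 hz) cvp
    (sub_pos.2 hp) cvz

theorem Ccw.lower_target (hp : p.1 < c.1) (hv : c.1 < v.1) (hz : c.1 < z.1)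
    (cpv : Ccw s c p v) (czv : Ccw s c z v) : Ccw s c p z :=
  pos_of_mul_eq_add_mul (by simp only [orient_eq]; ring) (sub_pos.2 hv) (sub_pos.2 hz) cpv
    (sub_pos.2 hp) czv

theorem ccw_or_ccw_of_fst_lt (hp : p.1 < c.1) (hq : q.1 < c.1) (hz : c.1 < z.1)
    (cqp : Ccw s c q p) : Ccw s c p z ∨ Ccw s c z q := by
  by_contra! h
  simp only [Ccw, not_lt] at cqp h
  have hpq : orient s c q p * (z.1 - c.1) =
      orient s c p z * (c.1 - q.1) + orient s c z q * (c.1 - p.1) := by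
    simp only [orient_eq]; ring
  nlinarith [mul_pos cqp (sub_pos.2 hz), mul_nonneg (neg_nonneg.2 h.1) (sub_pos.2 hq).le,
    mul_nonneg (neg_nonneg.2 h.2) (sub_pos.2 hp).le]

/-- The point of the vertical line at `x₀` on the ray from `c` through `p`, for `p` to the right of
`c`. -/
def rayPoint (x₀ : ℝ) (c p : Pt) : Pt := (x₀, c.2 + (x₀ - c.1) / (p.1 - c.1) * (p.2 - c.2))

theorem orient_rayPoint (hp : c.1 < p.1) (q : Pt) :
    orient s c q (rayPoint x₀ c p) = (x₀ - c.1) / (p.1 - c.1) * orient s c q p := by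
  have : p.1 - c.1 ≠ 0 := (sub_pos.2 hp).ne'
  simp only [orient_eq, rayPoint]
  field_simp
  ring

theorem ccw_rayPoint_iff (hp : c.1 < p.1) (hx₀ : c.1 < x₀) :
    Ccw s c q (rayPoint x₀ c p) ↔ Ccw s c q p := by
  rw [Ccw, orient_rayPoint hp, Ccw,
    mul_pos_iff_of_pos_left (div_pos (sub_pos.2 hx₀) (sub_pos.2 hp))]

theorem rayPoint_ccw_iff (hp : c.1 < p.1) (hx₀ : c.1 < x₀) :
    Ccw s c (rayPoint x₀ c p) q ↔ Ccw s c p q := by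
  rw [← ccw_neg, ccw_rayPoint_iff hp hx₀, ccw_neg]

theorem eventually_ccw_of_lt_fst (hp : c.1 < p.1) (x : ℝ) :
    ∀ᶠ y in Filter.atTop, Ccw 1 c p (x, y) := by
  filter_upwards [Filter.eventually_gt_atTop (c.2 + (p.2 - c.2) * (x - c.1) / (p.1 - c.1))]
    with y hy
  rw [← lt_sub_iff_add_lt', div_lt_iff₀ (sub_pos.2 hp)] at hy
  rw [Ccw, orient_eq]
  linarith

theorem eventually_ccw_of_fst_lt (hp : p.1 < c.1) (x : ℝ) :
    ∀ᶠ y in Filter.atTop, Ccw 1 c (x, y) p := by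
  filter_upwards [Filter.eventually_gt_atTop (c.2 + (p.2 - c.2) * (x - c.1) / (p.1 - c.1))]
    with y hy
  rw [← lt_sub_iff_add_lt', div_lt_iff_of_neg (sub_neg.2 hp)] at hy
  rw [Ccw, orient_eq]
  linarith

theorem mem_wedge_iff_of_ccw (h : Ccw 1 c q p) :
    z ∈ Wedge c p q ↔ ¬ Ccw 1 c p z ∧ ¬ Ccw 1 c z q := by
  have hle : cross2 (p - c) (q - c) ≤ 0 := by
    rw [Ccw, orient_swap, orient, one_mul] at h; linarith
  rw [Wedge, if_pos hle, Ccw, Ccw, orient_swap 1 c q z]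
  simp [orient]

theorem mem_wedge_of_ccw (h : Ccw 1 c p q) (hz : ¬ Ccw 1 c p z) : z ∈ Wedge c p q := by
  have hlt : 0 < cross2 (p - c) (q - c) := by rwa [Ccw, orient, one_mul] at h
  rw [Wedge, if_neg hlt.not_ge]
  exact .inl (by simpa [Ccw, orient] using hz)

end Ray

namespace StarSetup

variable {x₀ y y' : ℝ} {A : Finset Pt} {q : Pt} {k l : ℕ} (S : StarSetup x₀ A)

theorem lbl_mem_left (k : ℕ) : S.lbl k ∈ A := Finset.mem_of_mem_erase (S.lbl_mem k)

theorem lbl_ne_aStar (k : ℕ) : S.lbl k ≠ S.aStar := Finset.ne_of_mem_erase (S.lbl_mem k)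

theorem lbl_card_sub_one : S.lbl (A.card - 1) = S.lbl 0 := by
  simpa only [zero_add] using S.lbl_periodic 0

theorem lbl_injOn : Set.InjOn S.lbl (Finset.Icc 1 (A.card - 1)) := fun k hk _ hl h =>
  (S.lbl_bij _ (S.lbl_mem k)).unique ⟨hk, rfl⟩ ⟨hl, h.symm⟩

theorem eq_of_mem_W_succ (hk : k < A.card - 1) (hq : q ∈ A) (hW : q ∈ S.W (k + 1)) :
    q = S.aStar ∨ q = S.lbl k ∨ q = S.lbl (k + 1) :=
  S.consec (k + 1) (Finset.mem_Icc.2 ⟨by lia, hk⟩) ⟨hq, hW⟩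

theorem exists_mem_W_succ_iff (hk : k < A.card - 1) :
    (∃ y, (x₀, y) ∈ S.W (k + 1)) ↔ k < S.t := by
  refine Iff.trans ⟨fun ⟨y, hy⟩ => ⟨_, hy, rfl⟩, ?_⟩
    (S.inter_iff (k + 1) (Finset.mem_Icc.2 ⟨by lia, hk⟩))
  rintro ⟨⟨_, y⟩, hy, rfl⟩
  exact ⟨y, hy⟩

theorem le_of_mem_W_succ (hkl : k < l) (hl : l < S.t) (hy : (x₀, y) ∈ S.W (k + 1))
    (hy' : (x₀, y') ∈ S.W (l + 1)) : y' ≤ y :=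
  S.ordered (k + 1) (Finset.mem_Icc.2 ⟨by lia, by lia⟩) (l + 1)
    (Finset.mem_Icc.2 ⟨by lia, hl⟩) (by lia) _ ⟨hy, rfl⟩ _ ⟨hy', rfl⟩

end StarSetup

/-- The situation of the theorem: the `a*`-wedges `S` of a divided set without divided `5`-hole,
the latter being given as a `Config`. -/
structure DividedStar {x₀ : ℝ} {A : Finset Pt} (S : StarSetup x₀ A) (B : Finset Pt) : Prop
    extends Config 1 x₀ A B where
  five_le_card : 5 ≤ A.card
  six_le_card : 6 ≤ B.card

namespace DividedStar

variable {x₀ : ℝ} {A B : Finset Pt} {S : StarSetup x₀ A} {q z : Pt} {k : ℕ}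
  (D : DividedStar S B)
include D

theorem aStar_lt : S.aStar.1 < x₀ := D.lt_of_mem_left _ S.aStar_mem

theorem lbl_fst_ne (k : ℕ) : (S.lbl k).1 ≠ S.aStar.1 :=
  D.injOn_fst.ne (Finset.mem_union_left _ (S.lbl_mem_left k))
    (Finset.mem_union_left _ S.aStar_mem) (S.lbl_ne_aStar k)

theorem lbl_ne_lbl_succ (hk : k < A.card - 1) : S.lbl k ≠ S.lbl (k + 1) := by
  have := D.five_le_card
  intro h
  obtain rfl | hk₀ := Nat.eq_zero_or_pos k
  · rw [← S.lbl_card_sub_one] at h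
    have := S.lbl_injOn (by simp; lia) (by simp; lia) h
    lia
  · have := S.lbl_injOn (by simp; lia) (by simp; lia) h
    lia

theorem ccw_or_ccw_lbl (k : ℕ) (hq : q ∈ A ∪ B) (hqc : q ≠ S.aStar) (hqk : S.lbl k ≠ q) :
    Ccw 1 S.aStar (S.lbl k) q ∨ Ccw 1 S.aStar q (S.lbl k) :=
  D.ccw_or_ccw _ (Finset.mem_union_left _ S.aStar_mem) _
    (Finset.mem_union_left _ (S.lbl_mem_left k)) q hq (S.lbl_ne_aStar k).symm hqc.symm hqk

theorem ccw_or_ccw_of_mem_right (k : ℕ) (hq : q ∈ B) :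
    Ccw 1 S.aStar (S.lbl k) q ∨ Ccw 1 S.aStar q (S.lbl k) :=
  D.ccw_or_ccw_lbl k (Finset.mem_union_right _ hq)
    (fun h => (D.lt_fst S.aStar_mem hq).ne' (congrArg Prod.fst h))
    (fun h => (D.lt_fst (S.lbl_mem_left k) hq).ne (congrArg Prod.fst h))

theorem ccw_lbl_succ (hk : k < A.card - 1) : Ccw 1 S.aStar (S.lbl (k + 1)) (S.lbl k) := by
  refine (D.ccw_or_ccw_lbl k (Finset.mem_union_left _ (S.lbl_mem_left (k + 1)))
    (S.lbl_ne_aStar (k + 1)) (D.lbl_ne_lbl_succ hk)).resolve_left fun hccw => ?_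
  obtain ⟨q, hq, hqk⟩ := exists_ccw_of_mem_interior_convexHull S.aStar_interior (D.lbl_fst_ne k)
  obtain rfl | rfl | rfl := S.eq_of_mem_W_succ hk hq (mem_wedge_of_ccw hccw hqk.asymm)
  · exact hqk.ne_left rfl
  · exact hqk.ne_right rfl
  · exact hqk.asymm hccw

theorem mem_W_succ_iff (hk : k < A.card - 1) :
    z ∈ S.W (k + 1) ↔ ¬ Ccw 1 S.aStar (S.lbl k) z ∧ ¬ Ccw 1 S.aStar z (S.lbl (k + 1)) :=
  mem_wedge_iff_of_ccw (D.ccw_lbl_succ hk)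

theorem lt_t_of_lt_lbl (hk : k < A.card - 1) (hlt : S.aStar.1 < (S.lbl k).1) : k < S.t := by
  have hW : rayPoint x₀ S.aStar (S.lbl k) ∈ S.W (k + 1) := by
    rw [D.mem_W_succ_iff hk, ccw_rayPoint_iff hlt D.aStar_lt, rayPoint_ccw_iff hlt D.aStar_lt]
    exact ⟨fun h => h.ne_right rfl, (D.ccw_lbl_succ hk).asymm⟩
  exact (S.exists_mem_W_succ_iff hk).1 ⟨_, hW⟩

theorem lt_t_of_lt_lbl_succ (hk : k < A.card - 1) (hlt : S.aStar.1 < (S.lbl (k + 1)).1) :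
    k < S.t := by
  have hW : rayPoint x₀ S.aStar (S.lbl (k + 1)) ∈ S.W (k + 1) := by
    rw [D.mem_W_succ_iff hk, ccw_rayPoint_iff hlt D.aStar_lt, rayPoint_ccw_iff hlt D.aStar_lt]
    exact ⟨(D.ccw_lbl_succ hk).asymm, fun h => h.ne_right rfl⟩
  exact (S.exists_mem_W_succ_iff hk).1 ⟨_, hW⟩

theorem lt_lbl_or_lt_lbl_succ (hk : k < S.t) :
    S.aStar.1 < (S.lbl k).1 ∨ S.aStar.1 < (S.lbl (k + 1)).1 := by
  have hk' : k < A.card - 1 := hk.trans_le S.t_le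
  by_contra! h
  obtain ⟨y, hy⟩ := (S.exists_mem_W_succ_iff hk').2 hk
  obtain ⟨hu, hl⟩ := (D.mem_W_succ_iff hk').1 hy
  exact (ccw_or_ccw_of_fst_lt (h.1.lt_of_ne (D.lbl_fst_ne k)) (h.2.lt_of_ne (D.lbl_fst_ne (k + 1)))
    D.aStar_lt (D.ccw_lbl_succ hk')).elim hu hl

theorem lt_lbl (h₁ : 1 ≤ k) (hk : k < S.t) : S.aStar.1 < (S.lbl k).1 := by
  obtain ⟨k, rfl⟩ := Nat.exists_eq_add_of_le' h₁
  by_contra! hleft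
  have hk' : k + 1 < A.card - 1 := hk.trans_le S.t_le
  have hright := (D.lt_lbl_or_lt_lbl_succ hk).resolve_left hleft.not_gt
  obtain ⟨y, hy⟩ := (S.exists_mem_W_succ_iff (k := k) (by lia)).2 (by lia)
  -- The next wedge contains all sufficiently high points of the dividing line.
  obtain ⟨y', hy', hu, hl⟩ := ((Filter.eventually_gt_atTop y).and
    ((eventually_ccw_of_fst_lt (hleft.lt_of_ne (D.lbl_fst_ne _)) x₀).and
      (eventually_ccw_of_lt_fst hright x₀))).exists
  have hW : (x₀, y') ∈ S.W (k + 1 + 1) := (D.mem_W_succ_iff hk').2 ⟨hu.asymm, hl.asymm⟩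
  exact (S.le_of_mem_W_succ k.lt_succ_self hk hy hW).not_gt hy'

theorem lbl_zero_lt : (S.lbl 0).1 < S.aStar.1 := by
  have hcard := D.five_le_card
  by_contra! hle
  have hlt := hle.lt_of_ne' (D.lbl_fst_ne 0)
  obtain ⟨q, hq, hqc⟩ := exists_fst_lt_of_mem_interior_convexHull S.aStar_interior
  obtain ⟨k, ⟨hk, rfl⟩, -⟩ := S.lbl_bij q (Finset.mem_erase.2 ⟨by rintro rfl; simp at hqc, hq⟩)
  rw [Finset.mem_Icc] at hk
  obtain rfl | hk' := hk.2.eq_or_lt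
  · exact hlt.asymm (by rwa [← S.lbl_card_sub_one])
  · have hlast : A.card - 2 < S.t := D.lt_t_of_lt_lbl_succ (by lia) <| by
      rwa [show A.card - 2 + 1 = A.card - 1 by lia, S.lbl_card_sub_one]
    exact hqc.asymm (D.lt_lbl hk.1 (by lia))

theorem lbl_lt (hk : S.t ≤ k) (hk' : k ≤ A.card - 1) : (S.lbl k).1 < S.aStar.1 := by
  obtain rfl | hlt := hk'.eq_or_lt
  · exact S.lbl_card_sub_one ▸ D.lbl_zero_lt
  · exact (D.lbl_fst_ne k).lt_or_gt.resolve_right fun h => (D.lt_t_of_lt_lbl hlt h).not_ge hk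

theorem exists_eq_lbl (hq : q ∈ A) (hqc : S.aStar.1 < q.1) :
    ∃ k, 1 ≤ k ∧ k < S.t ∧ q = S.lbl k := by
  obtain ⟨k, ⟨hk, rfl⟩, -⟩ := S.lbl_bij q (Finset.mem_erase.2 ⟨by rintro rfl; simp at hqc, hq⟩)
  rw [Finset.mem_Icc] at hk
  exact ⟨k, hk.1, not_le.1 fun h => (D.lbl_lt h hk.2).asymm hqc, rfl⟩

theorem two_le_t : 2 ≤ S.t := by
  obtain ⟨q, hq, hqc⟩ := exists_lt_fst_of_mem_interior_convexHull S.aStar_interior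
  obtain ⟨k, h₁, hk, -⟩ := D.exists_eq_lbl hq hqc
  lia

theorem exists_inWedge (hq : q ∈ B) : ∃ k < S.t, InWedge 1 S.aStar S.lbl k q := by
  have ht := D.two_le_t
  have hqc : S.aStar.1 < q.1 := D.lt_fst S.aStar_mem hq
  have hex : ∃ k, k + 1 = S.t ∨ Ccw 1 S.aStar (S.lbl (k + 1)) q := ⟨S.t - 1, .inl (by lia)⟩
  classical
  obtain ⟨k, hk, hmin⟩ : ∃ k, (k + 1 = S.t ∨ Ccw 1 S.aStar (S.lbl (k + 1)) q) ∧
      ∀ l < k, ¬ (l + 1 = S.t ∨ Ccw 1 S.aStar (S.lbl (l + 1)) q) :=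
    ⟨Nat.find hex, Nat.find_spec hex, fun l => Nat.find_min hex⟩
  have hkt : k < S.t := by
    by_contra! h
    exact hmin (S.t - 1) (by lia) (.inl (by lia))
  have hsucc := D.ccw_lbl_succ (hkt.trans_le S.t_le)
  refine ⟨k, hkt, ?_, ?_⟩
  · obtain rfl | hk₀ := Nat.eq_zero_or_pos k
    · exact Ccw.raise_source D.lbl_zero_lt (D.lt_lbl le_rfl ht) hqc hsucc
        (hk.resolve_left (by lia))
    · refine (D.ccw_or_ccw_of_mem_right k hq).resolve_left fun h => ?_
      exact hmin (k - 1) (by lia) (.inr (by rwa [Nat.sub_add_cancel hk₀]))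
  · obtain heq | h := hk
    · have hlast : (S.lbl (k + 1)).1 < S.aStar.1 := D.lbl_lt heq.ge (heq.trans_le S.t_le)
      refine Ccw.lower_target hlast (D.lt_lbl (by lia) hkt) hqc hsucc ?_
      refine (D.ccw_or_ccw_of_mem_right k hq).resolve_left fun h => ?_
      exact hmin (k - 1) (by lia) (.inr (by rwa [Nat.sub_add_cancel (by lia)]))
    · exact h

theorem not_inWedge (hk : k < S.t) (hq : q ∈ A) : ¬ InWedge 1 S.aStar S.lbl k q := by
  rintro ⟨hu, hl⟩
  have hk' : k < A.card - 1 := hk.trans_le S.t_le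
  obtain rfl | rfl | rfl := S.eq_of_mem_W_succ hk' hq
    ((D.mem_W_succ_iff hk').2 ⟨hu.asymm, hl.asymm⟩)
  · exact hu.ne_left rfl
  · exact hu.ne_right rfl
  · exact hl.ne_right rfl

theorem ccw_of_t_eq_three (ht : S.t = 3) : Ccw 1 S.aStar (S.lbl 0) (S.lbl 3) := by
  have hcard := D.five_le_card
  suffices ∀ k, 4 ≤ k → k ≤ A.card - 1 → Ccw 1 S.aStar (S.lbl k) (S.lbl 3) from
    S.lbl_card_sub_one ▸ this (A.card - 1) (by lia) le_rfl
  intro k h₄ hk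
  induction k, h₄ using Nat.le_induction with
  | base => exact D.ccw_lbl_succ hk
  | succ k h₄ ih =>
    exact .trans_of_fst_lt (D.lbl_lt (by lia) hk) (D.lbl_lt (by lia) (by lia))
      (D.lbl_lt ht.le (by lia)) (D.ccw_lbl_succ hk) (ih (by lia))

theorem starConfig : StarConfig 1 x₀ A B S.aStar S.lbl S.t where
  toConfig := D.toConfig
  center_mem := S.aStar_mem
  label_mem k _ := S.lbl_mem_left k
  first_lt := D.lbl_zero_lt
  last_lt := D.lbl_lt le_rfl S.t_le
  lt_label _ := D.lt_lbl
  ccw_succ _ hk := D.ccw_lbl_succ (hk.trans_le S.t_le)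
  exists_inWedge _ := D.exists_inWedge
  exists_eq_label _ := D.exists_eq_lbl
  not_inWedge _ hk _ := D.not_inWedge hk
  not_inTriangle k h₁ hk _ hp _ hq _ hr h :=
    (S.aStar_rightmost _ (S.lbl_mem_left k) (h.mem_interior_convexHull hp hq hr)).not_gt
      (D.lt_lbl h₁ hk)
  two_le := D.two_le_t
  ccw_of_eq_three := D.ccw_of_t_eq_three
  six_le_card := D.six_le_card

theorem w_succ (hk : k < S.t) : S.w B (k + 1) = (wedgePoints 1 B S.aStar S.lbl k).ncard := by
  refine congrArg Set.ncard (Set.ext fun z => ?_)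
  refine and_congr_right fun hz => (D.mem_W_succ_iff (hk.trans_le S.t_le)).trans ⟨?_, ?_⟩
  · exact fun ⟨hu, hl⟩ => ⟨(D.ccw_or_ccw_of_mem_right k hz).resolve_left hu,
      (D.ccw_or_ccw_of_mem_right (k + 1) hz).resolve_right hl⟩
  · exact fun ⟨hu, hl⟩ => ⟨hu.asymm, hl.asymm⟩

theorem exists_w_ne_one {i j : ℕ} (hi : 1 ≤ i) (hij : i < j) (hj : j ≤ S.t) (h₀ : S.w B i = 2)
    (h₁ : S.w B j = 2) : ∃ k, i < k ∧ k < j ∧ S.w B k ≠ 1 := by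
  obtain ⟨i, rfl⟩ := Nat.exists_eq_add_of_le' hi
  obtain ⟨j, rfl⟩ := Nat.exists_eq_add_of_le' (hi.trans hij.le)
  rw [D.w_succ (by lia)] at h₀ h₁
  obtain ⟨k, hik, hkj, hk⟩ := D.starConfig.exists_ncard_ne_one (by lia) hj h₀ h₁
  exact ⟨k + 1, by lia, by lia, by rwa [D.w_succ (by lia)]⟩

end DividedStar

/-- **Corollary 8.** Let `P = A ∪ B` be an `ℓ`-divided set with no `ℓ`-divided 5-hole,
`A` not in convex position, `|A| ≥ 5` and `|B| ≥ 6`. For `1 ≤ i ≤ j ≤ t`, if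
`w_k ≤ 2` for every `i ≤ k ≤ j`, then `w_i + w_{i+1} + ⋯ + w_j ≤ j - i + 2`. -/
theorem sum_wedges_bound
    (x0 : ℝ) (A B : Finset Pt)
    (hA : ∀ p ∈ A, p.1 < x0) (hB : ∀ p ∈ B, x0 < p.1)
    (hBne : B.Nonempty)
    (hgen : GenPos (↑(A ∪ B) : Set Pt))
    (hx : Set.InjOn Prod.fst (↑(A ∪ B) : Set Pt))
    (hAnc : ¬ ConvexPos (↑A : Set Pt))
    (S : StarSetup x0 A)
    (hnh : ¬ ∃ H : Finset Pt, DividedFiveHole A B H)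
    (hAcard : 5 ≤ A.card) (hBcard : 6 ≤ B.card)
    (i j : ℕ) (hi : 1 ≤ i) (hij : i ≤ j) (hjt : j ≤ S.t)
    (hw : ∀ k ∈ Finset.Icc i j, S.w B k ≤ 2) :
    ∑ k ∈ Finset.Icc i j, S.w B k ≤ j - i + 2 := by
  have D : DividedStar S B :=
    ⟨.of_not_dividedFiveHole hA hB hgen hx hnh, hAcard, hBcard⟩
  exact (sum_Icc_le_and_exists_two_of_eq hij hw fun l m hil hlm hmj =>
    D.exists_w_ne_one (hi.trans hil) hlm (hmj.trans hjt)).1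

end
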